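/- The poset Ramsey number R(𝒫(3), 𝒫(3)) equals 7. That is: (a) for every function c : 𝒫(7) → {1,2} there exists an injective map φ : 𝒫(3) → 𝒫(7) with φ(x) ⊆ φ(y) if and only if x ⊆ y, whose image is monochromatic under c; and (b) there exists a function c : 𝒫(6) → {1,2} such that no injective map φ : 𝒫(3) → 𝒫(6) with φ(x) ⊆ φ(y) if and only if x ⊆ y has a monochromatic image under c. -/

import Mathlib

namespace PosetRamsey

/-! ## Abstract configurations -/

/-- `c` has no monochromatic induced copy of `𝒫(3)`, stated through the eight images. -/
def NoCopy (c : Finset (Fin 7) → Bool) : Prop :=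
  ∀ (k : Bool) (o a1 a2 a3 b12 b13 b23 t : Finset (Fin 7)),
    o ⊆ a1 → o ⊆ a2 → o ⊆ a3 →
    a1 ⊆ b12 → a2 ⊆ b12 → a1 ⊆ b13 → a3 ⊆ b13 → a2 ⊆ b23 → a3 ⊆ b23 →
    ¬ a3 ⊆ b12 → ¬ a2 ⊆ b13 → ¬ a1 ⊆ b23 →
    b12 ⊆ t → b13 ⊆ t → b23 ⊆ t →
    c o = k → c a1 = k → c a2 = k → c a3 = k → c b12 = k → c b13 = k → c b23 = k → c t = k →
    False

theorem NoCopy.perm {c : Finset (Fin 7) → Bool} (h : NoCopy c) (σ : Equiv.Perm (Fin 7)) :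
    NoCopy (fun x => c (x.map σ.toEmbedding)) := by
  intro k o a1 a2 a3 b12 b13 b23 t
  have := h k (o.map σ.toEmbedding) (a1.map σ.toEmbedding) (a2.map σ.toEmbedding)
    (a3.map σ.toEmbedding) (b12.map σ.toEmbedding) (b13.map σ.toEmbedding)
    (b23.map σ.toEmbedding) (t.map σ.toEmbedding)
  simpa only [Finset.map_subset_map] using this

theorem NoCopy.swap {c : Finset (Fin 7) → Bool} (h : NoCopy c) : NoCopy (fun x => !c x) := by
  intro k o a1 a2 a3 b12 b13 b23 t
  have := h (!k) o a1 a2 a3 b12 b13 b23 t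
  simpa only [Bool.not_eq_eq_eq_not] using this

theorem NoCopy.compl {c : Finset (Fin 7) → Bool} (h : NoCopy c) : NoCopy (fun x => c xᶜ) := by
  intro k o a1 a2 a3 b12 b13 b23 t h1 h2 h3 h4 h5 h6 h7 h8 h9 n1 n2 n3 t1 t2 t3
    c1 c2 c3 c4 c5 c6 c7 c8
  have e : ∀ {x y : Finset (Fin 7)}, x ⊆ y → yᶜ ⊆ xᶜ := fun h => Finset.compl_subset_compl.2 h
  have e' : ∀ {x y : Finset (Fin 7)}, ¬ x ⊆ y → ¬ yᶜ ⊆ xᶜ :=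
    fun h h' => h (Finset.compl_subset_compl.1 h')
  exact h k tᶜ b23ᶜ b13ᶜ b12ᶜ a3ᶜ a2ᶜ a1ᶜ oᶜ (e t3) (e t2) (e t1) (e h9) (e h7) (e h8) (e h5)
    (e h6) (e h4) (e' n1) (e' n2) (e' n3) (e h3) (e h2) (e h1) c8 c7 c6 c5 c4 c3 c2 c1

/-! ## Bit masks -/

/-- The subset of `Fin 7` coded by a natural number. -/
def dec (n : ℕ) : Finset (Fin 7) := Finset.univ.filter fun i => n.testBit i

theorem dec_subset {x y : ℕ} (h : Nat.land x y = x) : dec x ⊆ dec y := by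
  intro i hi
  simp only [dec, Finset.mem_filter, Finset.mem_univ, true_and] at hi ⊢
  have h' : (x &&& y).testBit i = true := by rw [← hi]; exact congrArg (fun z => z.testBit i) h
  rw [Nat.testBit_and] at h'
  simp_all

theorem not_dec_subset {x y : ℕ} (hx : x < 128) (h : Nat.land x y ≠ x) : ¬ dec x ⊆ dec y := by
  intro hs
  apply h
  show x &&& y = x
  apply Nat.eq_of_testBit_eq
  intro j
  rw [Nat.testBit_and]
  by_cases hj : j < 7
  · have := @hs ⟨j, hj⟩
    simp only [dec, Finset.mem_filter, Finset.mem_univ, true_and] at this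
    cases hxj : x.testBit j
    · rfl
    · simp [this hxj]
  · have : x.testBit j = false := Nat.testBit_lt_two_pow
      (lt_of_lt_of_le hx (Nat.pow_le_pow_right (n := 2) (i := 7) (by norm_num) (by omega)))
    simp [this]

/-! ## The certificate checker -/

/-- Bitwise inclusion of codes. -/
def sub (x y : ℕ) : Bool := Nat.beq (Nat.land x y) x

/-- Membership of a code in a family of codes. -/
def mem (x S : ℕ) : Bool := Nat.beq (Nat.land (Nat.shiftRight S x) 1) 1

/-- The `i`-th block of seven bits. -/
def fld (n i : ℕ) : ℕ := Nat.land (Nat.shiftRight n i) 127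

/-- Checks that the eight codes are a copy of `𝒫(3)` inside the family `S`. -/
def isCopy (S o a1 a2 a3 b12 b13 b23 t : ℕ) : Bool :=
  mem o S && (mem a1 S && (mem a2 S && (mem a3 S && (mem b12 S && (mem b13 S && (mem b23 S &&
  (mem t S &&
  (sub o a1 && (sub o a2 && (sub o a3 && (sub a1 b12 && (sub a2 b12 && (sub a1 b13 &&
  (sub a3 b13 && (sub a2 b23 && (sub a3 b23 && (!sub a3 b12 && (!sub a2 b13 && (!sub a1 b23 &&
  (sub b12 t && (sub b13 t && sub b23 t)))))))))))))))))))))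

/-- Checks the copy packed into `n` against the family `S`. -/
def leaf (S n : ℕ) : Bool :=
  isCopy S (fld n 0) (fld n 7) (fld n 14) (fld n 21) (fld n 28) (fld n 35) (fld n 42) (fld n 49)

/-- Runs a refutation in prefix order: a token below `128` branches on the colour of that code,
any other token is a packed monochromatic copy (bit `56` holds its colour). The stack holds the
open partial colourings. -/
def run : List ℕ → List (ℕ × ℕ) → Bool
  | [], [] => true
  | [], _ :: _ => false
  | _ :: _, [] => false
  | n :: ts, (p, q) :: st =>
    bif Nat.blt n 128 then
      run ts ((Nat.lor p (Nat.shiftLeft 1 n), q) :: (p, Nat.lor q (Nat.shiftLeft 1 n)) :: st)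
    else bif leaf (bif Nat.beq (Nat.shiftRight n 56) 0 then p else q) n then run ts st
    else false

theorem mem_iff {x S : ℕ} : mem x S = true ↔ S.testBit x = true := by
  unfold mem
  rw [Nat.beq_eq]
  show (S >>> x) &&& 1 = 1 ↔ _
  rw [Nat.and_one_is_mod, Nat.testBit_eq_decide_div_mod_eq, Nat.shiftRight_eq_div_pow]
  simp

theorem fld_lt (n i : ℕ) : fld n i < 128 :=
  lt_of_le_of_lt (Nat.and_le_right (n := n >>> i) (m := 127)) (by norm_num)

/-- `f` extends the partial colouring. -/
def Extd (f : ℕ → Bool) (pq : ℕ × ℕ) : Prop :=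
  (∀ x, pq.1.testBit x = true → f x = false) ∧ (∀ x, pq.2.testBit x = true → f x = true)

theorem isCopy_absurd {c : Finset (Fin 7) → Bool} (h : NoCopy c) {k : Bool}
    {S o a1 a2 a3 b12 b13 b23 t : ℕ}
    (hS : ∀ x, S.testBit x = true → c (dec x) = k)
    (h1 : a1 < 128) (h2 : a2 < 128) (h3 : a3 < 128)
    (hc : isCopy S o a1 a2 a3 b12 b13 b23 t = true) : False := by
  simp only [isCopy, Bool.and_eq_true, mem_iff, sub, Nat.beq_eq, Bool.not_eq_true'] at hc
  obtain ⟨c1, c2, c3, c4, c5, c6, c7, c8, s1, s2, s3, s4, s5, s6, s7, s8, s9, n1, n2, n3,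
    t1, t2, t3⟩ := hc
  exact h k (dec o) (dec a1) (dec a2) (dec a3) (dec b12) (dec b13) (dec b23) (dec t)
    (dec_subset s1) (dec_subset s2) (dec_subset s3) (dec_subset s4) (dec_subset s5)
    (dec_subset s6) (dec_subset s7) (dec_subset s8) (dec_subset s9)
    (not_dec_subset h3 (Nat.ne_of_beq_eq_false n1)) (not_dec_subset h2 (Nat.ne_of_beq_eq_false n2))
    (not_dec_subset h1 (Nat.ne_of_beq_eq_false n3))
    (dec_subset t1) (dec_subset t2) (dec_subset t3)
    (hS _ c1) (hS _ c2) (hS _ c3) (hS _ c4) (hS _ c5) (hS _ c6) (hS _ c7) (hS _ c8)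

theorem testBit_lor_shift {p n x : ℕ} (h : (Nat.lor p (Nat.shiftLeft 1 n)).testBit x = true) :
    p.testBit x = true ∨ x = n := by
  have h' : (p ||| (1 <<< n)).testBit x = true := h
  rw [Nat.testBit_or, Nat.one_shiftLeft, Nat.testBit_two_pow] at h'
  simp only [Bool.or_eq_true, decide_eq_true_eq] at h'
  tauto

theorem run_sound {c : Finset (Fin 7) → Bool} (h : NoCopy c) :
    ∀ (ts : List ℕ) (st : List (ℕ × ℕ)), run ts st = true →
      ∀ pq ∈ st, ¬ Extd (fun x => c (dec x)) pq
  | [], [], _ => by simp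
  | [], _ :: _, hr => by simp [run] at hr
  | _ :: _, [], _ => by simp
  | n :: ts, (p, q) :: st, hr => by
    rw [run] at hr
    cases hb : Nat.blt n 128 with
    | true =>
      rw [hb, cond_true] at hr
      have ih := run_sound h ts _ hr
      intro pq hpq
      rcases List.mem_cons.1 hpq with rfl | hpq
      · rintro ⟨e0, e1⟩
        cases hf : c (dec n) with
        | false =>
          refine ih _ (List.mem_cons_self) ⟨fun x hx => ?_, e1⟩
          rcases testBit_lor_shift hx with hx | rfl
          · exact e0 x hx
          · exact hf
        | true =>
          refine ih _ (List.mem_cons_of_mem _ List.mem_cons_self) ⟨e0, fun x hx => ?_⟩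
          rcases testBit_lor_shift hx with hx | rfl
          · exact e1 x hx
          · exact hf
      · exact ih _ (List.mem_cons_of_mem _ (List.mem_cons_of_mem _ hpq))
    | false =>
      rw [hb, cond_false] at hr
      cases hl : leaf (bif Nat.beq (Nat.shiftRight n 56) 0 then p else q) n with
      | false => rw [hl] at hr; simp at hr
      | true =>
        rw [hl, cond_true] at hr
        intro pq hpq
        rcases List.mem_cons.1 hpq with rfl | hpq
        · rintro ⟨e0, e1⟩
          cases hk : Nat.beq (Nat.shiftRight n 56) 0 with
          | true =>
            rw [hk, cond_true] at hl
            exact isCopy_absurd h e0 (fld_lt _ _) (fld_lt _ _) (fld_lt _ _) hl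
          | false =>
            rw [hk, cond_false] at hl
            exact isCopy_absurd h e1 (fld_lt _ _) (fld_lt _ _) (fld_lt _ _) hl
        · exact run_sound h ts _ hr _ hpq

/-- The mask of a list of codes. -/
def mask : List ℕ → ℕ
  | [] => 0
  | x :: l => Nat.lor (mask l) (Nat.shiftLeft 1 x)

theorem mask_testBit {l : List ℕ} {x : ℕ} (h : (mask l).testBit x = true) : x ∈ l := by
  induction l with
  | nil => simp [mask] at h
  | cons y l ih =>
    rcases testBit_lor_shift h with h | rfl
    · exact List.mem_cons_of_mem _ (ih h)
    · exact List.mem_cons_self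

theorem run_refutes {c : Finset (Fin 7) → Bool} (h : NoCopy c) (ts l0 l1 : List ℕ)
    (hr : run ts [(mask l0, mask l1)] = true)
    (h0 : ∀ x ∈ l0, c (dec x) = false) (h1 : ∀ x ∈ l1, c (dec x) = true) : False :=
  run_sound h ts _ hr _ List.mem_cons_self
    ⟨fun x hx => h0 x (mask_testBit hx), fun x hx => h1 x (mask_testBit hx)⟩


/-! ## Certificates -/

def certA1_0 : List ℕ := [
  7, 59, 13, 71553847811719552, 21, 71589032200585600, 29, 71624216555897216, 37,
  71659400978317696, 45, 71694585300074880, 53, 71729769688940928, 107758091619354241, 61, 11,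
  71763304776810880, 19, 71763579671495040, 27, 71763854532624768, 35, 71764129460863360, 43,
  71764404288438656, 51, 71764679183122816, 107749226265757057, 27, 13, 71552748300091776, 53,
  71728670177313152, 85, 71869407665668480, 93, 71904592020980096, 117, 72010145154023808, 125,
  72045329509335424, 142944121666750081, 43, 13, 71553298055905664, 53, 71729219966681472, 101,
  71940326199214464, 109, 71975510520971648, 117, 72010694943392128, 125, 72045879265149312,
  142944671456118401, 51, 21, 71588757322678656, 45, 71694310472499584, 101, 71940601077121408,
  109, 71975785449210240, 117, 72010969787744640, 125, 72046154159833472, 142909761961806465,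
  29, 11, 71622567288455552, 83, 71625041206395264, 91, 71625316067524992, 115,
  71626140718023040, 123, 71626415579152768, 141809356406310273, 45, 11, 71692936032633216, 99,
  71695959739941248, 107, 71696234567516544, 115, 71696509495755136, 123, 71696784323330432,
  141809906195678593, 53, 19, 71728395299406208, 99, 71731144112030080, 107, 71731418989937024,
  115, 71731693834289536, 123, 71731968712196480, 141774996701366657, 11, 77, 71833673520988544,
  93, 71904042265166208, 109, 71974411009343872, 125, 72044779753521536, 142908937277755009, 19,
  85, 71869132787761536, 93, 71904317159850368, 117, 72009870276116864, 125, 72045054648205696,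
  142944121666752129, 35, 101, 71940051321307520, 109, 71975235693396352, 117,
  72010420065485184, 125, 72045604437574016, 142944671456122497, 107749226265757057, 11, 23, 13,
  71552202839245184, 57, 71746125998211456, 61, 71763309071778176, 89, 71886863486566784, 93,
  71904046560133504, 121, 72027600974922112, 125, 72044784048488832, 142961713861248641, 39, 13,
  71552207134212480, 57, 71746675787579776, 61, 71763313366745472, 105, 71957782020112768, 109,
  71974419599278464, 121, 72028150764290432, 125, 72044788343456128, 142962263650616961, 51, 25,
  71606350582530432, 45, 71694311546306944, 61, 71764680256930176, 105, 71958194336973184, 109,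
  71975786523017600, 121, 72028563047596416, 125, 72046155233640832, 142909899409149057, 19, 29,
  71622843256947072, 57, 71745988559257984, 61, 71763580745302400, 89, 71886726047613312, 93,
  71904318233657728, 121, 72027463535968640, 125, 72045055722013056, 142961713861250689, 35, 45,
  71693761790493056, 57, 71746538348626304, 61, 71764130534670720, 105, 71957644581159296, 109,
  71975236767203712, 121, 72028013325336960, 125, 72045605511381376, 142962263650621057,
  107749087753061249, 13, 53, 25, 71606419838878336, 27, 71615215931900544, 41,
  71676788616610432, 43, 71685584709632640, 57, 71747157327233664, 107775614557504897, 23, 57,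
  71746126535082624, 59, 71553852106686848, 89, 71886864023437952, 91, 71554951618314624, 121,
  72027601511793280, 123, 71556051129942400, 141835744698058113, 39, 57, 71746676324450944, 59,
  71553856401654144, 105, 71957782556983936, 107, 71555505669095808, 121, 72028151301161600,
  123, 71556055424909696, 141836294487426433, 21, 57, 71746057815605888, 59, 71754853908628096,
  89, 71886795303961216, 91, 71895591396983424, 121, 72027532792316544, 123, 72036328885338752,
  141835744698058113, 37, 57, 71746607604974208, 59, 71755403697996416, 105, 71957713837507200,
  107, 71966509930529408, 121, 72028082581684864, 123, 72036878674707072, 141836294487426433,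
  107757883850310529, 15, 51, 21, 71588759470162304, 29, 71623943842251136, 37,
  71659128247894400, 45, 71694312619983232, 53, 71729496958517632, 107758091619354241, 55, 25,
  71606489095225728, 27, 71615285188248192, 41, 71676857872957824, 43, 71685653965980288, 57,
  71747226583581056, 107775614557504897, 59, 21, 71589034348069248, 23, 71754923164975744, 37,
  71659403125801344, 39, 71755472954344064, 53, 71729771836424576, 107757883850310529, 31, 47,
  53, 71729363848282496, 57, 71746956034326912, 61, 71764548220371328, 107793764049574273,
  107784828356838273, 107784824061870977, 19, 39, 49, 71711493563105664, 61, 71763588261429632,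
  85, 71869141377696128, 93, 71904325749784960, 117, 72009878866051456, 125, 72045063238140288,
  142944121666684545, 35, 53, 71728948310196608, 57, 71746540496241024, 61, 71764132682285440,
  113, 71992831100862848, 117, 72010423286907264, 121, 72028015472951680, 125,
  72045607658996096, 142962538545306241, 43, 49, 71711631002059136, 61, 71763589335236992, 89,
  71886734637547904, 93, 71904326823592320, 121, 72027472125903232, 125, 72045064311947648,
  142961713861117569, 107713901233357697, 23, 59, 37, 71659405273284992, 39, 71755475101958784,
  45, 71694589595042176, 107722697330606977, 55, 61, 35, 71764133755830656, 39,
  71764271194980736, 107784269977535361, 25, 41, 71737952172262528, 107793753277941121,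
  107793753244386689, 107784819699794817, 27, 59, 61, 35, 71764134829638016, 39,
  71763863122559360, 43, 71764409707676032, 107713901233357697, 21, 37, 71755405845611136, 39,
  71587941278892416, 107793066074784641, 107792516285416321, 107783720188167041,
  107642982699811713]

theorem okA1_0 : run certA1_0 [(mask [0, 127, 3, 5, 9, 17, 33], mask [1, 63])] = true := by
  decide +kernel

def certA1_1 : List ℕ := [
  7, 13, 21, 57, 71746057815605888, 59, 71754853908628096, 89, 71886795303961216, 91,
  71895591396983424, 121, 72027532792316544, 123, 72036328885338752, 141835744698057089, 23, 57,
  71746126535082624, 59, 71754922628104832, 89, 71886864023437952, 91, 71895660116460160, 121,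
  72027601511793280, 123, 72036397604815488, 141835744698057089, 25, 53, 71606419838878336, 55,
  71606488558355072, 85, 71607519350506112, 87, 71607588069982848, 117, 71608618862133888, 119,
  71608687581610624, 139566214177177985, 27, 53, 71615215931900544, 55, 71615284651377280, 85,
  71616315443528320, 87, 71616384163005056, 117, 71617414955156096, 119, 71617483674632832,
  139566214177177985, 37, 41, 71676238860796544, 43, 71685034953818752, 57, 71746607604974208,
  107775614557503873, 39, 41, 71676307580273280, 43, 71685103673295488, 57, 71746676324450944,
  107775614557503873, 53, 41, 71676788616610432, 43, 71685584709632640, 57, 71747157327233664,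
  107775614557503873, 107757883850310017, 15, 21, 57, 71746058352476800, 59, 71754854445499008,
  89, 71886795840832128, 91, 71895591933854336, 121, 72027533329187456, 123, 72036329422209664,
  141835744698057089, 23, 57, 71746127071953536, 59, 71754923164975744, 89, 71886864560308864,
  91, 71895660653331072, 121, 72027602048664192, 123, 72036398141686400, 141835744698057089, 61,
  39, 71764269047366528, 55, 71764818769625984, 87, 71765918281253760, 103, 71766468070622080,
  119, 71767017792881536, 65, 69, 73, 71818076464759424, 75, 71826872557781632, 81,
  71853273185010304, 83, 71862069278032512, 89, 71888445208937088, 123, 72037978790314624,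
  141694736610247041, 139504641492241025, 139504641483852417, 47, 25, 49, 71711770051626112, 51,
  71720566144648320, 107793480564425089, 59, 31, 71755752127349376, 37, 71755404234867328, 39,
  71755472954344064, 107793070369751425, 107793755392000385, 107792524875350401, 21, 25, 45,
  71605328917185152, 47, 71605329454056064, 77, 71605337507119744, 79, 71605338043990656, 109,
  71605346097054336, 111, 71605346633925248, 135027153135419777, 27, 45, 71614125010207360, 47,
  71614125547078272, 77, 71614133600141952, 79, 71614134137012864, 109, 71614142190076544, 111,
  71614142726947456, 135027153135419777, 29, 37, 41, 71676243155763840, 43, 71685039248786048,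
  57, 71746611899941504, 107775614557503873, 39, 41, 71676311875240576, 43, 71685107968262784,
  57, 71746680619418240, 107775614557503873, 45, 49, 71711700258407040, 51, 71720496351429248,
  57, 71746066405540480, 107775889452188033, 107722697330606465, 107651916244402561, 29, 55, 41,
  71676861631054464, 43, 71685657724076672, 45, 71738090684957824, 107722834777948545, 37, 41,
  71676243155763840, 43, 71685039248786048, 49, 71711427527983744, 57, 71746611899941504,
  107776031186370945, 45, 113, 71993177382601344, 115, 72001973475623552, 117,
  72010769568646272, 119, 72019565661668480, 139567176308048257, 107723247086420353, 23, 55, 25,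
  41, 71737952172262528, 43, 71738020891739264, 45, 71605397636661888, 107722834777948545, 27,
  59, 37, 71755406382482048, 39, 71755475101958784, 45, 71614193729684096, 107722697330606465,
  107653015756030337, 107651916244402561, 107652878308688257, 107651778797060481, 11, 13, 21,
  57, 71746057815605888, 59, 71754853908628096, 89, 71886795303961216, 91, 71895591396983424,
  121, 72027532792316544, 123, 72036328885338752, 141835744698057089, 23, 57, 71746126535082624,
  59, 71754922628104832, 89, 71886864023437952, 91, 71895660116460160, 121, 72027601511793280,
  123, 72036397604815488, 141835744698057089, 25, 53, 71606419838878336, 55, 71606488558355072,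
  85, 71607519350506112, 87, 71607588069982848, 117, 71608618862133888, 119, 71608687581610624,
  139566214177177985, 27, 53, 71615215931900544, 55, 71615284651377280, 85, 71616315443528320,
  87, 71616384163005056, 117, 71617414955156096, 119, 71617483674632832, 139566214177177985, 37,
  41, 71676238860796544, 43, 71685034953818752, 57, 71746607604974208, 107775614557503873, 39,
  41, 71676307580273280, 43, 71685103673295488, 57, 71746676324450944, 107775614557503873, 53,
  41, 71676788616610432, 43, 71685584709632640, 57, 71747157327233664, 107775614557503873,
  107757883850310017, 15, 21, 57, 71746058352476800, 59, 71754854445499008, 89,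
  71886795840832128, 91, 71895591933854336, 121, 72027533329187456, 123, 72036329422209664,
  141835744698057089, 23, 57, 71746127071953536, 59, 71754923164975744, 89, 71886864560308864,
  91, 71895660653331072, 121, 72027602048664192, 123, 72036398141686400, 141835744698057089, 61,
  27, 71615491346711168, 43, 71685860124443264, 59, 71756228835066496, 91, 71896966323421824,
  107, 71967335101153920, 123, 72037703811777152, 65, 73, 69, 71818076464759424, 71,
  71818145184236160, 85, 71818626220573312, 119, 71819794451677824, 139424918308995457,
  141774172013120897, 141774171996343681, 47, 25, 49, 71711770051626112, 51, 71720566144648320,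
  107793480564425089, 59, 31, 71755752127349376, 37, 71755404234867328, 39, 71755472954344064,
  107793070369751425, 107793755392000385, 107792524875350401, 25, 21, 45, 71605328917185152, 47,
  71605329454056064, 77, 71605337507119744, 79, 71605338043990656, 109, 71605346097054336, 111,
  71605346633925248, 135027153135419777, 23, 45, 71605397636661888, 47, 71605398173532800, 77,
  71605406226596480, 79, 71605406763467392, 109, 71605414816531072, 111, 71605415353401984,
  135027153135419777, 29, 37, 41, 71676243155763840, 43, 71685039248786048, 49,
  71711427527983744, 51, 71720223621005952, 57, 71746611899941504, 107775893747417473, 39, 41,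
  71676311875240576, 43, 71685107968262784, 49, 71711496247460480, 51, 71720292340482688, 57,
  71746680619418240, 107775893747417473, 45, 53, 71606428428812928, 107757883850310017,
  107722697330606465, 107651778797060481, 29, 59, 37, 71755407992963712, 39, 71755476712440448,
  45, 71755682871001728, 107722697330606465, 41, 37, 71676243155763840, 39, 71676311875240576,
  49, 71711564966937728, 53, 71676792911577728, 107758575365472641, 45, 113, 71993177382601344,
  115, 72001973475623552, 121, 72028361754690176, 123, 72037157847712384, 141836569381585281,
  107723384533762433, 27, 59, 21, 37, 71755405845611136, 39, 71755474565087872, 45,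
  71614125010207360, 107722697330606465, 23, 37, 71755406382482048, 39, 71755475101958784, 45,
  71614193729684096, 107722697330606465, 107651778797060481, 107653015756030337,
  107651916244402561, 13, 21, 57, 71746057815605888, 59, 71754853908628096, 89,
  71886795303961216, 91, 71895591396983424, 121, 72027532792316544, 123, 72036328885338752,
  141835744698057089, 23, 57, 71746126535082624, 59, 71754922628104832, 89, 71886864023437952,
  91, 71895660116460160, 121, 72027601511793280, 123, 72036397604815488, 141835744698057089, 25,
  53, 71606419838878336, 55, 71606488558355072, 85, 71607519350506112, 87, 71607588069982848,
  117, 71608618862133888, 119, 71608687581610624, 139566214177177985, 27, 53, 71615215931900544,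
  55, 71615284651377280, 85, 71616315443528320, 87, 71616384163005056, 117, 71617414955156096,
  119, 71617483674632832, 139566214177177985, 29, 47, 49, 71711771125367424, 51,
  71720567218389632, 53, 71729363311412352, 107758296192336257, 37, 41, 71676238860796544, 57,
  71746607604974208, 107775751996457345, 53, 41, 71676788616610432, 57, 71747157327233664,
  107775751996457345, 107758158728216961, 107651918392017281, 15, 21, 57, 71746058352476800, 59,
  71754854445499008, 89, 71886795840832128, 91, 71895591933854336, 121, 72027533329187456, 123,
  72036329422209664, 141835744698057089, 23, 57, 71746127071953536, 59, 71754923164975744, 89,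
  71886864560308864, 91, 71895660653331072, 121, 72027602048664192, 123, 72036398141686400,
  141835744698057089, 25, 53, 71606420375749248, 55, 71606489095225984, 85, 71607519887377024,
  87, 71607588606853760, 117, 71608619399004800, 119, 71608688118481536, 139566214177177985, 27,
  53, 71615216468771456, 55, 71615285188248192, 85, 71616315980399232, 87, 71616384699875968,
  117, 71617415492027008, 119, 71617484211503744, 139566214177177985, 29, 47, 49,
  71711771125367424, 51, 71720567218389632, 53, 71729363311412352, 107758296192336257, 37, 41,
  71676239397667456, 57, 71746608141845120, 107775751996457345, 53, 105, 71958264130192000, 107,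
  71967060223214208, 109, 71731493615191168, 111, 71731562334667904, 135028115266290049,
  107758158728216961, 107651918392017281, 19, 21, 25, 45, 71605328917185152, 47,
  71605329454056064, 77, 71605337507119744, 79, 71605338043990656, 109, 71605346097054336, 111,
  71605346633925248, 135027153135419777, 27, 45, 71614125010207360, 47, 71614125547078272, 77,
  71614133600141952, 79, 71614134137012864, 109, 71614142190076544, 111, 71614142726947456,
  135027153135419777, 29, 37, 41, 71676243155763840, 43, 71685039248786048, 57,
  71746611899941504, 107775614557503873, 39, 41, 71676311875240576, 43, 71685107968262784, 57,
  71746680619418240, 107775614557503873, 45, 49, 71711700258407040, 51, 71720496351429248, 57,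
  71746066405540480, 107775889452188033, 107722697330606465, 107651916244402561, 23, 61, 51,
  71721046644146816, 59, 71754935517201024, 91, 71895673005556352, 115, 72002521620857472, 123,
  72036410493911680, 55, 65, 81, 69, 71853262984462976, 71, 71853331703939712, 77,
  71853537862369920, 95, 71738658157544576, 125878932907180417, 141809356402115969,
  141809356368561537, 107784819766903681, 55, 25, 41, 71737952172262528, 43, 71738020891739264,
  107793203522126209, 59, 37, 71755406382482048, 39, 71755475101958784, 107793066074784129,
  107793753244385665, 107793615797043585, 29, 37, 41, 71676243155763840, 43, 71685039248786048,
  49, 71711427527983744, 51, 71720223621005952, 57, 71746611899941504, 107775893747417473, 39,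
  41, 71676311875240576, 43, 71685107968262784, 49, 71711496247460480, 51, 71720292340482688,
  57, 71746680619418240, 107775893747417473, 45, 53, 71729294591935616, 107757883850310017,
  107722697330606465, 107651778797060481, 23, 27, 45, 71614193729684096, 47, 71614194266555008,
  77, 71614202319618688, 79, 71614202856489600, 109, 71614210909553280, 111, 71614211446424192,
  135027153135419777, 55, 25, 41, 71737952172262528, 43, 71738020891739264, 45,
  71605397636661888, 107722834777948545, 29, 41, 71676861631054464, 43, 71685657724076672, 45,
  71738090684957824, 107722834777948545, 107651916244402561, 107644082211439489, 27, 59, 21, 37,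
  71755405845611136, 39, 71755474565087872, 45, 71614125010207360, 107722697330606465, 29, 37,
  71755407992963712, 39, 71755476712440448, 45, 71755682871001728, 107722697330606465,
  107651778797060481, 107783720188167041, 107642982699811713]

theorem okA1_1 : run certA1_1 [(mask [0, 127, 5, 9, 17, 33], mask [1, 63, 3])] = true := by
  decide +kernel

def certA1_2 : List ℕ := [
  7, 15, 23, 57, 71746127071953792, 59, 71754923164976000, 89, 71886864560309120, 91,
  71895660653331328, 121, 72027602048664448, 123, 72036398141686656, 141835744698057089, 39, 41,
  71676308117144448, 43, 71685104210166656, 45, 71693900303188864, 107722836925301121, 55, 25,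
  71606489095226240, 27, 71615285188248448, 29, 71624081281270656, 107651918391755137, 57, 87,
  71748326095209344, 103, 71748875884577664, 119, 71749425606837120, 65, 71, 89,
  71888513928414080, 91, 71897310021436288, 105, 71958882672591744, 107, 71967678765613952, 121,
  72029251416769408, 123, 72038047509791616, 141836303077884289, 139504641496435585,
  139504641483852673, 59, 87, 71757122188231552, 103, 71757671977599872, 119, 71758221699859328,
  65, 71, 89, 71888513928414080, 91, 71897310021436288, 105, 71958882672591744, 107,
  71967678765613952, 121, 72029251416769408, 123, 72038047509791616, 141836303077884289,
  139504641496435585, 139504641483852673, 61, 87, 71765918281253760, 103, 71766468070622080,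
  119, 71767017792881536, 65, 71, 73, 71818145184236416, 75, 71826941277258624, 121,
  72029251416769408, 123, 72038047509791616, 141835194908688769, 139504641496435585,
  139504641483852673, 107793755458847105, 25, 41, 49, 71711563893195904, 51, 71720359986218112,
  53, 71729156079240320, 107758294044590465, 43, 49, 71711632612672640, 51, 71720428705694848,
  53, 71729224798717056, 107758294044590465, 45, 49, 71711701332149376, 51, 71720497425171584,
  53, 71729293518193792, 107758294044590465, 107722834777817473, 27, 41, 49, 71711564430066816,
  51, 71720360523089024, 53, 71729156616111232, 107758294044590465, 43, 49, 71711633149543552,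
  51, 71720429242565760, 53, 71729225335587968, 107758294044590465, 45, 49, 71711701869020288,
  51, 71720497962042496, 53, 71729294055064704, 107758294044590465, 107722834777817473, 29, 41,
  49, 71711564966937728, 51, 71720361059959936, 53, 71729157152982144, 107758294044590465, 45,
  49, 71711702405891200, 51, 71720498498913408, 53, 71729294591935616, 107758294044590465, 43,
  49, 71711633686414464, 51, 71720429779436672, 53, 71729225872458880, 107758294044590465,
  107722834777817473, 107651916244271489, 25, 41, 49, 71711563893195904, 51, 71720359986218112,
  53, 71729156079240320, 107758291897106817, 43, 49, 71711632612672640, 51, 71720428705694848,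
  53, 71729224798717056, 107758291897106817, 45, 49, 71711701332149376, 51, 71720497425171584,
  53, 71729293518193792, 107758291897106817, 107722832630333825, 29, 41, 49, 71711564966937728,
  51, 71720361059959936, 53, 71729157152982144, 107758291897106817, 43, 49, 71711633686414464,
  51, 71720429779436672, 53, 71729225872458880, 107758291897106817, 45, 49, 71711702405891200,
  51, 71720498498913408, 53, 71729294591935616, 107758291897106817, 107722832630333825, 27, 41,
  49, 71711564430066816, 51, 71720360523089024, 53, 71729156616111232, 107758291897106817, 43,
  49, 71711633149543552, 51, 71720429242565760, 53, 71729225335587968, 107758291897106817, 45,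
  49, 71711701869020288, 51, 71720497962042496, 53, 71729294055064704, 107758291897106817,
  107722832630333825, 107651914096787841]

theorem okA1_2 : run certA1_2 [(mask [0, 127, 9, 17, 33], mask [1, 63, 3, 5])] = true := by
  decide +kernel

def certA1_3 : List ℕ := [
  7, 11, 13, 15, 55, 27, 71615285188281216, 29, 71624081281336192, 43, 71685653966013312, 45,
  71694450059068288, 59, 71756022676636544, 61, 71764818769691520, 91, 71896760164991872, 93,
  71905556258046848, 107, 71967128942723968, 109, 71975925035778944, 123, 72037497653347200,
  125, 72046293746402176, 65, 75, 77, 71835874809300352, 142908937277755009, 141774172017315201,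
  142908937252589185, 23, 27, 71614185676653440, 29, 71622981769708416, 107651926948135297, 39,
  43, 71685104210199424, 45, 71693900303254400, 107722845448126849, 59, 29, 71624218720290176,
  45, 71694587498022272, 61, 71764956208645504, 87, 71757122188264320, 93, 71905693697000832,
  103, 71757671977632640, 109, 71976062474732928, 119, 71758221699892096, 125,
  72046431185356160, 65, 71, 77, 71835737370346368, 142908937277755009, 139504641496435585,
  142908937252589185, 29, 45, 49, 71711702405891712, 53, 71729294591936128, 107758571069981057,
  107723395203940737, 107653026459763073, 19, 21, 23, 39, 49, 71711494636848000, 51,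
  71720290729870208, 53, 71729086822892416, 107758294044590465, 59, 53, 71729774017726848, 61,
  71764958389815680, 27, 43, 55, 71738021428610432, 107793615864086913, 107793209897337217,
  107792660141523329, 29, 45, 49, 71711702405891712, 53, 71729294591936128, 107758568922497409,
  107723390908973441, 107653022164795777, 27, 43, 49, 71711633149543808, 51, 71720429242566016,
  53, 71729225335588224, 107758294044590465, 29, 45, 49, 71711702405891712, 51,
  71720498498913920, 53, 71729294591936128, 107758294044590465, 107722836858192257,
  107652468114014593, 29, 45, 49, 71711702405891712, 51, 71720498498913920, 53,
  71729294591936128, 107758294044590465, 107722287102378369, 107651918358200705, 23, 39, 49,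
  71711494636848000, 51, 71720290729870208, 53, 71729086822892416, 107758294044590465, 61, 47,
  71763727847998336, 79, 71763736437932928, 103, 71766470218236800, 111, 71763745027867520, 65,
  71, 91, 71897312169051008, 113, 71994069192295296, 115, 72002865285317504, 121,
  72029253564384128, 123, 72038049657406336, 141836577971257729, 135000764843672705,
  135000764831089793, 27, 43, 55, 71738021428610432, 107793615796978049, 107793209897337217,
  107792660141523329, 29, 61, 45, 49, 71711702405891712, 51, 71720498498913920, 53,
  71729294591936128, 107758294044590465, 27, 43, 71764409707677056, 107722836858192257,
  107722287102378369, 107792516285350273, 107651778796994945, 23, 39, 49, 71711494636848000, 51,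
  71720290729870208, 53, 71729086822892416, 107758294044590465, 59, 47, 71754931754943360, 79,
  71754940344877952, 103, 71757674125214592, 111, 71754948934812544, 65, 71, 91,
  71897312169051008, 113, 71994069192295296, 115, 72002865285317504, 121, 72029253564384128,
  123, 72038049657406336, 141836577971257729, 135000764843672705, 135000764831089793, 29, 45,
  55, 71738090684958336, 107784819699761793, 107723390908973441, 107653022164795777, 27, 59, 43,
  49, 71711633149543808, 51, 71720429242566016, 53, 71729225335588224, 107758294044590465, 29,
  45, 71755682871002752, 107722836858192257, 107652468114014593, 107783720188134017,
  107642982699778689, 23, 39, 59, 71755475101959040, 113, 71992969613558656, 115,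
  72001765706580864, 121, 72028153985647488, 123, 72036950078669696, 141836569381323137, 27, 43,
  49, 71711633149543808, 51, 71720429242566016, 53, 71729225335588224, 107758300487041409,
  107582103664804225, 107581553908990337, 27, 43, 49, 71711633149543808, 51, 71720429242566016,
  53, 71729225335588224, 107758296192074113, 107582099369836929, 107581549614023041, 23, 39, 49,
  71711494636848000, 51, 71720290729870208, 57, 71746679008936832, 107775885156958593, 13, 29,
  45, 49, 71711702405891712, 51, 71720498498913920, 53, 71729294591936128, 107758300487041409,
  107721741641531777, 107651372897354113, 107581004153176449, 13, 29, 45, 49, 71711702405891712,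
  51, 71720498498913920, 53, 71729294591936128, 107758296192074113, 107721737346564481,
  107651368602386817, 107580999858209153, 11, 27, 43, 49, 71711633149543808, 51,
  71720429242566016, 53, 71729225335588224, 107758291897106817, 13, 29, 45, 49,
  71711702405891712, 51, 71720498498913920, 53, 71729294591936128, 107758291897106817,
  107722832563224961, 107652463819047297, 107582095074869633, 13, 29, 45, 49, 71711702405891712,
  51, 71720498498913920, 53, 71729294591936128, 107758291897106817, 107722282807411073,
  107651914063233409, 107581545319055745, 13, 29, 45, 49, 71711702405891712, 51,
  71720498498913920, 53, 71729294591936128, 107758291897106817, 107721733051597185,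
  107651364307419521, 107580995563241857]

theorem okA1_3 : run certA1_3 [(mask [0, 127, 17, 33], mask [1, 63, 3, 5, 9])] = true := by
  decide +kernel

def certA1_4 : List ℕ := [
  7, 11, 13, 15, 39, 43, 71685104210199424, 45, 71693900303254400, 61, 71764269047432064, 19,
  23, 51, 71720290729902976, 107793485865828737, 107722836858192257, 107792386354200961, 59, 45,
  71694587498022272, 61, 71764956242199936, 19, 27, 43, 51, 71720429242598784,
  107793484792021377, 107722841153159553, 107722291397345665, 107792385280393601, 21, 29, 45,
  53, 71729294592001664, 107758575297839489, 107723390908973441, 107653022164795777,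
  107617837809484161, 19, 21, 23, 51, 39, 71720290729902976, 61, 71764683511908736, 27, 43,
  71720429242598784, 107793209897337217, 107792660141523329, 25, 29, 53, 57, 71747161656019584,
  107775886163591553, 107758293977481601, 107652740861215105, 107635148675236225, 25, 27, 29,
  57, 43, 71746817521763712, 45, 71746886778111616, 107722836858192257, 107774924090917249,
  107651778788606337, 107642982695584385, 107634186602561921, 25, 27, 51, 57, 71747092399671680,
  107774855371440769, 107617556489126273, 107616731855405441, 107634117883085441, 21, 25, 29,
  53, 57, 71747161656019584, 107774786651963777, 107757194465853825, 107651641349587329,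
  107634049163608449, 107616456977498497, 23, 27, 55, 59, 15, 71756022710190976, 19, 39,
  71755475101991808, 43, 71738021428643200, 107582103664804225, 21, 25, 29, 71756026468518528,
  107651641349587329, 107634049163608449, 107616456977498497, 21, 39, 53, 71729086822957952,
  107784750439219841, 107582653420618113, 107783650927592065, 25, 43, 57, 71746817521763712,
  107776023065674369, 107582107959771521, 107635285577319041, 21, 39, 53, 71729086822957952,
  107644012950864513, 107581553908990337, 107642913439236737, 25, 27, 43, 57, 71746817521763712,
  107774923554046593, 107582099369836929, 107581549614023041, 107634186065691265, 23, 29, 55,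
  61, 95, 71764840278344576, 13, 15, 71764818803245952, 21, 39, 71764271195046784, 45,
  71738090685023872, 107721741641531777, 19, 25, 27, 71764822024669568, 107616731855405441,
  107634117883085441, 107616456977498497, 71, 87, 103, 71950647085779840, 111,
  71985831457868672, 134602619097268609, 125595415547560321, 125595411252593025, 19, 39, 51,
  71720290729902976, 107793477275894145, 107792110385709441, 107792377764266369, 13, 25, 45, 57,
  71746886778111616, 107776022528803201, 107721745936499073, 107635285040447873,
  107581008448143745, 19, 39, 51, 71720290729902976, 107652739787538817, 107651372897354113,
  107651640275911041, 13, 25, 29, 45, 57, 71746886778111616, 107774923017175425,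
  107721737346564481, 107651368602386817, 107634185528820097, 107580999858209153, 27, 29, 59,
  61, 95, 71764977717300608, 11, 13, 15, 71764956242199936, 25, 43, 71764409707808128, 45,
  71755682871133824, 107722832563224961, 19, 21, 23, 71764958389815680, 107634186602561921,
  107634117883085441, 107634049163608449, 75, 91, 107, 71968377792908672, 111,
  71985969978953088, 134605891862348161, 125598142851793281, 125597593095979393, 77, 93, 109,
  71977243146473088, 111, 71986039239495296, 135024805792530817, 125947237793612161,
  125876869049434497, 11, 19, 43, 51, 71720429242598784, 107793476202086785, 107793201307402625,
  107792376690459009, 107792101795774849, 13, 21, 45, 53, 71729294592001664, 107758566707904897,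
  107723382319038849, 107617829219549569, 107582644830683521, 11, 19, 43, 51, 71720429242598784,
  107652738713731457, 107652463819047297, 107651639202103681, 107651364307419521, 13, 21, 29,
  45, 53, 71729294592001664, 107757467196277121, 107722282807411073, 107651914063233409,
  107616729707921793, 107581545319055745]

theorem okA1_4 : run certA1_4 [(mask [0, 127, 33], mask [1, 63, 3, 5, 9, 17])] = true := by
  decide +kernel

def certA1_5 : List ℕ := [
  7, 11, 13, 15, 19, 23, 27, 71614185680847744, 59, 71754923169203072, 21, 29,
  71622981778097024, 61, 71763719266452352, 35, 39, 43, 71685104214393728, 107793206726640001,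
  107651922653168001, 107792931848601985, 37, 39, 45, 71693900311643008, 107642922029171329,
  107616738297856385, 107784202864575105, 59, 55, 71756022680830848, 61, 25, 71764956225422720,
  41, 71764956258977152, 107766749191226497, 35, 39, 71755472958571392, 107793068213944705,
  107792930774794625, 37, 39, 45, 71693900311643008, 107723386614006145, 107784272120922753,
  107688202292248961, 47, 49, 61, 55, 71764818836800384, 59, 71764956275754368, 29, 31, 45,
  71764548245734272, 107723395203940737, 107784824024089217, 107653026459763073, 35, 39, 43,
  71685104214393728, 107792386354200961, 107792385280393601, 107792929701249409, 35, 39, 43,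
  71685104214393728, 107740428021023105, 107740290582069633, 107740153143116161, 21, 25, 29, 49,
  53, 57, 71747161689574016, 107774795241898369, 107757203055788417, 107740565459976577,
  107651649939521921, 107634057753543041, 107616465567433089, 51, 53, 55, 59, 31,
  71756027042907008, 47, 71756031337874304, 57, 61, 71764967030610304, 107793345239335297,
  107775753053290881, 21, 23, 37, 39, 71729086831346560, 107784269973308033, 107688200144765313,
  107783720183939713, 107617831367033217, 25, 27, 41, 43, 57, 71746817538540928,
  107776023602545025, 107714450984944257, 107705654891921793, 107644082207212161,
  107635286114189697, 19, 27, 35, 43, 71720429246793088, 107758019133129089, 107757744255222145,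
  107757469343760769, 107757194465853825, 21, 29, 37, 45, 53, 71729294600390272,
  107758293977481601, 107723109638947201, 107687925266858369, 107652740861215105,
  107617556489126273, 53, 55, 57, 59, 15, 19, 71756022680830848, 35, 71756022714385280, 49,
  71756022743745408, 107740153143116161, 61, 2, 71764967030604032, 18, 71764967030606080, 19,
  71764967030606208, 34, 71764967030608128, 35, 71764967030608256, 50, 71764967030610176,
  107744551191740802, 19, 23, 35, 39, 71755475106186112, 107793066066329985, 107792928627310977,
  107792516276961665, 107792378837942657, 21, 23, 37, 39, 71729086831346560, 107582653420618113,
  107784200716960385, 107582649125650817, 107783650927592065, 21, 23, 37, 39, 71729086831346560,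
  107775473343414913, 107775404623938177, 107774923554046593, 107774854834569857, 25, 27, 41,
  43, 57, 71746817538540928, 107776023065674369, 107582107959771521, 107705654355051137,
  107581558203957633, 107635285577319041, 25, 27, 41, 43, 57, 71746817538540928,
  107775954346197633, 107714381728596609, 107705585635574401, 107644012950864513,
  107635216857842305, 55, 57, 61, 23, 39, 51, 59, 4, 71764967029807488, 20, 71764967030069632,
  21, 71764967030086016, 36, 71764967030331776, 37, 71764967030348160, 52, 71764967030593920,
  107753416545337988, 21, 37, 71764271203435392, 13, 15, 71764818778080128, 107688200144765313,
  107784200716960385, 13, 15, 37, 71764818811634560, 107784202864575105, 107617831367033217,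
  107783650927592065, 25, 29, 41, 31, 47, 71746956051235712, 53, 71764823140418432,
  107758302567416193, 47, 53, 71764827435582336, 107758298306003329, 107749364774224513,
  107705516379226497, 107652739787538817, 107635147601494401, 13, 29, 41, 45, 25,
  71746886794888832, 19, 15, 21, 71764818778080128, 49, 71764818836800384, 107740291118940801,
  21, 59, 71764966996527488, 107784269973308033, 107634117883085441, 107634048089866625,
  107721741641531777, 107705104062366081, 107651372897354113, 107581004153176449, 13, 25, 29,
  45, 41, 71746886794888832, 35, 15, 37, 71764818811634560, 49, 71764818836800384,
  107740222936334977, 37, 59, 71738648502520960, 107783720183939713, 107705036416631425,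
  107704966623412609, 107721737346564481, 107651368602386817, 107634185528820097,
  107580999858209153, 19, 23, 35, 39, 51, 71720290734097280, 107793477275894145,
  107792110385709441, 107792927553634689, 107792106090742145, 107792377764266369, 19, 23, 35,
  39, 51, 71720290734097280, 107775885089849729, 107775472806543745, 107775335367590273,
  107774923017175425, 107774785578221953, 13, 25, 29, 41, 45, 57, 71746886794888832,
  107776022528803201, 107721745936499073, 107705653818179969, 107651377192321409,
  107635285040447873, 107581008448143745, 59, 61, 27, 43, 51, 29, 31, 32, 71764960535334272, 40,
  71764960552111488, 41, 71764960554208640, 48, 71764960568888704, 49, 71764960570985856, 56,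
  71764960585665920, 107771426442449056, 41, 55, 4, 71764966996253056, 20, 71764966996515200,
  36, 71764966996777344, 37, 71764966996793728, 52, 71764966997039488, 107753419229692548, 45,
  47, 57, 71764964882994560, 107776027931066753, 107766956960269441, 107723251372933505, 35, 37,
  39, 49, 71764962718601600, 107740362522772609, 107705109431075201, 107705040711598721,
  107704971992121729, 11, 19, 35, 71720429246793088, 37, 45, 47, 55, 71738167465919872, 57,
  71764964882994560, 107776027394196097, 55, 57, 71764967030344064, 107775752516420225,
  107652886890168705, 107722557735649665, 107687373363560833, 107651639202103681,
  107651364307419521, 21, 29, 37, 45, 53, 13, 71729294600390272, 11, 31, 47, 71764548228826496,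
  57, 71764960587763072, 107775894753526145, 47, 57, 71764964882859392, 107775890492113281,
  107749364774224513, 107580995563241857, 107758291829997953, 107723107491463553,
  107687923119374721, 107652738713731457, 107617554341642625, 13, 29, 37, 45, 53, 21,
  71729294600390272, 19, 31, 55, 71738640986064512, 57, 71764960587763072, 107776031118737793,
  55, 57, 71764967030344064, 107775615614337409, 107714455279911553, 107616454830014849,
  107758016985645441, 107722832563224961, 107687648241467777, 107652463819047297,
  107582095074869633, 13, 21, 29, 45, 53, 37, 71729294600390272, 35, 43, 47, 55,
  71738167998629504, 57, 71764964882994560, 107776026857324929, 55, 57, 71756239656766080,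
  107775751979549057, 107644090797146753, 107687648241467777, 107687373363560833,
  107757467196277121, 107722282807411073, 107651914063233409, 107616729707921793,
  107581545319055745, 11, 19, 27, 35, 43, 51, 71720429246793088, 107793476202086785,
  107793201307402625, 107792926479827329, 107792651551588737, 107792376690459009,
  107792101795774849, 13, 21, 29, 37, 45, 53, 71729294600390272, 107758566707904897,
  107723382319038849, 107688197997281665, 107653013574861185, 107617829219549569,
  107582644830683521]

theorem okA1_5 : run certA1_5 [(mask [0, 127], mask [1, 63, 3, 5, 9, 17, 33])] = true := by
  decide +kernel

def certB1_0 : List ℕ := [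
  7, 59, 13, 35525050792755584, 21, 35560235181621632, 29, 35595419536933248, 37,
  35630603959353728, 45, 35665788281110912, 53, 35700972669976960, 143786888638318209, 61, 11,
  35734507757846912, 19, 35734782652531072, 27, 35735057513660800, 35, 35735332441899392, 43,
  35735607269474688, 51, 35735882164158848, 143778023284721025, 27, 13, 35523951281127808, 21,
  35559135669993856, 29, 35594320025305472, 45, 35664688769483136, 53, 35699873158349184, 37,
  35, 35629779325632896, 43, 35630054203539840, 47, 55, 35586496759218816, 57,
  35718157941621120, 143813833694694017, 55, 57, 35718432819396992, 143822558920922497,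
  143795762036557441, 143786888638318209, 43, 13, 35524501036941696, 29, 35594869781119360, 37,
  35630054203539840, 45, 35665238525297024, 53, 35700422947717504, 21, 19, 35558860792086912,
  31, 55, 35656861241983616, 57, 35718021576409472, 143822561068272001, 55, 57,
  35718437080809856, 143822554625691009, 143796235023992449, 143786888638318209, 51, 21,
  35559960303714688, 29, 35595144675803520, 37, 35630329081446784, 45, 35665513453535616, 53,
  35700697792070016, 13, 11, 35523401525313920, 31, 47, 35691770736296576, 57,
  35718296454185344, 143822558920787329, 47, 57, 35718300715598208, 143822554625691009,
  143822142266754433, 143786888638318209, 11, 13, 35523401525313920, 29, 35593770269491584, 45,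
  35664139013669248, 55, 25, 35577691002519936, 41, 35648059780252032, 143813276925838977, 57,
  19, 35717191540294016, 23, 35717328979247488, 35, 35717741329662336, 39, 35717878768615808,
  31, 47, 35718159015362944, 143760988387789185, 143813621047544705, 31, 47, 53,
  35700566829318528, 143822561068538241, 143813831547340417, 143813827252110977, 53, 19,
  35699598280442240, 35, 35700148069810560, 143778023284721025, 19, 21, 35558860792086912, 29,
  35594045164175744, 47, 25, 35576463715615104, 49, 35682971422048640, 143813551820524161, 57,
  15, 35717192614035840, 35, 35717743477277056, 39, 35717880916230528, 31, 55,
  35718433893138816, 143796170629170561, 143813346169636737, 31, 45, 55, 35665657335005568,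
  143813833694956161, 143822558920922497, 143822554625557889, 35, 37, 35629779325632896, 45,
  35664963697721728, 31, 41, 35647377954193792, 49, 35682562326413696, 143813556115755649, 57,
  15, 35717742403404160, 23, 35717744551018880, 47, 55, 35718438154551680, 143796166333941121,
  143813346186282881, 29, 47, 55, 35595292852240768, 143822561068272001, 143822558920787329,
  143822554625691009, 143778023284721025, 11, 55, 13, 35523414410215808, 25, 35577691002519936,
  29, 35593783154393472, 41, 35648059780252032, 45, 35664151898571136, 57, 35718428490875264,
  143804480832816769, 57, 19, 35717191540294016, 23, 35717328979247488, 35, 35717741329662336,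
  39, 35717878768615808, 51, 35718291051921792, 143777884772025217, 61, 19, 35734783726338432,
  23, 35734512052814208, 35, 35735333515706752, 39, 35734516347781504, 51, 35735883237966208,
  143777884772025217, 23, 13, 35523405820281216, 25, 35576591490892160, 29, 35593774564458880,
  45, 35664143308636544, 41, 35, 35647372585484672, 15, 37, 35647442378703488, 59,
  35726126146011776, 143796242540448897, 37, 49, 35682628898407040, 143822412874728321,
  143822412849562497, 143804480832816769, 39, 13, 35523410115248512, 29, 35593778859426176, 41,
  35647510024438144, 45, 35664147603603840, 25, 19, 35576454051938688, 15, 21,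
  35576523845157504, 59, 35726675935380096, 143822561034455425, 21, 49, 35682697081012864,
  143822412874728321, 143822412816008065, 143804480832816769, 51, 25, 35577553563566464, 29,
  35595145749610880, 41, 35647922341298560, 31, 47, 35691770736296576, 53, 35700704268075392,
  143822421473510273, 47, 53, 35700708529488256, 143822417178346369, 143804550089163649, 19, 25,
  35576454051938688, 29, 35594046237983104, 47, 21, 35558871529505152, 49, 35682971422048640,
  143804824446978689, 53, 15, 35699600427925888, 35, 35700151291232640, 43, 35700426169139584,
  31, 59, 35700979145982336, 143813625376326529, 143795753983526785, 31, 45, 59,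
  35665794773893504, 143796242574265473, 143822421473575809, 143822417178280833, 35, 41,
  35647372585484672, 45, 35664964771529088, 31, 37, 35629785768083840, 49, 35682562326413696,
  143804828742210177, 53, 15, 35700150217294208, 27, 35700153438716288, 47, 59,
  35700983407395200, 143813621081097089, 143795753991849857, 29, 47, 59, 35595430291128704,
  143822424694737281, 143822421473510273, 143822417178346369, 143777884772025217, 13, 53, 25,
  35577622819914368, 27, 35586418912936576, 41, 35647991597646464, 43, 35656787690668672, 57,
  35718360308269696, 143804411576468865, 55, 25, 35577691539391104, 27, 35523964166029696, 41,
  35648060317123200, 43, 35524513921843584, 57, 35718429027746432, 143804411576468865, 57, 21,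
  35717260796641920, 23, 35717329516118656, 37, 35717810586010240, 39, 35717879305486976,
  143786680869274497, 59, 21, 35726056889664128, 23, 35525055087722880, 37, 35726606679032448,
  39, 35525059382690176, 143786680869274497, 15, 51, 37, 35630331228930432, 41,
  35647923415040384, 45, 35665515601019264, 61, 35735884311642496, 19, 35, 49,
  35682559105188224, 143813624835232385, 143822561068536193, 143822561068534145, 31, 47, 61,
  35735751201407360, 143822561068538241, 143813625375802241, 143813621080834945, 19, 35, 49,
  35682559105188224, 143813616781673345, 143813616752313217, 143813616718758785, 15, 51, 21,
  35559962451198336, 29, 35595146823287168, 37, 35630331228930432, 45, 35665515601019264, 53,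
  35700699939553664, 143786888638318209, 53, 19, 35699600427925888, 27, 35699875305832832, 35,
  35700150217294208, 43, 35700425095201152, 143778023284721025, 55, 25, 35577692076261760, 27,
  35586488169284224, 41, 35648060853993856, 43, 35656856947016320, 57, 35718429564617088,
  143804411576468865, 59, 21, 35560237329105280, 23, 35726126146011776, 37, 35630606106837376,
  39, 35726675935380096, 143786680869274497, 31, 47, 57, 35718159015362944, 61,
  35735751201407360, 143822561068538241, 143813625375802241, 143813621080834945, 19, 47, 21,
  35558871529505152, 25, 35576463715615104, 29, 35594055901593984, 49, 35682971422048640, 53,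
  35699609017860480, 57, 35717201203970432, 143804755727501953, 49, 35, 35682559105188224, 39,
  35682696544141696, 43, 35682833983095168, 143742698252321665, 61, 35, 35735335663321472, 39,
  35734791242465664, 43, 35734792316273024, 143742698252321665, 55, 59, 29, 35595432421835136,
  31, 35727229986161280, 45, 35665801166012800, 143822142283662209, 143822550313682305,
  143822412874728321, 23, 59, 37, 35630608254321024, 39, 35726678082994816, 45,
  35665792576078208, 143751494349570945, 55, 61, 35, 35735336736866688, 39, 35735474176016768,
  143813066996499329, 25, 41, 35709155153298560, 143822550296905089, 143822550263350657,
  143813616718758785, 27, 59, 21, 37, 35726608826647168, 39, 35559144259928448, 45,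
  35585327991243392, 143751494349570945, 29, 61, 35, 35735337810674048, 39, 35594328615240064,
  43, 35735612688712064, 143742698252321665, 143821313304380289, 143680575816024961,
  143812517207131009, 143671779718775681]

theorem okB1_0 : run certB1_0 [(mask [0, 63, 3, 5, 9, 17, 33], mask [127, 1])] = true := by
  decide +kernel

def certB1_1 : List ℕ := [
  7, 13, 53, 25, 35577622819914368, 27, 35586418912936576, 41, 35647991597646464, 43,
  35656787690668672, 57, 35718360308269696, 143804411576467841, 55, 25, 35577691539391104, 27,
  35586487632413312, 41, 35648060317123200, 43, 35656856410145408, 57, 35718429027746432,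
  143804411576467841, 21, 25, 35576523308286592, 27, 35585319401308800, 57, 35717260796641920,
  59, 35726056889664128, 125, 89, 70760895397118592, 121, 70901632885473920, 91, 95,
  53881192887501440, 144087681950695809, 144087544511742337, 144103891081249153, 23, 25,
  35576592027763328, 27, 35585388120785536, 57, 35717329516118656, 29, 49, 41,
  35682767947973760, 43, 35682836667450496, 143804411576467841, 143804823910105473,
  143680724000915841, 37, 41, 35647441841832576, 43, 35656237934854784, 57, 35717810586010240,
  59, 35726606679032448, 125, 105, 70831813930664576, 121, 70902182674842240, 107, 111,
  62959310675788416, 144088231740064129, 144088094301110657, 144103486255350145, 39, 47, 111,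
  41, 35647510561309312, 57, 35717879305486976, 59, 35726675398509184, 107, 62959379395265152,
  49, 25, 35682973032662144, 29, 35682699228496512, 143681823512543617, 144024802454198401,
  143789154770436481, 143786955747180929, 143786680869273985, 15, 23, 25, 35576592564634240, 27,
  35585388657656448, 29, 35594184750678912, 57, 35717330052989568, 47, 49, 35682972495790720,
  51, 35691768588812928, 143804686471152001, 143680721853301121, 39, 41, 35647511098180224, 43,
  35656307191202432, 57, 35717879842357888, 59, 35726675935380096, 61, 35735472028402560, 21,
  25, 35576523845157504, 27, 35585319938179712, 143804411576467841, 143822552478073217, 53, 25,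
  35577623356785280, 27, 35586419449807488, 41, 35647992134517376, 43, 35656788227539584, 57,
  35718360845140608, 143804411576467841, 55, 25, 35577692076262016, 27, 35586488169284224, 41,
  35648060853994112, 43, 35656856947016320, 57, 35718429564617344, 143804411576467841, 21, 25,
  35576523845157504, 27, 35585319938179712, 57, 35717261333512832, 49, 125, 47,
  35682971958919808, 101, 70587724496913024, 109, 70587999374819968, 103, 119,
  67210093495861888, 144035726829502849, 144035177073688961, 144103891081249153,
  143804823910105473, 37, 41, 35647442378703488, 43, 35656238471725696, 59, 35726607215903360,
  49, 125, 31, 35682631045890688, 85, 70585542653526656, 93, 70585544801010304, 87, 119,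
  67207843469869696, 143965353756803457, 143964254245175681, 144103477665415553,
  143813550209550977, 143786680869273985, 21, 37, 49, 35682628361536128, 51, 35691424454558336,
  57, 35717812733624960, 59, 35726608826647168, 125, 113, 70867000450368128, 121,
  70902184822456960, 115, 119, 67498096822862464, 144088506634748289, 144088369195794817,
  144103750412484993, 45, 25, 35576531898221184, 27, 35585327991243392, 49, 35682903239443072,
  51, 35691699332465280, 57, 35717269386576512, 143804686471152001, 39, 55, 59,
  35726677546123904, 41, 25, 35709155153298560, 29, 35647514856276608, 143681812774994305,
  143813273167382145, 143752044105384321, 143751494349570433, 29, 55, 41, 35648064612090496, 43,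
  35656860705112704, 45, 35709293665993856, 143751631796912513, 61, 93, 125, 37, 41,
  35647446136799872, 43, 35656242229822080, 49, 35682630509019776, 57, 35717814880977536,
  143804828205334913, 45, 109, 49, 35682905386926720, 69, 70851343222851712, 73,
  70851343231240320, 77, 70851343239628928, 117, 70884869661803648, 121, 70902461847847552,
  143895076793309313, 144033519082094977, 143752044105384321, 144103887792718209,
  143963150304362881, 143822412816007553, 23, 55, 25, 41, 35709155153298560, 43,
  35709223872775296, 45, 35576600617697920, 143751631796912513, 27, 59, 37, 35726609363518080,
  39, 35726678082994816, 45, 35585396710720128, 143751494349570433, 143681812774994305,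
  143680713263366529, 143681675327652225, 143680575816024449, 11, 13, 53, 25, 35577622819914368,
  27, 35586418912936576, 41, 35647991597646464, 43, 35656787690668672, 57, 35718360308269696,
  143804411576467841, 55, 25, 35577691539391104, 27, 35586487632413312, 41, 35648060317123200,
  43, 35656856410145408, 57, 35718429027746432, 143804411576467841, 21, 25, 35576523308286592,
  27, 35585319401308800, 57, 35717260796641920, 59, 35726056889664128, 125, 89,
  70760895397118592, 121, 70901632885473920, 91, 95, 53881192887501440, 144087681950695809,
  144087544511742337, 144103891081249153, 23, 25, 35576592027763328, 27, 35585388120785536, 57,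
  35717329516118656, 29, 49, 41, 35682767947973760, 43, 35682836667450496, 143804411576467841,
  143804823910105473, 143680724000915841, 37, 41, 35647441841832576, 43, 35656237934854784, 57,
  35717810586010240, 59, 35726606679032448, 125, 105, 70831813930664576, 121, 70902182674842240,
  107, 111, 62959310675788416, 144088231740064129, 144088094301110657, 144103486255350145, 39,
  47, 111, 41, 35647510561309312, 57, 35717879305486976, 59, 35726675398509184, 107,
  62959379395265152, 49, 25, 35682973032662144, 29, 35682699228496512, 143681823512543617,
  144024802454198401, 143789154770436481, 143786955747180929, 143786680869273985, 15, 27, 21,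
  35585319938179712, 23, 35585388657656448, 29, 35585594816119424, 53, 35586419449807488, 55,
  35586488169284224, 61, 35586694327747200, 31, 47, 49, 35682974643274368, 51,
  35691770736296576, 143787093211300225, 143680584405959041, 143822417178083713, 43, 37,
  35656238471725696, 39, 35656307191202432, 53, 35656788227539584, 55, 35656856947016320, 61,
  35657063105479296, 25, 21, 35576523845157504, 23, 35576592564634240, 143786680869273985,
  143822416104538497, 53, 25, 35577623356785280, 41, 35647992134517376, 57, 35718360845140608,
  143804411576467841, 55, 25, 35577692076262016, 41, 35648060853994112, 57, 35718429564617344,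
  143804411576467841, 61, 59, 35727431816102528, 31, 47, 35735751201408384, 19, 51,
  35692251772666496, 143813625376326529, 143813625309217665, 35, 47, 51, 35691778793554560,
  143813621081097089, 143813346186412929, 143813621047542657, 25, 41, 21, 35576523845157504, 23,
  35576592564634240, 37, 35647442378703488, 39, 35647511098180224, 143786680869273985,
  143822420399767937, 143822416104538497, 25, 41, 49, 35682766874231936, 51, 35691562967254144,
  53, 35700359060276352, 55, 35709155153298560, 125, 113, 70867138963063936, 117,
  70884731149108352, 115, 123, 69750035149243520, 144071050813849985, 144070775935943041,
  144103750412484993, 45, 21, 35576531898221184, 23, 35576600617697920, 49, 35682904313185408,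
  51, 35691700406207616, 53, 35577631409848960, 143787093211300225, 43, 59, 55,
  35709223872775296, 37, 21, 35726608826647168, 29, 35656242229822080, 143681675327652225,
  143795680972949121, 143752181552726401, 143751631796912513, 29, 59, 37, 35726610973999744, 39,
  35726679693476480, 45, 35726885852037760, 143751494349570433, 61, 93, 125, 41, 37,
  35647446136799872, 39, 35647514856276608, 49, 35682767947973760, 53, 35647995892613760,
  143787372384436609, 45, 109, 49, 35682905386926720, 69, 70851343222851712, 73,
  70851343231240320, 77, 70851343239628928, 117, 70884869661803648, 121, 70902461847847552,
  143895076793309313, 144033656529437057, 143752181552726401, 144104025240060289,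
  143963287751704961, 143822550263349633, 27, 59, 21, 37, 35726608826647168, 39,
  35726677546123904, 45, 35585327991243392, 143751494349570433, 23, 37, 35726609363518080, 39,
  35726678082994816, 45, 35585396710720128, 143751494349570433, 143680575816024449,
  143681812774994305, 143680713263366529, 13, 53, 25, 35577622819914368, 27, 35586418912936576,
  41, 35647991597646464, 43, 35656787690668672, 57, 35718360308269696, 143804411576467841, 55,
  25, 35577691539391104, 27, 35586487632413312, 41, 35648060317123200, 43, 35656856410145408,
  57, 35718429027746432, 143804411576467841, 21, 25, 35576523308286592, 27, 35585319401308800,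
  57, 35717260796641920, 59, 35726056889664128, 125, 89, 70760895397118592, 121,
  70901632885473920, 91, 95, 53881192887501440, 144087681950695809, 144087544511742337,
  144103891081249153, 23, 25, 35576592027763328, 27, 35585388120785536, 57, 35717329516118656,
  29, 49, 41, 35682767947973760, 43, 35682836667450496, 143804411576467841, 143804823910105473,
  143680724000915841, 37, 41, 35647441841832576, 43, 35656237934854784, 57, 35717810586010240,
  59, 35726606679032448, 125, 105, 70831813930664576, 121, 70902182674842240, 107, 111,
  62959310675788416, 144088231740064129, 144088094301110657, 144103486255350145, 39, 47, 111,
  41, 35647510561309312, 57, 35717879305486976, 59, 35726675398509184, 107, 62959379395265152,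
  49, 25, 35682973032662144, 29, 35682699228496512, 143681823512543617, 144024802454198401,
  143789154770436481, 143786955747180929, 143786680869273985, 15, 53, 25, 35577623356785280, 27,
  35586419449807488, 41, 35647992134517376, 43, 35656788227539584, 57, 35718360845140608,
  143804411576467841, 55, 25, 35577692076262016, 27, 35586488169284224, 41, 35648060853994112,
  43, 35656856947016320, 57, 35718429564617344, 143804411576467841, 21, 25, 35576523845157504,
  27, 35585319938179712, 57, 35717261333512832, 49, 125, 47, 35682971958919808, 101,
  70587724496913024, 109, 70587999374819968, 103, 119, 67210093495861888, 144035726829502849,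
  144035177073688961, 144103891081249153, 143804823910105473, 23, 25, 35576592564634240, 27,
  35585388657656448, 57, 35717330052989568, 29, 49, 41, 35682767947973760, 43,
  35682836667450496, 143804411576467841, 143804823910105473, 143680724000915841, 37, 41,
  35647442378703488, 43, 35656238471725696, 59, 35726607215903360, 49, 125, 31,
  35682631045890688, 85, 70585542653526656, 93, 70585544801010304, 87, 119, 67207843469869696,
  143965353756803457, 143964254245175681, 144103486255350145, 143813550209550977, 39, 111, 41,
  35647511098180224, 43, 35656307191202432, 57, 35717879842357888, 59, 35726675935380096, 105,
  62950583839113856, 107, 62959379932136064, 45, 49, 61, 109, 121, 125, 31, 35682699765367424,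
  65, 70904669528146560, 93, 70585819678917248, 143964941398000001, 144103486255350145,
  144088094301110657, 144033117511434625, 143822011278639489, 144024802454198401,
  143751642534723969, 143789154770436481, 143786680869273985, 19, 21, 37, 49, 35682628361536128,
  51, 35691424454558336, 57, 35717812733624960, 59, 35726608826647168, 119, 125, 113,
  67489300729840256, 115, 67498096822862464, 121, 70902184822456960, 144088369195794817,
  144103750412484993, 143815815804928897, 39, 2, 35638097544775808, 49, 35682697081012864, 51,
  35691493174035072, 59, 35726677546123904, 55, 61, 27, 35586500521509504, 31,
  35709843958711424, 47, 35709370987988096, 34, 43, 35656319541330560, 143813346186412930,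
  143813346167538562, 143822275435774337, 143813616781673345, 45, 25, 35576531898221184, 27,
  35585327991243392, 49, 35682903239443072, 51, 35691699332465280, 57, 35717269386576512,
  143804686471152001, 143751494349570433, 23, 27, 29, 35585392419947136, 45, 35585396710720128,
  47, 35585397247591040, 61, 35585401009881728, 31, 55, 41, 35648065148961408, 43,
  35656861241983616, 143751631796912513, 143681675327652225, 143822142283530625, 61, 51,
  35692249625182848, 59, 35726138498237056, 55, 25, 41, 35709155153298560, 45,
  35576600617697920, 143752181552726401, 29, 41, 35648064612090496, 45, 35709293665993856,
  143752181552726401, 143680713263366529, 143813616785867649, 25, 55, 41, 35709155153298560, 43,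
  35709223872775296, 143822000541090177, 143822412816007553, 143821450751721857, 29, 37, 41,
  35647446136799872, 43, 35656242229822080, 49, 35682630509019776, 51, 35691426602041984, 57,
  35717814880977536, 143804690766381441, 39, 41, 35647514856276608, 43, 35656310949298816, 49,
  35682699228496512, 51, 35691495321518720, 57, 35717883600454272, 143804690766381441, 45, 53,
  35700497572971648, 143786680869273985, 143751494349570433, 143680575816024449, 23, 59, 37,
  35726609363518080, 39, 35726678082994816, 45, 35726134199075456, 143751494349570433, 55, 25,
  41, 35709155153298560, 45, 35576600617697920, 143752181552726401, 29, 41, 35648064612090496,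
  45, 35709293665993856, 143752181552726401, 143681812774994305, 143813616718758785, 27, 59, 21,
  37, 35726608826647168, 39, 35726677546123904, 45, 35585327991243392, 143751494349570433, 29,
  37, 35726610973999744, 39, 35726679693476480, 45, 35726885852037760, 143751494349570433,
  143680575816024449, 143812517207131009, 143671779718775681]

theorem okB1_1 : run certB1_1 [(mask [0, 63, 5, 9, 17, 33], mask [127, 1, 3])] = true := by
  decide +kernel

def certB1_2 : List ℕ := [
  7, 11, 13, 15, 55, 25, 35577692076262272, 27, 35586488169284480, 41, 35648060853994368, 43,
  35656856947016576, 57, 35718429564617600, 143804411576467841, 39, 41, 35647511098180480, 43,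
  35656307191202688, 45, 35665103284224896, 143751642534199681, 59, 29, 35595421701326208, 45,
  35665790479058304, 61, 35736159189681536, 31, 47, 35726955108385664, 21, 53,
  35700979146245248, 143822421473575297, 143822421406466433, 37, 47, 53, 35700574353900672,
  143822417178345857, 143822142283661697, 143822417144791425, 61, 27, 35735059678053760, 43,
  35735609467422080, 31, 47, 35735751201407872, 19, 51, 35692251772667008, 143813625376326273,
  143813625309217409, 35, 47, 51, 35691778793555072, 143813621081096833, 143813346186412673,
  143813621047542401, 25, 41, 49, 35682766874231936, 143822556756001153, 143822561034191233,
  143822561000636801, 25, 41, 49, 35682766874231936, 51, 35691562967254144, 53,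
  35700359060276352, 143787091063554433, 43, 49, 35682835593708672, 51, 35691631686730880, 53,
  35700427779753088, 143787091063554433, 45, 49, 35682904313185408, 51, 35691700406207616, 53,
  35700496499229824, 143787091063554433, 143751631796781441, 29, 41, 49, 35682767947973760, 51,
  35691564040995968, 53, 35700360134018176, 143787091063554433, 43, 49, 35682836667450496, 51,
  35691632760472704, 53, 35700428853494912, 143787091063554433, 45, 49, 35682905386927232, 51,
  35691701479949440, 53, 35700497572971648, 143787091063554433, 143751631796781441, 27, 41, 49,
  35682767411102848, 51, 35691563504125056, 53, 35700359597147264, 143787091063554433, 45, 49,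
  35682904850056320, 51, 35691700943078528, 53, 35700497036100736, 143787091063554433, 43, 57,
  35718020502668672, 143804480832815745, 143751631796781441, 143680713263235457, 15, 55, 25,
  35577692076262272, 27, 35586488169284480, 41, 35648060853994368, 43, 35656856947016576, 57,
  35718429564617600, 143804411576467841, 23, 25, 35576592564634496, 27, 35585388657656704, 29,
  35594184750678912, 143680724000653697, 39, 41, 35647511098180480, 43, 35656307191202688, 45,
  35665103284224896, 143751642534199681, 31, 47, 49, 35682974643274624, 51, 35691770736296832,
  53, 35700566829319040, 143787093211038081, 49, 41, 35682768484844672, 43, 35682837204321408,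
  45, 35682905923798144, 143751642534199681, 61, 43, 35735613762454912, 59, 21,
  35736163518334336, 29, 35736163518465408, 143681683917586817, 143813625372131969,
  143822421464662401, 47, 49, 25, 35682973032662144, 27, 35682973569533056, 29,
  35682974106403968, 143680724000653697, 61, 27, 35735750127666560, 59, 37, 35736167780009344,
  45, 35736167780140416, 143752048400351617, 143813621076902529, 143822417169695105,
  143795753991915137, 25, 41, 49, 35682766874231936, 51, 35691562967254144, 53,
  35700359060276352, 143787091063554433, 43, 49, 35682835593708672, 51, 35691631686730880, 53,
  35700427779753088, 143787091063554433, 45, 49, 35682904313185408, 51, 35691700406207616, 53,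
  35700496499229824, 143787091063554433, 143751631796781441, 29, 41, 49, 35682767947973760, 51,
  35691564040995968, 53, 35700360134018176, 143787091063554433, 43, 49, 35682836667450496, 51,
  35691632760472704, 53, 35700428853494912, 143787091063554433, 45, 49, 35682905386927232, 51,
  35691701479949440, 53, 35700497572971648, 143787091063554433, 143751631796781441, 27, 59, 91,
  123, 55, 41, 35709155690169472, 43, 35709224409646208, 45, 35709293129122944,
  143751631796781441, 21, 49, 41, 35682767411102848, 43, 35682836130579584, 45,
  35682904850056320, 143751631796781441, 57, 61, 121, 31, 35736163518334336, 65,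
  69778150609405312, 89, 69778150659736960, 107, 69497216731202944, 143947349212152193,
  144086299423687297, 143822412874727809, 143804824446976641, 143795131183580801,
  143684011798118785, 143682912286491009, 143681812774863233, 143680713263235457, 13, 15, 55,
  25, 35577692076262272, 27, 35586488169284480, 41, 35648060853994368, 43, 35656856947016576,
  57, 35718429564617600, 143804411576467841, 23, 25, 35576592564634496, 27, 35585388657656704,
  29, 35594184750678912, 143680724000653697, 39, 41, 35647511098180480, 43, 35656307191202688,
  45, 35665103284224896, 143751642534199681, 31, 47, 49, 35682974643274624, 51,
  35691770736296832, 53, 35700566829319040, 143787093211038081, 49, 41, 35682768484844672, 43,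
  35682837204321408, 45, 35682905923798144, 143751642534199681, 59, 45, 35726886388909696, 61,
  2, 35736163518202112, 10, 35736163518203136, 18, 35736163518204160, 26, 35736163518205184,
  143668480108036482, 143822421465186689, 143813625371607681, 47, 49, 25, 35682973032662144, 27,
  35682973569533056, 29, 35682974106403968, 143680724000653697, 59, 29, 35726954571515520, 61,
  2, 35736167779614976, 10, 35736167779616000, 34, 35736167779619072, 42, 35736167779620096,
  143738848885768578, 143822417169957249, 143813621076640385, 143795753991914881, 25, 41, 49,
  35682766874231936, 51, 35691562967254144, 53, 35700359060276352, 143787091063554433, 45, 49,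
  35682904313185408, 51, 35691700406207616, 53, 35700496499229824, 143787091063554433, 43, 49,
  35682835593708672, 51, 35691631686730880, 53, 35700427779753088, 143787091063554433,
  143751631796781441, 27, 41, 49, 35682767411102848, 51, 35691563504125056, 53,
  35700359597147264, 143787091063554433, 45, 49, 35682904850056320, 51, 35691700943078528, 53,
  35700497036100736, 143787091063554433, 43, 49, 35682836130579584, 51, 35691632223601792, 53,
  35700428316624000, 143787091063554433, 143751631796781441, 29, 41, 49, 35682767947973760, 51,
  35691564040995968, 53, 35700360134018176, 143787091063554433, 43, 49, 35682836667450496, 51,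
  35691632760472704, 53, 35700428853494912, 143787091063554433, 45, 57, 35718089759016576,
  143804411576467841, 143751631796781441, 143680713263235457, 15, 55, 25, 35577692076262272, 27,
  35586488169284480, 41, 35648060853994368, 43, 35656856947016576, 57, 35718429564617600,
  143804411576467841, 23, 25, 35576592564634496, 27, 35585388657656704, 29, 35594184750678912,
  143680724000653697, 39, 41, 35647511098180480, 43, 35656307191202688, 45, 35665103284224896,
  143751642534199681, 31, 47, 49, 35682974643274624, 51, 35691770736296832, 53,
  35700566829319040, 143787093211038081, 49, 41, 35682768484844672, 43, 35682837204321408, 45,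
  35682905923798144, 143751642534199681, 59, 61, 19, 21, 35736163518335360, 29,
  35736163518466432, 143681683917586817, 27, 21, 35736163518336384, 29, 35736163518467456,
  143681683917586817, 143672887820337793, 143822421464662401, 143813625371607681, 47, 49, 25,
  35682973032662144, 27, 35682973569533056, 29, 35682974106403968, 143680724000653697, 59, 61,
  35, 37, 35736167780012416, 45, 35736167780143488, 143752048400351617, 43, 37,
  35736167780013440, 45, 35736167780144512, 143752048400351617, 143743252303102593,
  143822417169695105, 143813621076640385, 143795753991914881, 25, 41, 49, 35682766874231936, 51,
  35691562967254144, 53, 35700359060276352, 143787091063554433, 43, 49, 35682835593708672, 51,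
  35691631686730880, 53, 35700427779753088, 143787091063554433, 45, 49, 35682904313185408, 51,
  35691700406207616, 53, 35700496499229824, 143787091063554433, 143751631796781441, 27, 41, 49,
  35682767411102848, 51, 35691563504125056, 53, 35700359597147264, 143787091063554433, 45, 49,
  35682904850056320, 51, 35691700943078528, 53, 35700497036100736, 143787091063554433, 43, 49,
  35682836130579584, 51, 35691632223601792, 53, 35700428316624000, 143787091063554433,
  143751631796781441, 29, 41, 49, 35682767947973760, 51, 35691564040995968, 53,
  35700360134018176, 143787091063554433, 43, 49, 35682836667450496, 51, 35691632760472704, 53,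
  35700428853494912, 143787091063554433, 45, 49, 35682905386927232, 51, 35691701479949440, 53,
  35700497572971648, 143787091063554433, 143751631796781441, 143680713263235457, 25, 41, 49,
  35682766874231936, 51, 35691562967254144, 53, 35700359060276352, 143787088916070785, 43, 49,
  35682835593708672, 51, 35691631686730880, 53, 35700427779753088, 143787088916070785, 45, 49,
  35682904313185408, 51, 35691700406207616, 53, 35700496499229824, 143787088916070785,
  143751629649297793, 29, 41, 49, 35682767947973760, 51, 35691564040995968, 53,
  35700360134018176, 143787088916070785, 43, 49, 35682836667450496, 51, 35691632760472704, 53,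
  35700428853494912, 143787088916070785, 45, 49, 35682905386927232, 51, 35691701479949440, 53,
  35700497572971648, 143787088916070785, 143751629649297793, 27, 41, 49, 35682767411102848, 51,
  35691563504125056, 53, 35700359597147264, 143787088916070785, 45, 49, 35682904850056320, 51,
  35691700943078528, 53, 35700497036100736, 143787088916070785, 43, 49, 35682836130579584, 51,
  35691632223601792, 53, 35700428316624000, 143787088916070785, 143751629649297793,
  143680711115751809]

theorem okB1_2 : run certB1_2 [(mask [0, 63, 9, 17, 33], mask [127, 1, 3, 5])] = true := by
  decide +kernel

def certB1_3 : List ℕ := [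
  7, 11, 13, 15, 55, 27, 35586488169317248, 29, 35595284262372224, 71, 87, 103, 119,
  67447047458408576, 143680741146968449, 143680736852001153, 143680732557033857,
  143680728262066561, 59, 29, 35595421701326208, 75, 91, 107, 123, 69716577979222144,
  143684022501982593, 143683472746168705, 143682922990354817, 143682373234540929, 61, 77, 93,
  109, 125, 70851343239628928, 144104035943793025, 144033667199615361, 143963298455437697,
  143892929711260033, 143822560967082369, 19, 21, 23, 39, 49, 35682697617884032, 51,
  35691493710906240, 53, 35700289803928448, 143787091063554433, 59, 53, 35700976998762880, 61,
  35736161370851712, 27, 43, 55, 35709224409646464, 143822412883050881, 143822006916301185,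
  143821457160487297, 61, 77, 93, 109, 125, 70851343239628928, 144104031648825729,
  144033662904648065, 143963294160470401, 143892925416292737, 143822556672115073, 27, 43, 49,
  35682836130579840, 51, 35691632223602048, 53, 35700428316624256, 143787091063554433, 61, 77,
  93, 109, 125, 70851343239628928, 144103477598044545, 144033108853866881, 143962740109689217,
  143892371365511553, 143822002621333889, 61, 77, 93, 109, 125, 70851343239628928,
  144102927842230657, 144032559098052993, 143962190353875329, 143891821609697665,
  143821452865520001, 23, 39, 49, 35682697617884032, 51, 35691493710906240, 53,
  35700289803928448, 143787091063554433, 27, 43, 49, 35682836130579840, 51, 35691632223602048,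
  53, 35700428316624256, 143787091063554433, 61, 77, 93, 109, 125, 70851343239628928,
  144103481893011841, 144033113148834177, 143962744404656513, 143892375660478849,
  143822006916301185, 61, 77, 93, 109, 125, 70851343239628928, 144102932137197953,
  144032563393020289, 143962194648842625, 143891825904664961, 143821457160487297, 29, 61, 45,
  49, 35682905386927744, 51, 35691701479949952, 53, 35700497572972160, 143787091063554433, 27,
  43, 35735612688713088, 143751633877156225, 143751084121342337, 143821313304314241,
  143680575815958913, 23, 39, 49, 35682697617884032, 51, 35691493710906240, 53,
  35700289803928448, 143787091063554433, 27, 43, 49, 35682836130579840, 51, 35691632223602048,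
  53, 35700428316624256, 143787091063554433, 61, 77, 93, 109, 125, 70851343239628928,
  144103481893011841, 144033113148834177, 143962744404656513, 143892375660478849,
  143822006916301185, 29, 45, 55, 35709293665994368, 143672879230370433, 143751088416309633,
  143680719672131969, 27, 59, 43, 49, 35682836130579840, 51, 35691632223602048, 53,
  35700428316624256, 143787091063554433, 29, 45, 35726885852038784, 143751633877156225,
  143681265132978561, 143812517207097985, 143671779718742657, 23, 39, 49, 35682697617884032, 53,
  35700289803928448, 57, 35717881989972864, 143804751432270465, 59, 75, 91, 107, 123,
  69716577979222144, 143613649462837633, 143613099707023745, 143612549951209857,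
  143612000195395969, 143611450439582081, 59, 75, 91, 107, 123, 69716577979222144,
  143613645167870337, 143613095412056449, 143612545656242561, 143611995900428673,
  143611446144614785, 23, 39, 49, 35682697617884032, 51, 35691493710906240, 57,
  35717881989972864, 143804682175922561, 61, 77, 93, 109, 125, 70851343239628928,
  144102382381384065, 144032013637206401, 143961644893028737, 143891276148851073,
  143820907404673409, 61, 77, 93, 109, 125, 70851343239628928, 144102378086416769,
  144032009342239105, 143961640598061441, 143891271853883777, 143820903109706113, 11, 27, 43,
  49, 35682836130579840, 51, 35691632223602048, 53, 35700428316624256, 143787088916070785, 61,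
  77, 93, 109, 125, 70851343239628928, 144103473303077249, 144033104558899585,
  143962735814721921, 143892367070544257, 143821998326366593, 61, 77, 93, 109, 125,
  70851343239628928, 144102923547263361, 144032554803085697, 143962186058908033,
  143891817314730369, 143821448570552705, 61, 77, 93, 109, 125, 70851343239628928,
  144102373791449473, 144032005047271809, 143961636303094145, 143891267558916481,
  143820898814738817]

theorem okB1_3 : run certB1_3 [(mask [0, 63, 17, 33], mask [127, 1, 3, 5, 9])] = true := by
  decide +kernel

def certB1_4 : List ℕ := [
  7, 11, 13, 15, 39, 43, 35656307191235456, 45, 35665103284290432, 61, 35735472028468096, 19,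
  23, 51, 35691493710939008, 143822282884792705, 143751633877156225, 143821183373164929, 59, 45,
  35665790479058304, 55, 35727225691227008, 61, 35736159223235968, 47, 75, 79, 107, 111,
  62960763000079232, 143822438577357185, 143753837195379073, 143822429987422593,
  143752737683751297, 143822421397488001, 21, 29, 45, 53, 35700497573037696, 143787372316803457,
  143752187927937409, 143681819183759745, 143646634828448129, 19, 23, 51, 61, 21,
  35735886492944768, 59, 83, 91, 115, 123, 69751762368087424, 143648827409252737,
  143648552531345793, 143647727897624961, 143647453019718017, 143646628385997185, 55, 83, 87,
  115, 119, 67499824041706368, 143824611830808961, 143824474391789953, 143823512319181185,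
  143823374880162177, 143822412807553409, 61, 85, 93, 117, 125, 70886527628494464,
  144103750345245057, 144068565973156225, 143963012856889729, 143927828484800897,
  143822275368534401, 59, 89, 91, 121, 123, 69778150659736960, 144093992179614337,
  144085196086591873, 143953254691259009, 143944458598236545, 143812517202903681, 61, 85, 93,
  117, 125, 70886527628494464, 144102650833617281, 144067466461528449, 143961913345261953,
  143926728973173121, 143821175856906625, 23, 55, 59, 15, 35727225691227008, 19, 39,
  35726678083027840, 27, 43, 35709224409679232, 143610900683768193, 143610350927954305, 21, 25,
  29, 35727229449554560, 143680438368551297, 143662846182572417, 143645253996462465, 21, 39, 53,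
  35700289803993984, 143813547458183809, 143611450439582081, 143812447946556033, 25, 27, 43, 57,
  35718020502799744, 143804820084638337, 143610904978735489, 143610355222921601,
  143664082596283009, 25, 27, 43, 57, 35718020502799744, 143803720573010561, 143610896388800897,
  143610346632987009, 143662983084655233, 23, 55, 29, 61, 39, 21, 35735474176082816, 15, 13,
  35736021784281984, 71, 87, 103, 119, 67447047458409344, 143609822646976897,
  143609818352009601, 143609814057042305, 143609809762075009, 19, 51, 35691493710939008,
  143646353508090241, 143645253996462465, 77, 93, 109, 125, 70851343239630464,
  144102382381384065, 144032013637206401, 143961644893028737, 143891276148851073, 19, 39, 51,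
  35691493710939008, 143822274294858113, 143820907404673409, 143821174783230337, 19, 39, 51,
  35691493710939008, 143681536806502785, 143680169916318081, 143680437294875009, 13, 25, 29, 45,
  57, 35718089759147648, 143804819547767169, 143750542955463041, 143680174211285377,
  143664082059411841, 143609805467107713, 13, 25, 29, 45, 57, 35718089759147648,
  143803720036139393, 143750534365528449, 143680165621350785, 143662982547784065,
  143609796877173121, 27, 59, 29, 61, 11, 43, 25, 35735612688844160, 15, 13, 35736159223235968,
  23, 55, 85, 87, 117, 119, 67508620138924928, 143666281619538561, 143666212900061825,
  143665182107910785, 143665113388434049, 143664082596283009, 143662983084655233, 19, 51,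
  35691632223634816, 143663945694200193, 143662846182572417, 77, 93, 109, 125,
  70851343239630464, 144103473303077249, 144033104558899585, 143962735814721921,
  143892367070544257, 77, 93, 109, 125, 70851343239630464, 144102373791449473,
  144032005047271809, 143961636303094145, 143891267558916481, 11, 19, 43, 51, 35691632223634816,
  143822273221050753, 143821998326366593, 143821173709422977, 143820898814738817, 11, 19, 43,
  51, 35691632223634816, 143681535732695425, 143681260838011265, 143680436221067649,
  143680161326383489, 13, 21, 29, 45, 53, 35700497573037696, 143787363726868865,
  143752179338002817, 143681810593825153, 143646626238513537, 143611441849647489, 13, 21, 29,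
  45, 53, 35700497573037696, 143786264215241089, 143751079826375041, 143680711082197377,
  143645526726885761, 143610342338019713]

theorem okB1_4 : run certB1_4 [(mask [0, 63, 33], mask [127, 1, 3, 5, 9, 17])] = true := by
  decide +kernel

def certB1_5 : List ℕ := [
  7, 11, 13, 15, 19, 23, 27, 35585388661883776, 59, 35726126150239104, 61, 21,
  35734922247488384, 37, 39, 35735472036856704, 143645535316820353, 143812999883539073, 35, 39,
  43, 35656307195429760, 143822003745603969, 143821457160487297, 143821728867565953, 59, 55,
  35727225661866880, 61, 25, 35736159206458752, 41, 35736159240013184, 143795546210190465, 35,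
  39, 35726675939607424, 143821865232908673, 143821727793758593, 37, 39, 45, 35665103292679040,
  143752183632970113, 143813069139886721, 143716999311212929, 39, 43, 35, 35656307195429760, 53,
  57, 61, 113, 117, 121, 125, 70904944507378304, 144103201696924033, 144085609510879617,
  144068017324835201, 144050425138790785, 143821726720213377, 143804134534168961,
  143786542348124545, 49, 61, 89, 93, 121, 125, 70904119823189632, 144102658349875585,
  144085066163831169, 143961920861520257, 143944328675475841, 143821183373164929,
  143769225039987073, 49, 61, 85, 93, 117, 125, 70886527628756608, 144102657276068225,
  144067472903979393, 143961919787712897, 143926735415624065, 143821182299357569,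
  143769087601033601, 51, 55, 59, 31, 35727230023943040, 47, 35727234318910336, 53, 57, 61,
  35736170011646336, 143822142258299265, 143804550072254849, 143786957886210433, 21, 23, 37, 39,
  53, 35700289812382592, 143787365874352513, 143813066992272001, 143716997163729281,
  143812517202903681, 143646628385997185, 25, 27, 41, 43, 57, 35718020519576960,
  143804820621508993, 143743248003908225, 143734451910885761, 143672879226176129,
  143664083133153665, 21, 29, 37, 45, 53, 35700497581426304, 143787090996445569,
  143751906657911169, 143716722285822337, 143681537880179073, 143646353508090241, 53, 23, 39,
  21, 37, 35700289812382592, 57, 59, 105, 107, 121, 123, 69778700449498496, 144094472712635009,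
  144085676619612801, 144024103968457345, 144015307875435137, 143812997735924353,
  143804201642902145, 57, 59, 89, 91, 121, 123, 69778150660130176, 144093922923266689,
  144085126830244481, 143953185434911361, 143944389341889153, 143812447946556033,
  143803651853533825, 57, 59, 105, 107, 121, 123, 69778700449498496, 143613649462837633,
  144085745339089537, 143613099707023745, 144015376594911873, 143611450439582081,
  143804270362378881, 57, 59, 89, 91, 121, 123, 69778150660130176, 143613645167870337,
  144085195549721217, 143612545656242561, 143944458061365889, 143611446144614785,
  143803720573010561, 25, 27, 41, 43, 57, 35718020519576960, 143804751365161601,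
  143743178747560577, 143734382654538369, 143672809969828481, 143664013876806273, 23, 39, 51,
  19, 35, 35691493715133312, 45, 57, 61, 105, 109, 121, 125, 70904669612693120,
  144103199549309313, 144085607363264897, 144032830805131649, 144015238619087233,
  143821724572598657, 143804132386554241, 143751355828420993, 29, 57, 61, 89, 93, 121, 125,
  70904119823322752, 144102649759940993, 144085057573896577, 143961912271585665,
  143944320085541249, 143821174783230337, 143803582597185921, 143680437294875009, 25, 45, 61,
  105, 109, 121, 125, 70852305371221120, 144103749271568769, 144086157085524353,
  144033380560945537, 144015788374901121, 143822274294858113, 143751905584234881,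
  143663944620458369, 13, 57, 61, 105, 109, 121, 125, 70904669612689024, 144102382381384065,
  144085744802218369, 144032013637206401, 144015376058040705, 143820907404673409,
  143804269825507713, 143609801172140417, 13, 57, 61, 89, 93, 121, 125, 70904119823320704,
  144102378086416769, 144085195012850049, 143961640598061441, 143944457524494721,
  143820903109706113, 143803720036139393, 143609796877173121, 59, 61, 27, 43, 51, 29, 45, 53,
  31, 32, 35736163516370304, 40, 35736163533147520, 41, 35736163535244672, 48,
  35736163549924736, 49, 35736163552021888, 56, 35736163566701952, 143800223461413024, 47, 16,
  35736167778047360, 24, 35736167794824576, 48, 35736167845156224, 49, 35736167847253376, 56,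
  35736167861933440, 143800220776794256, 55, 57, 35736170011646336, 143804550072254849,
  143795753979233409, 19, 99, 107, 115, 123, 69717402663438720, 143789562750124417,
  143789287872217473, 143789013027864961, 143788738149958017, 143785989337334145, 11, 99, 107,
  115, 123, 69752312157750656, 143754378361258369, 143754103533683073, 143753828605444481,
  143753553777869185, 143750530070561153, 11, 83, 91, 115, 123, 69751762368382336,
  143684009617080705, 143683734755950977, 143682910105452929, 143682635244323201,
  143680161326383489, 21, 45, 101, 109, 117, 125, 70852167923878528, 144103748197761409,
  144068563825672577, 144033379487138177, 143998195115049345, 143751904510427521,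
  143646351360606593, 13, 53, 101, 109, 117, 125, 70887077418190464, 144103473303077249,
  144068288981320065, 144033104558899585, 143997920237142401, 143786814004609409,
  143610892093833601, 13, 53, 85, 93, 117, 125, 70886527628822144, 144102923547263361,
  144067739191951745, 143962186058908033, 143927001703596417, 143786264215241089,
  143610342338019713, 11, 19, 27, 35, 43, 51, 35691632227829120, 143822273221050753,
  143821998326366593, 143821723498791297, 143821448570552705, 143821173709422977,
  143820898814738817, 13, 21, 29, 37, 45, 53, 35700497581426304, 143787363726868865,
  143752179338002817, 143716995016245633, 143681810593825153, 143646626238513537,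
  143611441849647489]

theorem okB1_5 : run certB1_5 [(mask [0, 63], mask [127, 1, 3, 5, 9, 17, 33])] = true := by
  decide +kernel

def certB2_0 : List ℕ := [
  3, 13, 6, 35492682834935936, 14, 35527867207024768, 22, 35563051579113600, 30,
  35598235951202432, 38, 35633420323291264, 46, 35668604695380096, 54, 35703789067468928,
  143791321315116806, 21, 6, 35492957712842880, 14, 35528142084931712, 22, 35563326457020544,
  30, 35598510829109376, 38, 35633695201198208, 46, 35668879573287040, 54, 35704063945375872,
  143791321315116806, 29, 6, 35493232590749824, 14, 35528416962838656, 22, 35563601334927488,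
  30, 35598785707016320, 38, 35633970079105152, 46, 35669154451193984, 54, 35704338823282816,
  143791321315116806, 37, 6, 35493507468656768, 14, 35528691840745600, 22, 35563876212834432,
  30, 35599060584923264, 38, 35634244957012096, 46, 35669429329100928, 54, 35704613701189760,
  143791321315116806, 45, 6, 35493782346563712, 14, 35528966718652544, 22, 35564151090741376,
  30, 35599335462830208, 38, 35634519834919040, 46, 35669704207007872, 54, 35704888579096704,
  143791321315116806, 5, 6, 35492407957028992, 14, 35527592329117824, 22, 35562776701206656, 30,
  35597961073295488, 38, 35633145445384320, 46, 35668329817473152, 54, 35703514189561984,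
  143791321315116806, 53, 6, 35494057224470656, 14, 35529241596559488, 22, 35564425968648320,
  30, 35599610340737152, 38, 35634794712825984, 46, 35669979084914816, 54, 35705163457003648,
  143791321315116806, 143786888638318213, 5, 11, 6, 35492410104512640, 14, 35527594476601472,
  22, 35562778848690304, 30, 35597963220779136, 38, 35633147592867968, 46, 35668331964956800,
  54, 35703516337045632, 143791321315116806, 19, 6, 35492412251996288, 14, 35527596624085120,
  22, 35562780996173952, 30, 35597965368262784, 38, 35633149740351616, 46, 35668334112440448,
  54, 35703518484529280, 143791321315116806, 27, 6, 35492414399479936, 14, 35527598771568768,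
  22, 35562783143657600, 30, 35597967515746432, 38, 35633151887835264, 46, 35668336259924096,
  54, 35703520632012928, 143791321315116806, 35, 6, 35492416546963584, 14, 35527600919052416,
  22, 35562785291141248, 30, 35597969663230080, 38, 35633154035318912, 46, 35668338407407744,
  54, 35703522779496576, 143791321315116806, 43, 6, 35492418694447232, 14, 35527603066536064,
  22, 35562787438624896, 30, 35597971810713728, 38, 35633156182802560, 46, 35668340554891392,
  54, 35703524926980224, 143791321315116806, 51, 6, 35492420841930880, 14, 35527605214019712,
  22, 35562789586108544, 30, 35597973958197376, 38, 35633158330286208, 46, 35668342702375040,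
  54, 35703527074463872, 143791321315116806, 143778023284721027, 6, 26, 12, 35519518604329216,
  13, 35523916650840320, 28, 35589887348506880, 29, 35594285395017984, 44, 35660256092684544,
  45, 35664654139195648, 60, 35730624836862208, 143817674978690700, 42, 12, 35520068360143104,
  13, 35524466406654208, 28, 35590437104320768, 29, 35594835150831872, 44, 35660805848498432,
  45, 35665203895009536, 60, 35731174592676096, 143817674978690700, 58, 13, 35525016162468096,
  21, 35560200551334144, 29, 35595384906645760, 37, 35630569329066240, 45, 35665753650823424,
  53, 35700938039689472, 143786888638318213, 74, 12, 53535566381252864, 13, 53539964427763968,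
  28, 53605935125430528, 29, 53610333171941632, 44, 62683503124349184, 45, 62687901170860288,
  60, 71198121169846528, 143817674978690700, 90, 13, 53540514183577856, 21, 53575698572443904,
  29, 53610882927755520, 69, 53786804905640192, 77, 53821989160288512, 85, 53857173549154560,
  143928725705410181, 10, 12, 35518968848515328, 13, 35523366895026432, 28, 35589337592692992,
  29, 35593735639204096, 44, 35659706336870656, 45, 35664104383381760, 60, 35730075081048320,
  143817674978690700, 107, 110, 7, 62974908333883520, 13, 62514308516446336, 15,
  62974910531698816, 37, 62515133150167168, 39, 62974916923818112, 45, 62515408028074112,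
  143751494349570949, 144039131340246282, 144025937200712970, 7, 25, 10, 35510688419971200, 14,
  35528280606015616, 26, 35581057164148864, 30, 35598649350193280, 42, 35651425908326528, 46,
  35669018094370944, 58, 35721794652504192, 143808913509615370, 27, 12, 35519553232502912, 13,
  35523951279014144, 28, 35589921976680576, 29, 35594320023191808, 44, 35660290720858240, 45,
  35664688767369472, 60, 35730659465035904, 143817674978690700, 41, 10, 35511238175785088, 14,
  35528830361829504, 26, 35581606919962752, 30, 35599199106007168, 42, 35651975664140416, 46,
  35669567850184832, 58, 35722344408318080, 143808913509615370, 43, 12, 35520102988316800, 13,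
  35524501034828032, 28, 35590471732494464, 29, 35594869779005696, 44, 35660840476672128, 45,
  35665238523183360, 60, 35731209220849792, 143817674978690700, 73, 10, 53526736196894848, 14,
  53544328382939264, 26, 53597104941072512, 30, 53614697127116928, 74, 53808211173605504, 78,
  53825803359649920, 90, 53878579917783168, 143950750576707338, 75, 12, 53535601009426560, 13,
  53539999055937792, 28, 53605969753604224, 29, 53610367800115456, 76, 53817075986137216, 77,
  53821474032648448, 92, 53887444730314880, 143959512045782668, 26, 9, 35580507408334976, 13,
  35580644847288448, 29, 35581194603102336, 45, 35581744358916224, 57, 35582156675776640,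
  143804480832816777, 42, 9, 35650876152512640, 13, 35651013591466112, 29, 35651563347280000,
  45, 35652113103093888, 57, 35652525419954304, 143804480832816777, 11, 12, 35519003476689024,
  13, 35523401523200256, 28, 35589372220866688, 29, 35593770267377920, 44, 35659740965044352,
  45, 35664139011555584, 60, 35730109709222016, 143817674978690700, 9, 10, 35510138664157312,
  58, 35721244896690304, 143808809625093514, 57, 93, 109, 70623203072147968, 144034213869012361,
  143963840829605257, 143804411576468873, 9, 19, 10, 35510141885382784, 14, 35527734071427200,
  26, 35580510629560448, 30, 35598102815604864, 42, 35650879373738112, 46, 35668471559782528,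
  58, 35721248117915776, 143808913509615370, 23, 10, 35510142959124608, 14, 35527735145169024,
  26, 35580511703302272, 30, 35598103889346688, 42, 35650880447479936, 46, 35668472633524352,
  58, 35721249191657600, 143808913509615370, 35, 10, 35510146180350080, 14, 35527738366394496,
  26, 35580514924527744, 30, 35598107110572160, 42, 35650883668705408, 46, 35668475854749824,
  58, 35721252412883072, 143808913509615370, 39, 10, 35510147254091904, 14, 35527739440136320,
  26, 35580515998269568, 30, 35598108184313984, 42, 35650884742447232, 46, 35668476928491648,
  58, 35721253486624896, 143808913509615370, 51, 10, 35510150475317376, 14, 35527742661361792,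
  26, 35580519219495040, 30, 35598111405539456, 42, 35650887963672704, 46, 35668480149717120,
  58, 35721256707850368, 143808913509615370, 143777884772025219, 10, 22, 12, 35518973143482624,
  13, 35523371189993728, 28, 35589341887660288, 29, 35593739934171392, 44, 35659710631837952,
  45, 35664108678349056, 60, 35730079376015616, 143817674978690700, 38, 12, 35518977438449920,
  13, 35523375484961024, 28, 35589346182627584, 29, 35593744229138688, 44, 35659714926805248,
  45, 35664112973316352, 60, 35730083670982912, 143817674978690700, 54, 13, 35523379779928320,
  25, 35577656372232448, 29, 35593748524105984, 41, 35648025149964544, 45, 35664117268283648,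
  57, 35718393860587776, 143804480832816777, 23, 13, 35510280398078080, 25, 35510692714938496,
  29, 35510830153891968, 41, 35511242470752384, 45, 35511379909705856, 57, 35511792226566272,
  143804480832816777, 39, 13, 35510284693045376, 25, 35510697009905792, 29, 35510834448859264,
  41, 35511246765719680, 45, 35511384204673152, 57, 35511796521533568, 143804480832816777,
  143791078917899142, 11, 23, 12, 35519007771656320, 13, 35523405818167552, 28,
  35589376515833984, 29, 35593774562345216, 44, 35659745260011648, 45, 35664143306522880, 60,
  35730114004189312, 143817674978690700, 39, 12, 35519012066623616, 13, 35523410113134848, 28,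
  35589380810801280, 29, 35593778857312512, 44, 35659749554978944, 45, 35664147601490176, 60,
  35730118299156608, 143817674978690700, 51, 24, 35573155514941568, 25, 35577553561452800, 28,
  35590747700985984, 29, 35595145747497216, 56, 35713893003296896, 57, 35718291049808128, 60,
  35731485189341312, 143818087320718488, 19, 24, 35572056003313792, 25, 35576454049825024, 28,
  35589648189358208, 29, 35594046235869440, 56, 35712793491669120, 57, 35717191538180352, 60,
  35730385677713536, 143818087320718488, 35, 40, 35642974536859776, 41, 35647372583371008, 44,
  35660566722904192, 45, 35664964769415424, 56, 35713343281037440, 57, 35717741327548672, 60,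
  35730935467081856, 143818091615949992, 143777884772025219, 12, 21, 25, 35519488271122560, 27,
  35519556990599296, 41, 35520038026936448, 43, 35520106746413184, 57, 35520587782750336,
  143804411576468873, 37, 25, 35519492566089856, 27, 35519561285566592, 41, 35520042321903744,
  43, 35520111041380480, 57, 35520592077717632, 143804411576468873, 53, 25, 35519496861057152,
  27, 35519565580533888, 41, 35520046616871040, 43, 35520115336347776, 57, 35520596372684928,
  143804411576468873, 23, 25, 35519488807993472, 27, 35519557527470208, 41, 35520038563807360,
  43, 35520107283284096, 57, 35520588319621248, 143804411576468873, 39, 25, 35519493102960768,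
  27, 35519561822437504, 41, 35520042858774656, 43, 35520111578251392, 57, 35520592614588544,
  143804411576468873, 143786680869274501, 13, 97, 36, 62649110955622528, 38, 62657907048644736,
  44, 62684295327711360, 46, 62693091420733568, 100, 62930585932333184, 102, 62939382025355392,
  108, 62965770304422016, 144030744397419300, 101, 41, 62671238627197440, 43, 62680034720219648,
  73, 62811976182661632, 75, 62820772275683840, 105, 62952713603908096, 144016621682967945, 19,
  14, 35527871501992064, 22, 35563055874080896, 30, 35598240246169728, 38, 35633424618258560,
  46, 35668608990347392, 54, 35703793362436224, 143791321315116806, 23, 26, 35580649142255744,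
  27, 35523955573981440, 42, 35651017886433408, 43, 35524505329795328, 58, 35721386630611072,
  143808809625093514, 27, 22, 35563058021564544, 38, 35633426765742208, 39, 35523959868948736,
  54, 35703795509919872, 143791078917899142, 47, 79, 96, 62912384465371264, 98,
  62921180558393472, 99, 62925578604904960, 100, 62929976651415680, 102, 62938772744437888,
  144004335986585824, 143671796898644867, 143671788308710275, 14, 98, 37, 62653543630307584, 45,
  62688728002396416, 69, 62794281185771776, 77, 62829465557860608, 101, 62935018607018240,
  143999098744817285, 102, 41, 62671273255371008, 43, 62680069348393472, 73, 62812010810835200,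
  75, 62820806903857664, 105, 62952748232081664, 144016621682967945, 19, 21, 35528146379899008,
  29, 35528421257805952, 37, 35528696135712896, 45, 35528971013619840, 53, 35529245891526784,
  143786888638318213, 23, 25, 35528284900982912, 27, 35528353620492416, 41, 35528834656796800,
  43, 35528903376306304, 57, 35529384412610688, 143804411576468873, 27, 21, 35528148527382656,
  37, 35528698283196544, 39, 35528357915459712, 53, 35529248039010432, 143786680869274501, 47,
  79, 96, 62912384465371264, 97, 62916782511882496, 99, 62925578604904960, 100,
  62929976651415680, 101, 62934374697926912, 144004335986585824, 143671796898644867,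
  143671788308710275, 15, 19, 20, 35554464890945664, 21, 35558862937456896, 28,
  35589649263034496, 29, 35594047309545728, 52, 35695202379300992, 53, 35699600425812224, 60,
  35730386751389824, 143817949873375892, 35, 36, 35625383424491648, 37, 35629781471002880, 44,
  35660567796580480, 45, 35664965843091712, 52, 35695752168669312, 53, 35700150215180544, 60,
  35730936540758144, 143817954168607396, 51, 21, 35559962449084672, 29, 35595146821173504, 37,
  35630331226816768, 45, 35665515598905600, 53, 35700699937440000, 143786888638318213, 23, 24,
  35572194516009088, 25, 35576592562520320, 26, 35580990609031296, 27, 35585388655542784, 28,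
  35589786702053504, 29, 35594184748564736, 30, 35598582795075712, 143685183257087128, 39, 47,
  103, 59, 35726675933266432, 79, 62943170790949888, 143812534387000195, 143780083795280771,
  143778159649932163, 143777884772025219, 19, 39, 28, 35589655705485440, 29, 35594053751996672,
  30, 35598451798507648, 143685180035663500, 37, 38, 35634249251979392, 46, 35669433624068224,
  143755892398195590, 61, 35, 35735335661207808, 43, 35734792314159360, 143742698252321667,
  143821863093748613, 23, 27, 28, 35589926271647872, 29, 35594324318159104, 30,
  35598722364670080, 143685180035663500, 55, 87, 96, 67416261118132352, 97, 67420659164643584,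
  98, 67425057211154560, 99, 67429455257666048, 100, 67433853304176768, 101, 67438251350688000,
  102, 67442649397198976, 144004335986585824, 143673978742031235, 143672879230403459, 59, 91,
  96, 69668199444512896, 97, 69672597491024128, 98, 69676995537535104, 99, 69681393584047104,
  104, 69703383816601728, 105, 69707781863112960, 106, 69712179909623936, 144022065619972320,
  143953254695486339, 143812517207131011]

theorem okB2_0 : run certB2_0 [(mask [0, 1, 2, 4, 8, 16, 32, 64, 126, 125, 123, 119, 111, 95, 63], mask [127])] = true := by
  decide +kernel

def certB2_1 : List ℕ := [
  3, 13, 6, 35492682834935936, 14, 35527867207024768, 22, 35563051579113600, 30,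
  35598235951202432, 38, 35633420323291264, 46, 35668604695380096, 54, 35703789067468928,
  143791321315116806, 21, 6, 35492957712842880, 14, 35528142084931712, 22, 35563326457020544,
  30, 35598510829109376, 38, 35633695201198208, 46, 35668879573287040, 54, 35704063945375872,
  143791321315116806, 29, 6, 35493232590749824, 14, 35528416962838656, 22, 35563601334927488,
  30, 35598785707016320, 38, 35633970079105152, 46, 35669154451193984, 54, 35704338823282816,
  143791321315116806, 37, 6, 35493507468656768, 14, 35528691840745600, 22, 35563876212834432,
  30, 35599060584923264, 38, 35634244957012096, 46, 35669429329100928, 54, 35704613701189760,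
  143791321315116806, 45, 6, 35493782346563712, 14, 35528966718652544, 22, 35564151090741376,
  30, 35599335462830208, 38, 35634519834919040, 46, 35669704207007872, 54, 35704888579096704,
  143791321315116806, 5, 6, 35492407957028992, 14, 35527592329117824, 22, 35562776701206656, 30,
  35597961073295488, 38, 35633145445384320, 46, 35668329817473152, 54, 35703514189561984,
  143791321315116806, 53, 6, 35494057224470656, 14, 35529241596559488, 22, 35564425968648320,
  30, 35599610340737152, 38, 35634794712825984, 46, 35669979084914816, 54, 35705163457003648,
  143791321315116806, 143786888638318213, 5, 11, 6, 35492410104512640, 14, 35527594476601472,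
  22, 35562778848690304, 30, 35597963220779136, 38, 35633147592867968, 46, 35668331964956800,
  54, 35703516337045632, 143791321315116806, 19, 6, 35492412251996288, 14, 35527596624085120,
  22, 35562780996173952, 30, 35597965368262784, 38, 35633149740351616, 46, 35668334112440448,
  54, 35703518484529280, 143791321315116806, 27, 6, 35492414399479936, 14, 35527598771568768,
  22, 35562783143657600, 30, 35597967515746432, 38, 35633151887835264, 46, 35668336259924096,
  54, 35703520632012928, 143791321315116806, 35, 6, 35492416546963584, 14, 35527600919052416,
  22, 35562785291141248, 30, 35597969663230080, 38, 35633154035318912, 46, 35668338407407744,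
  54, 35703522779496576, 143791321315116806, 43, 6, 35492418694447232, 14, 35527603066536064,
  22, 35562787438624896, 30, 35597971810713728, 38, 35633156182802560, 46, 35668340554891392,
  54, 35703524926980224, 143791321315116806, 51, 6, 35492420841930880, 14, 35527605214019712,
  22, 35562789586108544, 30, 35597973958197376, 38, 35633158330286208, 46, 35668342702375040,
  54, 35703527074463872, 143791321315116806, 143778023284721027, 6, 11, 13, 35492684982419584,
  21, 35492959860326528, 29, 35493234738233472, 37, 35493509616140416, 45, 35493784494047360,
  53, 35494059371954304, 143786888638318213, 19, 13, 35492687129903232, 21, 35492962007810176,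
  29, 35493236885717120, 37, 35493511763624064, 45, 35493786641531008, 53, 35494061519437952,
  143786888638318213, 27, 13, 35492689277386880, 21, 35492964155293824, 29, 35493239033200768,
  37, 35493513911107712, 45, 35493788789014656, 53, 35494063666921600, 143786888638318213, 35,
  13, 35492691424870528, 21, 35492966302777472, 29, 35493241180684416, 37, 35493516058591360,
  45, 35493790936498304, 53, 35494065814405248, 143786888638318213, 43, 13, 35492693572354176,
  21, 35492968450261120, 29, 35493243328168064, 37, 35493518206075008, 45, 35493793083981952,
  53, 35494067961888896, 143786888638318213, 51, 13, 35492695719837824, 21, 35492970597744768,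
  29, 35493245475651712, 37, 35493520353558656, 45, 35493795231465600, 53, 35494070109372544,
  143786888638318213, 143778023284721027, 7, 25, 10, 35510688419971200, 14, 35528280606015616,
  26, 35581057164148864, 30, 35598649350193280, 42, 35651425908326528, 46, 35669018094370944,
  58, 35721794652504192, 143808913509615370, 27, 12, 35519553232502912, 13, 35523951279014144,
  28, 35589921976680576, 29, 35594320023191808, 44, 35660290720858240, 45, 35664688767369472,
  144107946048423564, 41, 10, 35511238175785088, 14, 35528830361829504, 26, 35581606919962752,
  30, 35599199106007168, 42, 35651975664140416, 46, 35669567850184832, 58, 35722344408318080,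
  143808913509615370, 43, 12, 35520102988316800, 13, 35524501034828032, 28, 35590471732494464,
  29, 35594869779005696, 44, 35660840476672128, 45, 35665238523183360, 144107946048423564, 26,
  9, 35580507408334976, 13, 35580644847288448, 29, 35581194603102336, 45, 35581744358916224, 57,
  35582156675776640, 143804480832816777, 42, 9, 35650876152512640, 13, 35651013591466112, 29,
  35651563347280000, 45, 35652113103093888, 57, 35652525419954304, 143804480832816777, 11, 12,
  35519003476689024, 13, 35523401523200256, 28, 35589372220866688, 29, 35593770267377920, 44,
  35659740965044352, 45, 35664139011555584, 144107946048423564, 10, 9, 35510138664157312, 57,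
  35511787931598976, 143804411576468873, 144107876787848586, 9, 19, 10, 35510141885382784, 14,
  35527734071427200, 26, 35580510629560448, 30, 35598102815604864, 42, 35650879373738112, 46,
  35668471559782528, 58, 35721248117915776, 143808913509615370, 23, 10, 35510142959124608, 14,
  35527735145169024, 26, 35580511703302272, 30, 35598103889346688, 42, 35650880447479936, 46,
  35668472633524352, 58, 35721249191657600, 143808913509615370, 35, 10, 35510146180350080, 14,
  35527738366394496, 26, 35580514924527744, 30, 35598107110572160, 42, 35650883668705408, 46,
  35668475854749824, 58, 35721252412883072, 143808913509615370, 39, 10, 35510147254091904, 14,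
  35527739440136320, 26, 35580515998269568, 30, 35598108184313984, 42, 35650884742447232, 46,
  35668476928491648, 58, 35721253486624896, 143808913509615370, 51, 10, 35510150475317376, 14,
  35527742661361792, 26, 35580519219495040, 30, 35598111405539456, 42, 35650887963672704, 46,
  35668480149717120, 58, 35721256707850368, 143808913509615370, 143777884772025219, 10, 19, 13,
  35510279324336256, 25, 35510691641196672, 29, 35510829080150144, 41, 35511241397010560, 45,
  35511378835964032, 57, 35511791152824448, 143804480832816777, 23, 13, 35510280398078080, 25,
  35510692714938496, 29, 35510830153891968, 41, 35511242470752384, 45, 35511379909705856, 57,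
  35511792226566272, 143804480832816777, 35, 13, 35510283619303552, 25, 35510695936163968, 29,
  35510833375117440, 41, 35511245691977856, 45, 35511383130931328, 57, 35511795447791744,
  143804480832816777, 39, 13, 35510284693045376, 25, 35510697009905792, 29, 35510834448859264,
  41, 35511246765719680, 45, 35511384204673152, 57, 35511796521533568, 143804480832816777, 51,
  13, 35510287914270848, 25, 35510700231131264, 29, 35510837670084736, 41, 35511249986945152,
  45, 35511387425898624, 57, 35511799742759040, 143804480832816777, 143777884772025219, 11, 23,
  12, 35519007771656320, 13, 35523405818167552, 28, 35589376515833984, 29, 35593774562345216,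
  44, 35659745260011648, 45, 35664143306522880, 144107946048423564, 39, 12, 35519012066623616,
  13, 35523410113134848, 28, 35589380810801280, 29, 35593778857312512, 44, 35659749554978944,
  45, 35664147601490176, 144107946048423564, 22, 21, 35563328604504192, 37, 35563878360318080,
  53, 35564428116131968, 143786680869274501, 38, 21, 35633697348681856, 37, 35634247104495744,
  53, 35634796860309632, 143786680869274501, 144107738266698630, 12, 21, 25, 35519488271122560,
  27, 35519556990599296, 41, 35520038026936448, 43, 35520106746413184, 57, 35520587782750336,
  143804411576468873, 37, 25, 35519492566089856, 27, 35519561285566592, 41, 35520042321903744,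
  43, 35520111041380480, 57, 35520592077717632, 143804411576468873, 53, 25, 35519496861057152,
  27, 35519565580533888, 41, 35520046616871040, 43, 35520115336347776, 57, 35520596372684928,
  143804411576468873, 23, 25, 35519488807993472, 27, 35519557527470208, 41, 35520038563807360,
  43, 35520107283284096, 57, 35520588319621248, 143804411576468873, 39, 25, 35519493102960768,
  27, 35519561822437504, 41, 35520042858774656, 43, 35520111578251392, 57, 35520592614588544,
  143804411576468873, 143786680869274501, 13, 97, 36, 62649110955622528, 38, 62657907048644736,
  44, 62684295327711360, 46, 62693091420733568, 100, 62930585932333184, 102, 62939382025355392,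
  108, 62965770304422016, 144030744397419300, 101, 41, 62671238627197440, 43, 62680034720219648,
  73, 62811976182661632, 75, 62820772275683840, 105, 62952713603908096, 144016621682967945, 19,
  14, 35527871501992064, 22, 35563055874080896, 30, 35598240246169728, 38, 35633424618258560,
  46, 35668608990347392, 54, 35703793362436224, 143791321315116806, 23, 26, 35580649142255744,
  27, 35523955573981440, 42, 35651017886433408, 43, 35524505329795328, 144107876787848586, 27,
  22, 35563058021564544, 38, 35633426765742208, 39, 35523959868948736, 144107738266698630, 47,
  79, 96, 62912384465371264, 98, 62921180558393472, 99, 62925578604904960, 100,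
  62929976651415680, 144109889102852320, 143671796898644867, 143671788308710275, 14, 19, 21,
  35528146379899008, 29, 35528421257805952, 37, 35528696135712896, 45, 35528971013619840, 53,
  35529245891526784, 143786888638318213, 23, 25, 35528284900982912, 27, 35528353620492416, 41,
  35528834656796800, 43, 35528903376306304, 57, 35529384412610688, 143804411576468873, 27, 21,
  35528148527382656, 37, 35528698283196544, 39, 35528357915459712, 53, 35529248039010432,
  143786680869274501, 47, 79, 96, 62912384465371264, 97, 62916782511882496, 98,
  62921180558393472, 99, 62925578604904960, 100, 62929976651415680, 101, 62934374697926912,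
  144109889102852320, 143671796898644867, 143671788308710275, 15, 19, 60, 35730386751389824, 61,
  35734784797901056, 92, 53885522749227136, 93, 53889920795738368, 144109604006987404, 35, 60,
  35730936540758144, 61, 35735334587269376, 108, 62963640537514112, 109, 62968038584025344,
  144110153796355724, 51, 21, 35559962449084672, 29, 35595146821173504, 37, 35630331226816768,
  45, 35665515598905600, 53, 35700699937440000, 143786888638318213, 23, 58, 35721728097386624,
  59, 35726126143898112, 90, 53876864095223936, 91, 53881262141735424, 144109534746412426, 39,
  47, 103, 59, 35726675933266432, 79, 62943170790949888, 143812534387000195, 143780083795280771,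
  143778159649932163, 143777884772025219, 22, 103, 17, 67088413278371968, 19, 67088481997881472,
  49, 67089512789999744, 51, 67089581509509248, 81, 67090612301627520, 83, 67090681021137024,
  113, 67091711813255296, 144052083097356689, 38, 70, 99, 62925266951340544, 107,
  62960451323429376, 144026372386505603, 144109935209448326, 144109935142339462, 55, 87, 102,
  67442649397198976, 103, 67447047443712000, 144109935276557190, 144109385352971142,
  144108285841343366]

theorem okB2_1 : run certB2_1 [(mask [0, 1, 2, 4, 8, 16, 32, 64, 125, 123, 119, 111, 95, 63], mask [127, 126])] = true := by
  decide +kernel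

def certB2_2 : List ℕ := [
  3, 13, 6, 35492682834935936, 14, 35527867207024768, 22, 35563051579113600, 30,
  35598235951202432, 38, 35633420323291264, 46, 35668604695380096, 54, 35703789067468928,
  143791321315116806, 21, 6, 35492957712842880, 14, 35528142084931712, 22, 35563326457020544,
  30, 35598510829109376, 38, 35633695201198208, 46, 35668879573287040, 54, 35704063945375872,
  143791321315116806, 29, 6, 35493232590749824, 14, 35528416962838656, 22, 35563601334927488,
  30, 35598785707016320, 38, 35633970079105152, 46, 35669154451193984, 54, 35704338823282816,
  143791321315116806, 37, 6, 35493507468656768, 14, 35528691840745600, 22, 35563876212834432,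
  30, 35599060584923264, 38, 35634244957012096, 46, 35669429329100928, 54, 35704613701189760,
  143791321315116806, 45, 6, 35493782346563712, 14, 35528966718652544, 22, 35564151090741376,
  30, 35599335462830208, 38, 35634519834919040, 46, 35669704207007872, 54, 35704888579096704,
  143791321315116806, 5, 6, 35492407957028992, 14, 35527592329117824, 22, 35562776701206656, 30,
  35597961073295488, 38, 35633145445384320, 46, 35668329817473152, 54, 35703514189561984,
  143791321315116806, 53, 6, 35494057224470656, 14, 35529241596559488, 22, 35564425968648320,
  30, 35599610340737152, 38, 35634794712825984, 46, 35669979084914816, 54, 35705163457003648,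
  143791321315116806, 143786888638318213, 5, 11, 6, 35492410104512640, 14, 35527594476601472,
  22, 35562778848690304, 30, 35597963220779136, 38, 35633147592867968, 46, 35668331964956800,
  54, 35703516337045632, 143791321315116806, 19, 6, 35492412251996288, 14, 35527596624085120,
  22, 35562780996173952, 30, 35597965368262784, 38, 35633149740351616, 46, 35668334112440448,
  54, 35703518484529280, 143791321315116806, 27, 6, 35492414399479936, 14, 35527598771568768,
  22, 35562783143657600, 30, 35597967515746432, 38, 35633151887835264, 46, 35668336259924096,
  54, 35703520632012928, 143791321315116806, 35, 6, 35492416546963584, 14, 35527600919052416,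
  22, 35562785291141248, 30, 35597969663230080, 38, 35633154035318912, 46, 35668338407407744,
  54, 35703522779496576, 143791321315116806, 43, 6, 35492418694447232, 14, 35527603066536064,
  22, 35562787438624896, 30, 35597971810713728, 38, 35633156182802560, 46, 35668340554891392,
  54, 35703524926980224, 143791321315116806, 51, 6, 35492420841930880, 14, 35527605214019712,
  22, 35562789586108544, 30, 35597973958197376, 38, 35633158330286208, 46, 35668342702375040,
  54, 35703527074463872, 143791321315116806, 143778023284721027, 6, 11, 13, 35492684982419584,
  21, 35492959860326528, 29, 35493234738233472, 37, 35493509616140416, 45, 35493784494047360,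
  53, 35494059371954304, 143786888638318213, 19, 13, 35492687129903232, 21, 35492962007810176,
  29, 35493236885717120, 37, 35493511763624064, 45, 35493786641531008, 53, 35494061519437952,
  143786888638318213, 27, 13, 35492689277386880, 21, 35492964155293824, 29, 35493239033200768,
  37, 35493513911107712, 45, 35493788789014656, 53, 35494063666921600, 143786888638318213, 35,
  13, 35492691424870528, 21, 35492966302777472, 29, 35493241180684416, 37, 35493516058591360,
  45, 35493790936498304, 53, 35494065814405248, 143786888638318213, 43, 13, 35492693572354176,
  21, 35492968450261120, 29, 35493243328168064, 37, 35493518206075008, 45, 35493793083981952,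
  53, 35494067961888896, 143786888638318213, 51, 13, 35492695719837824, 21, 35492970597744768,
  29, 35493245475651712, 37, 35493520353558656, 45, 35493795231465600, 53, 35494070109372544,
  143786888638318213, 143778023284721027, 7, 25, 10, 35510688419971200, 14, 35528280606015616,
  26, 35581057164148864, 30, 35598649350193280, 42, 35651425908326528, 46, 35669018094370944,
  58, 35721794652504192, 143808913509615370, 27, 12, 35519553232502912, 13, 35523951279014144,
  28, 35589921976680576, 29, 35594320023191808, 44, 35660290720858240, 45, 35664688767369472,
  144107946048423564, 41, 10, 35511238175785088, 14, 35528830361829504, 26, 35581606919962752,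
  30, 35599199106007168, 42, 35651975664140416, 46, 35669567850184832, 58, 35722344408318080,
  143808913509615370, 43, 12, 35520102988316800, 13, 35524501034828032, 28, 35590471732494464,
  29, 35594869779005696, 44, 35660840476672128, 45, 35665238523183360, 144107946048423564, 9,
  10, 35510138664157312, 14, 35527730850201728, 26, 35580507408334976, 30, 35598099594379392,
  42, 35650876152512640, 46, 35668468338557056, 58, 35721244896690304, 143808913509615370, 11,
  12, 35519003476689024, 13, 35523401523200256, 28, 35589372220866688, 29, 35593770267377920,
  44, 35659740965044352, 45, 35664139011555584, 144107946048423564, 144103478739223945, 9, 19,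
  10, 35510141885382784, 14, 35527734071427200, 26, 35580510629560448, 30, 35598102815604864,
  42, 35650879373738112, 46, 35668471559782528, 58, 35721248117915776, 143808913509615370, 23,
  10, 35510142959124608, 14, 35527735145169024, 26, 35580511703302272, 30, 35598103889346688,
  42, 35650880447479936, 46, 35668472633524352, 58, 35721249191657600, 143808913509615370, 35,
  10, 35510146180350080, 14, 35527738366394496, 26, 35580514924527744, 30, 35598107110572160,
  42, 35650883668705408, 46, 35668475854749824, 58, 35721252412883072, 143808913509615370, 39,
  10, 35510147254091904, 14, 35527739440136320, 26, 35580515998269568, 30, 35598108184313984,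
  42, 35650884742447232, 46, 35668476928491648, 58, 35721253486624896, 143808913509615370, 51,
  10, 35510150475317376, 14, 35527742661361792, 26, 35580519219495040, 30, 35598111405539456,
  42, 35650887963672704, 46, 35668480149717120, 58, 35721256707850368, 143808913509615370,
  143777884772025219, 10, 19, 13, 35510279324336256, 25, 35510691641196672, 29,
  35510829080150144, 41, 35511241397010560, 45, 35511378835964032, 57, 35511791152824448,
  143804480832816777, 23, 13, 35510280398078080, 25, 35510692714938496, 29, 35510830153891968,
  41, 35511242470752384, 45, 35511379909705856, 57, 35511792226566272, 143804480832816777, 35,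
  13, 35510283619303552, 25, 35510695936163968, 29, 35510833375117440, 41, 35511245691977856,
  45, 35511383130931328, 57, 35511795447791744, 143804480832816777, 39, 13, 35510284693045376,
  25, 35510697009905792, 29, 35510834448859264, 41, 35511246765719680, 45, 35511384204673152,
  57, 35511796521533568, 143804480832816777, 51, 13, 35510287914270848, 25, 35510700231131264,
  29, 35510837670084736, 41, 35511249986945152, 45, 35511387425898624, 57, 35511799742759040,
  143804480832816777, 143777884772025219, 11, 23, 12, 35519007771656320, 13, 35523405818167552,
  28, 35589376515833984, 29, 35593774562345216, 44, 35659745260011648, 45, 35664143306522880,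
  144107946048423564, 39, 12, 35519012066623616, 13, 35523410113134848, 28, 35589380810801280,
  29, 35593778857312512, 44, 35659749554978944, 45, 35664147601490176, 144107946048423564, 21,
  22, 35563328604504192, 38, 35633697348681856, 144107738266698630, 37, 22, 35563878360318080,
  38, 35634247104495744, 144107738266698630, 144103340218073989, 12, 23, 25, 35519488807993472,
  27, 35519557527470208, 41, 35520038563807360, 43, 35520107283284096, 144103478739223945, 39,
  25, 35519493102960768, 27, 35519561822437504, 41, 35520042858774656, 43, 35520111578251392,
  144103478739223945, 21, 25, 35519488271122560, 27, 35519556990599296, 41, 35520038026936448,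
  43, 35520106746413184, 144103478739223945, 37, 25, 35519492566089856, 27, 35519561285566592,
  41, 35520042321903744, 43, 35520111041380480, 144103478739223945, 144103340218073989, 13, 19,
  14, 35527871501992064, 22, 35563055874080896, 30, 35598240246169728, 38, 35633424618258560,
  46, 35668608990347392, 54, 35703793362436224, 143791321315116806, 23, 26, 35580649142255744,
  27, 35523955573981440, 42, 35651017886433408, 43, 35524505329795328, 144107876787848586, 27,
  22, 35563058021564544, 38, 35633426765742208, 39, 35523959868948736, 144107738266698630, 47,
  79, 96, 62912384465371264, 97, 62916782511882496, 98, 62921180558393472, 99,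
  62925578604904960, 100, 62929976651415680, 144110713736573152, 143671796898644867,
  143671788308710275, 14, 19, 21, 35528146379899008, 29, 35528421257805952, 37,
  35528696135712896, 45, 35528971013619840, 53, 35529245891526784, 143786888638318213, 23, 25,
  35528284900982912, 27, 35528353620492416, 41, 35528834656796800, 43, 35528903376306304,
  144103478739223945, 21, 27, 35528148527382656, 35, 35528150674866304, 43, 35528152822349952,
  51, 35528154969833600, 143778023284721027, 47, 79, 101, 62934374697926912, 103,
  62943170790949888, 144105539375547269, 144102805460960133, 144102796871025541, 15, 60, 19,
  35730386751389824, 23, 35730524190408832, 35, 35730936540758144, 39, 35731073979777152, 51,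
  35731486263017600, 143777884772025219, 31, 47, 79, 53, 35700566827204864, 55,
  35709362920227840, 85, 53856802403778816, 87, 53865598496801792, 144104998176637829,
  144110708282590860, 144110699692656268, 144110695397688972, 60, 92, 108, 124,
  70283960584243200, 144110691236939404, 144110691203384972, 144110691169830540,
  144110691102721676]

theorem okB2_2 : run certB2_2 [(mask [0, 1, 2, 4, 8, 16, 32, 64, 123, 119, 111, 95, 63], mask [127, 126, 125])] = true := by
  decide +kernel

def certB2_3 : List ℕ := [
  3, 13, 6, 35492682834935936, 14, 35527867207024768, 22, 35563051579113600, 30,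
  35598235951202432, 38, 35633420323291264, 46, 35668604695380096, 54, 35703789067468928,
  143791321315116806, 21, 6, 35492957712842880, 14, 35528142084931712, 22, 35563326457020544,
  30, 35598510829109376, 38, 35633695201198208, 46, 35668879573287040, 54, 35704063945375872,
  143791321315116806, 29, 6, 35493232590749824, 14, 35528416962838656, 22, 35563601334927488,
  30, 35598785707016320, 38, 35633970079105152, 46, 35669154451193984, 54, 35704338823282816,
  143791321315116806, 37, 6, 35493507468656768, 14, 35528691840745600, 22, 35563876212834432,
  30, 35599060584923264, 38, 35634244957012096, 46, 35669429329100928, 54, 35704613701189760,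
  143791321315116806, 45, 6, 35493782346563712, 14, 35528966718652544, 22, 35564151090741376,
  30, 35599335462830208, 38, 35634519834919040, 46, 35669704207007872, 54, 35704888579096704,
  143791321315116806, 5, 6, 35492407957028992, 14, 35527592329117824, 22, 35562776701206656, 30,
  35597961073295488, 38, 35633145445384320, 46, 35668329817473152, 54, 35703514189561984,
  143791321315116806, 53, 6, 35494057224470656, 14, 35529241596559488, 22, 35564425968648320,
  30, 35599610340737152, 38, 35634794712825984, 46, 35669979084914816, 54, 35705163457003648,
  143791321315116806, 143786888638318213, 5, 11, 6, 35492410104512640, 14, 35527594476601472,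
  22, 35562778848690304, 30, 35597963220779136, 38, 35633147592867968, 46, 35668331964956800,
  54, 35703516337045632, 143791321315116806, 19, 6, 35492412251996288, 14, 35527596624085120,
  22, 35562780996173952, 30, 35597965368262784, 38, 35633149740351616, 46, 35668334112440448,
  54, 35703518484529280, 143791321315116806, 27, 6, 35492414399479936, 14, 35527598771568768,
  22, 35562783143657600, 30, 35597967515746432, 38, 35633151887835264, 46, 35668336259924096,
  54, 35703520632012928, 143791321315116806, 35, 6, 35492416546963584, 14, 35527600919052416,
  22, 35562785291141248, 30, 35597969663230080, 38, 35633154035318912, 46, 35668338407407744,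
  54, 35703522779496576, 143791321315116806, 43, 6, 35492418694447232, 14, 35527603066536064,
  22, 35562787438624896, 30, 35597971810713728, 38, 35633156182802560, 46, 35668340554891392,
  54, 35703524926980224, 143791321315116806, 51, 6, 35492420841930880, 14, 35527605214019712,
  22, 35562789586108544, 30, 35597973958197376, 38, 35633158330286208, 46, 35668342702375040,
  54, 35703527074463872, 143791321315116806, 143778023284721027, 6, 11, 13, 35492684982419584,
  21, 35492959860326528, 29, 35493234738233472, 37, 35493509616140416, 45, 35493784494047360,
  53, 35494059371954304, 143786888638318213, 19, 13, 35492687129903232, 21, 35492962007810176,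
  29, 35493236885717120, 37, 35493511763624064, 45, 35493786641531008, 53, 35494061519437952,
  143786888638318213, 27, 13, 35492689277386880, 21, 35492964155293824, 29, 35493239033200768,
  37, 35493513911107712, 45, 35493788789014656, 53, 35494063666921600, 143786888638318213, 35,
  13, 35492691424870528, 21, 35492966302777472, 29, 35493241180684416, 37, 35493516058591360,
  45, 35493790936498304, 53, 35494065814405248, 143786888638318213, 43, 13, 35492693572354176,
  21, 35492968450261120, 29, 35493243328168064, 37, 35493518206075008, 45, 35493793083981952,
  53, 35494067961888896, 143786888638318213, 51, 13, 35492695719837824, 21, 35492970597744768,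
  29, 35493245475651712, 37, 35493520353558656, 45, 35493795231465600, 53, 35494070109372544,
  143786888638318213, 143778023284721027, 7, 25, 10, 35510688419971200, 14, 35528280606015616,
  26, 35581057164148864, 30, 35598649350193280, 42, 35651425908326528, 46, 35669018094370944,
  144094786532837130, 27, 12, 35519553232502912, 13, 35523951279014144, 28, 35589921976680576,
  29, 35594320023191808, 44, 35660290720858240, 45, 35664688767369472, 144107946048423564, 41,
  10, 35511238175785088, 14, 35528830361829504, 26, 35581606919962752, 30, 35599199106007168,
  42, 35651975664140416, 46, 35669567850184832, 144094786532837130, 43, 12, 35520102988316800,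
  13, 35524501034828032, 28, 35590471732494464, 29, 35594869779005696, 44, 35660840476672128,
  45, 35665238523183360, 144107946048423564, 9, 10, 35510138664157312, 14, 35527730850201728,
  26, 35580507408334976, 30, 35598099594379392, 42, 35650876152512640, 46, 35668468338557056,
  144094786532837130, 11, 13, 35523401523200256, 29, 35593770267377920, 45, 35664139011555584,
  144094751902549641, 144103478739223945, 9, 23, 10, 35510142959124608, 14, 35527735145169024,
  26, 35580511703302272, 30, 35598103889346688, 42, 35650880447479936, 46, 35668472633524352,
  144094786532837130, 39, 10, 35510147254091904, 14, 35527739440136320, 26, 35580515998269568,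
  30, 35598108184313984, 42, 35650884742447232, 46, 35668476928491648, 144094786532837130, 19,
  10, 35510141885382784, 14, 35527734071427200, 26, 35580510629560448, 30, 35598102815604864,
  42, 35650879373738112, 46, 35668471559782528, 144094786532837130, 35, 10, 35510146180350080,
  14, 35527738366394496, 26, 35580514924527744, 30, 35598107110572160, 42, 35650883668705408,
  46, 35668475854749824, 144094786532837130, 144094544120824707, 10, 23, 13, 35510280398078080,
  25, 35510692714938496, 29, 35510830153891968, 41, 35511242470752384, 45, 35511379909705856,
  144094751902549641, 39, 13, 35510284693045376, 25, 35510697009905792, 29, 35510834448859264,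
  41, 35511246765719680, 45, 35511384204673152, 144094751902549641, 22, 12, 35518973143482624,
  13, 35523371189993728, 28, 35589341887660288, 29, 35593739934171392, 44, 35659710631837952,
  45, 35664108678349056, 144107946048423564, 38, 12, 35518977438449920, 13, 35523375484961024,
  28, 35589346182627584, 29, 35593744229138688, 44, 35659714926805248, 45, 35664112973316352,
  144107946048423564, 144107738266698630, 11, 23, 12, 35519007771656320, 13, 35523405818167552,
  28, 35589376515833984, 29, 35593774562345216, 44, 35659745260011648, 45, 35664143306522880,
  144107946048423564, 39, 12, 35519012066623616, 13, 35523410113134848, 28, 35589380810801280,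
  29, 35593778857312512, 44, 35659749554978944, 45, 35664147601490176, 144107946048423564, 21,
  22, 35563328604504192, 38, 35633697348681856, 144107738266698630, 37, 22, 35563878360318080,
  38, 35634247104495744, 144107738266698630, 144103340218073989, 13, 19, 14, 35527871501992064,
  22, 35563055874080896, 30, 35598240246169728, 38, 35633424618258560, 46, 35668608990347392,
  54, 35703793362436224, 143791321315116806, 23, 26, 35580649142255744, 27, 35523955573981440,
  42, 35651017886433408, 43, 35524505329795328, 144107876787848586, 47, 79, 99,
  62925578604904960, 103, 62943170790949888, 144096743278297987, 144094009363710851,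
  144094000773776259, 15, 57, 19, 35717192611922176, 23, 35717330050875648, 35,
  35717742401290496, 39, 35717879840243968, 144094544120824707, 31, 47, 79, 51,
  35691770734182912, 55, 35709362920227840, 83, 53848006310756864, 87, 53865598496801792,
  144096202079388547, 144106241510294921, 144106232920360329, 144106228625393033, 57, 89, 105,
  121, 68581812699924480, 144106224464643465, 144106224431089033, 144106224397534601,
  144106224330425737]

theorem okB2_3 : run certB2_3 [(mask [0, 1, 2, 4, 8, 16, 32, 64, 119, 111, 95, 63], mask [127, 126, 125, 123])] = true := by
  decide +kernel

def certB2_4 : List ℕ := [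
  3, 13, 6, 35492682834935936, 14, 35527867207024768, 22, 35563051579113600, 30,
  35598235951202432, 38, 35633420323291264, 46, 35668604695380096, 144077194338338566, 29, 6,
  35493232590749824, 14, 35528416962838656, 22, 35563601334927488, 30, 35598785707016320, 38,
  35633970079105152, 46, 35669154451193984, 144077194338338566, 45, 6, 35493782346563712, 14,
  35528966718652544, 22, 35564151090741376, 30, 35599335462830208, 38, 35634519834919040, 46,
  35669704207007872, 144077194338338566, 21, 6, 35492957712842880, 14, 35528142084931712, 22,
  35563326457020544, 30, 35598510829109376, 38, 35633695201198208, 46, 35668879573287040,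
  144077194338338566, 5, 6, 35492407957028992, 14, 35527592329117824, 22, 35562776701206656, 30,
  35597961073295488, 38, 35633145445384320, 46, 35668329817473152, 144077194338338566, 37, 6,
  35493507468656768, 14, 35528691840745600, 22, 35563876212834432, 30, 35599060584923264, 38,
  35634244957012096, 46, 35669429329100928, 144077194338338566, 144077159708051077, 5, 11, 6,
  35492410104512640, 14, 35527594476601472, 22, 35562778848690304, 30, 35597963220779136, 38,
  35633147592867968, 46, 35668331964956800, 144077194338338566, 27, 6, 35492414399479936, 14,
  35527598771568768, 22, 35562783143657600, 30, 35597967515746432, 38, 35633151887835264, 46,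
  35668336259924096, 144077194338338566, 43, 6, 35492418694447232, 14, 35527603066536064, 22,
  35562787438624896, 30, 35597971810713728, 38, 35633156182802560, 46, 35668340554891392,
  144077194338338566, 19, 6, 35492412251996288, 14, 35527596624085120, 22, 35562780996173952,
  30, 35597965368262784, 38, 35633149740351616, 46, 35668334112440448, 144077194338338566, 35,
  6, 35492416546963584, 14, 35527600919052416, 22, 35562785291141248, 30, 35597969663230080, 38,
  35633154035318912, 46, 35668338407407744, 144077194338338566, 144077090447476099, 6, 11, 13,
  35492684982419584, 21, 35492959860326528, 29, 35493234738233472, 37, 35493509616140416, 45,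
  35493784494047360, 144077159708051077, 27, 13, 35492689277386880, 21, 35492964155293824, 29,
  35493239033200768, 37, 35493513911107712, 45, 35493788789014656, 144077159708051077, 43, 13,
  35492693572354176, 21, 35492968450261120, 29, 35493243328168064, 37, 35493518206075008, 45,
  35493793083981952, 144077159708051077, 19, 13, 35492687129903232, 21, 35492962007810176, 29,
  35493236885717120, 37, 35493511763624064, 45, 35493786641531008, 144077159708051077, 35, 13,
  35492691424870528, 21, 35492966302777472, 29, 35493241180684416, 37, 35493516058591360, 45,
  35493790936498304, 144077159708051077, 144077090447476099, 7, 25, 10, 35510688419971200, 14,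
  35528280606015616, 26, 35581057164148864, 30, 35598649350193280, 42, 35651425908326528, 46,
  35669018094370944, 144094786532837130, 27, 12, 35519553232502912, 13, 35523951279014144, 28,
  35589921976680576, 29, 35594320023191808, 44, 35660290720858240, 45, 35664688767369472,
  144107946048423564, 41, 10, 35511238175785088, 14, 35528830361829504, 26, 35581606919962752,
  30, 35599199106007168, 42, 35651975664140416, 46, 35669567850184832, 144094786532837130, 43,
  12, 35520102988316800, 13, 35524501034828032, 28, 35590471732494464, 29, 35594869779005696,
  44, 35660840476672128, 45, 35665238523183360, 144107946048423564, 9, 10, 35510138664157312,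
  14, 35527730850201728, 26, 35580507408334976, 30, 35598099594379392, 42, 35650876152512640,
  46, 35668468338557056, 144094786532837130, 11, 13, 35523401523200256, 29, 35593770267377920,
  45, 35664139011555584, 144094751902549641, 144103478739223945, 11, 23, 12, 35519007771656320,
  13, 35523405818167552, 28, 35589376515833984, 29, 35593774562345216, 44, 35659745260011648,
  45, 35664143306522880, 144107946048423564, 39, 12, 35519012066623616, 13, 35523410113134848,
  28, 35589380810801280, 29, 35593778857312512, 44, 35659749554978944, 45, 35664147601490176,
  144107946048423564, 21, 22, 35563328604504192, 38, 35633697348681856, 144107738266698630, 37,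
  22, 35563878360318080, 38, 35634247104495744, 144107738266698630, 144103340218073989, 15, 51,
  20, 35555564402573440, 21, 35559962449084672, 22, 35564360495595648, 28, 35590748774662272,
  144110718953032340, 31, 47, 79, 55, 35709362920227840, 83, 53848006310756864, 87,
  53865598496801792, 144096202079388547, 144097307965703043, 144097299375768451,
  144097295080801155, 51, 83, 99, 115, 65177516931287040, 144097290920051587,
  144097290886497155, 144097290852942723, 144097290785833859]

theorem okB2_4 : run certB2_4 [(mask [0, 1, 2, 4, 8, 16, 32, 64, 111, 95, 63], mask [127, 126, 125, 123, 119])] = true := by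
  decide +kernel

def certB2_5 : List ℕ := [
  3, 5, 6, 35492407957028992, 14, 35527592329117824, 22, 35562776701206656, 30,
  35597961073295488, 38, 35633145445384320, 144079427721332486, 6, 13, 35492682834935936, 21,
  35492957712842880, 29, 35493232590749824, 37, 35493507468656768, 144079427450783365, 13, 14,
  35527867207024768, 22, 35563051579113600, 30, 35598235951202432, 38, 35633420323291264,
  144079427721332486, 21, 14, 35528142084931712, 22, 35563326457020544, 30, 35598510829109376,
  38, 35633695201198208, 144079427721332486, 39, 71, 103, 96, 58408507812610176, 97,
  58412905859121408, 98, 58417303905632384, 100, 58426099998654592, 144110720179024096,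
  144106112585790341, 144106112585786245, 144106112585782149, 5, 6, 11, 35492410104512640, 19,
  35492412251996288, 27, 35492414399479936, 35, 35492416546963584, 144079426909685123, 11, 14,
  35527594476601472, 22, 35562778848690304, 30, 35597963220779136, 38, 35633147592867968,
  144079427721332486, 19, 14, 35527596624085120, 22, 35562780996173952, 30, 35597965368262784,
  38, 35633149740351616, 144079427721332486, 39, 71, 103, 96, 58408507812610176, 97,
  58412905859121408, 98, 58417303905632384, 100, 58426099998654592, 144110720179024096,
  144097316488541059, 144097316488536963, 144097316488532867, 6, 11, 13, 35492684982419584, 21,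
  35492959860326528, 29, 35493234738233472, 37, 35493509616140416, 144079427450783365, 19, 13,
  35492687129903232, 21, 35492962007810176, 29, 35493236885717120, 37, 35493511763624064,
  144079427450783365, 39, 71, 103, 96, 58408507812610176, 97, 58412905859121408, 98,
  58417303905632384, 100, 58426099998654592, 144110720179024096, 144097316488541059,
  144097316488536963, 144097316488532867, 7, 9, 10, 35510138664157312, 14, 35527730850201728,
  26, 35580507408334976, 30, 35598099594379392, 42, 35650876152512640, 144097019915831050, 10,
  13, 35510276103110784, 25, 35510688419971200, 29, 35510825858924672, 41, 35511238175785088,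
  144097019645281929, 11, 12, 35519003476689024, 13, 35523401523200256, 14, 35527799569711232,
  28, 35589372220866688, 144110716805416588, 13, 14, 35527868289155200, 26, 35580644847288448,
  144110648081745290, 25, 14, 35528280606015616, 26, 35581057164148864, 144110648081745290,
  144106250033120649, 11, 13, 14, 35527869354508416, 22, 35563053726597248, 144110510634402694,
  21, 14, 35528144232415360, 22, 35563328604504192, 144110510634402694, 144106112585778053, 51,
  83, 115, 96, 65164322791751808, 97, 65168720838263040, 98, 65173118884774016, 112,
  65234691535929472, 144110716982964448, 144097316689855363, 144097316622746499,
  144097316555637635]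

theorem okB2_5 : run certB2_5 [(mask [0, 1, 2, 4, 8, 16, 32, 64, 95, 63], mask [127, 126, 125, 123, 119, 111])] = true := by
  decide +kernel

def certB2_6 : List ℕ := [
  3, 5, 6, 35492407957028992, 14, 35527592329117824, 22, 35562776701206656, 38,
  35633145445384320, 144079445169637126, 6, 13, 35492682834935936, 21, 35492957712842880, 37,
  35493507468656768, 144079445167523461, 13, 14, 35527867207024768, 22, 35563051579113600, 38,
  35633420323291264, 144079445169637126, 21, 14, 35528142084931712, 22, 35563326457020544, 38,
  35633695201198208, 144079445169637126, 39, 71, 101, 103, 58430498045165824,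
  144106112585790341, 144079445301741189, 144106112585786245, 144106112585782149, 5, 6, 11,
  35492410104512640, 19, 35492412251996288, 35, 35492416546963584, 144079445163296131, 11, 14,
  35527594476601472, 22, 35562778848690304, 38, 35633147592867968, 144079445169637126, 19, 14,
  35527596624085120, 22, 35562780996173952, 38, 35633149740351616, 144079445169637126, 39, 71,
  99, 103, 58421701952143872, 144097316488541059, 144079445297513859, 144097316488536963,
  144097316488532867, 6, 11, 13, 35492684982419584, 21, 35492959860326528, 37,
  35493509616140416, 144079445167523461, 19, 13, 35492687129903232, 21, 35492962007810176, 37,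
  35493511763624064, 144079445167523461, 39, 71, 99, 103, 58421701952143872, 144097316488541059,
  144079445297513859, 144097316488536963, 144097316488532867, 7, 9, 10, 35510138664157312, 14,
  35527730850201728, 26, 35580507408334976, 42, 35650876152512640, 144097037364135690, 10, 13,
  35510276103110784, 25, 35510688419971200, 41, 35511238175785088, 144097037362022025, 11, 12,
  35519003476689024, 13, 35523401523200256, 14, 35527799569711232, 28, 35589372220866688,
  144110716805416588, 13, 14, 35527868289155200, 26, 35580644847288448, 144110648081745290, 57,
  89, 105, 121, 68581812699924480, 144106250234447241, 144106245905925513, 144106250167338377,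
  144106250100229513, 11, 13, 14, 35527869354508416, 22, 35563053726597248, 144110510634402694,
  53, 85, 101, 117, 66312282187499520, 144106112787104645, 144106108458582917,
  144106112719995781, 144106112652886917, 51, 83, 99, 115, 65177516931287040,
  144097316689855363, 144097312361333635, 144097316622746499, 144097316555637635]

theorem okB2_6 : run certB2_6 [(mask [0, 1, 2, 4, 8, 16, 32, 64, 63], mask [127, 126, 125, 123, 119, 111, 95])] = true := by
  decide +kernel

def certB2_7 : List ℕ := [
  3, 5, 6, 7, 3967210565435520, 15, 8470810192806016, 23, 12974409820176512, 39,
  21981609074917504, 144079445171750791, 14, 31, 17513193819635840, 47, 26520393074376832, 79,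
  44534791583858816, 144043702538194822, 22, 55, 31059177073836160, 87, 49073575583318144,
  144078886927189766, 38, 103, 58151143582236800, 144110510634414982, 144079445169637126, 6, 13,
  31, 17508830132846848, 47, 26516029387587840, 79, 44530427897069824, 144043702538194821, 21,
  55, 31054813387047168, 87, 49069211896529152, 144078886927189637, 37, 103, 58011505605509248,
  144106112585790341, 144079445167523461, 7, 9, 10, 11, 6236740012507264, 15, 8488540899934336,
  27, 15243939267248256, 43, 24251138521989248, 144097037366249355, 14, 31, 17513332340752512,
  47, 26520531595493504, 79, 44534930104975488, 144043702538194821, 26, 59, 33328706520907904,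
  91, 51343105030389888, 144096479121688330, 42, 107, 60420673029308544, 144110648081757578,
  144097037364135690, 10, 13, 31, 17508968653979904, 47, 26516167908720896, 79,
  44530566418202880, 144043702538194821, 25, 59, 33324342834118912, 91, 51338741343600896,
  144096479121688201, 41, 107, 60281035052580992, 144106250033132937, 144097037362022025, 11,
  12, 31, 17504604967207168, 47, 26511804221948160, 79, 44526202731430144, 144043702538194821,
  13, 31, 17509003013718272, 47, 26516202268459264, 79, 44530600777941248, 144043702538194821,
  14, 31, 17513401060229248, 47, 26520600314970240, 79, 44534998824452224, 144043702538194821,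
  60, 92, 108, 124, 70283960584243200, 144110717006743180, 144110712678221452,
  144110716939634316, 144110716872525452, 13, 14, 31, 17513469779673216, 47, 26520669034414208,
  79, 44535067543896192, 144043702538194821, 58, 90, 106, 122, 69149195328030720,
  144110648283071882, 144110643954550154, 144110648215963018, 144110648148854154, 57, 89, 105,
  121, 68581812699924480, 144106250234447241, 144106245905925513, 144106250167338377,
  144106250100229513, 13, 14, 31, 17513468705931392, 47, 26520667960672384, 79,
  44535066470154368, 144043702538194821, 54, 86, 102, 118, 66879664815605760,
  144110510835729286, 144110506507207558, 144110510768620422, 144110510701511558, 53, 85, 101,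
  117, 66312282187499520, 144106112787104645, 144106108458582917, 144106112719995781,
  144106112652886917, 5, 6, 11, 31, 17500034572501504, 47, 26507233827242496, 79,
  44521632336724480, 144043702538194819, 19, 55, 31046017826701824, 87, 49060416336183808,
  144078886927189379, 35, 103, 58010414683816064, 144097316488541059, 144079445163296131, 7, 9,
  12, 13, 7371436549275776, 15, 8497336992989312, 29, 16378635804016768, 45, 25385835058757760,
  144105833463498637, 14, 31, 17513332340752512, 47, 26520531595493504, 79, 44534930104975488,
  144043702538194819, 28, 61, 34463403057676416, 93, 52477801567158400, 144105275218937612, 44,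
  109, 61555369566077056, 144110716805428876, 144105833461384972, 10, 12, 31, 17504570607468800,
  47, 26511769862209792, 79, 44526168371691776, 144043702538194819, 13, 31, 17508968653979904,
  47, 26516167908720896, 79, 44530566418202880, 144043702538194819, 25, 31, 17561745212064000,
  28, 61, 34463952830267520, 93, 52478351339749504, 144105275218939785, 46, 78, 108, 110,
  62402176441909504, 144110716806989452, 144110231642113676, 144110716806465164,
  144110716805940876, 43, 75, 105, 107, 60700028557590784, 144106250033132937,
  144097037496239753, 144106250033128841, 144106250033124745, 11, 12, 31, 17504604967207168, 47,
  26511804221948160, 79, 44526202731430144, 144043702538194819, 13, 31, 17509003013718272, 47,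
  26516202268459264, 79, 44530600777941248, 144043702538194819, 14, 31, 17513401060229248, 47,
  26520600314970240, 79, 44534998824452224, 144043702538194819, 60, 92, 108, 124,
  70283960584243200, 144110717006743180, 144110712678221452, 144110716939634316,
  144110716872525452, 13, 14, 31, 17513469779673216, 47, 26520669034414208, 79,
  44535067543896192, 144043702538194819, 58, 90, 106, 122, 69149195328030720,
  144110648283071882, 144110643954550154, 144110648215963018, 144110648148854154, 57, 89, 105,
  121, 68581812699924480, 144106250234447241, 144106245905925513, 144106250167338377,
  144106250100229513, 11, 14, 31, 17513400523358336, 47, 26520599778099328, 79,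
  44534998287581312, 144043702538194819, 54, 86, 102, 118, 66879664815605760,
  144110510835729286, 144110506507207558, 144110510768620422, 144110510701511558, 51, 83, 99,
  115, 65177516931287040, 144097316689855363, 144097312361333635, 144097316622746499,
  144097316555637635, 6, 7, 9, 10, 31, 17495740154675328, 47, 26502939409416320, 79,
  44517337918898304, 144043702538194819, 12, 31, 17504536247730304, 47, 26511735502471296, 79,
  44526134011953280, 144043702538194819, 14, 31, 17513332340752512, 47, 26520531595493504, 79,
  44534930104975488, 144043702538194819, 26, 31, 17566108898852992, 28, 62, 35026937411862784,
  94, 53041335921344768, 144109673267564426, 45, 77, 108, 109, 61839191860314240,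
  144110716805428876, 144105833595602700, 144110716805424780, 144110716805420684, 43, 75, 106,
  107, 60704426604101760, 144110648081757578, 144097037498353418, 144110648081753482,
  144110648081749386, 10, 12, 14, 7934421130871040, 15, 8497371352727808, 30, 16941620385612032,
  46, 25948819640353024, 144110231512123278, 13, 31, 17508968653979904, 47, 26516167908720896,
  79, 44530566418202880, 144043702538194819, 28, 62, 35026387639271680, 94, 53040786148753664,
  144109673267562124, 44, 110, 62118354147672320, 144110716806989452, 144110231507895948, 11,
  12, 31, 17504604967207168, 47, 26511804221948160, 79, 44526202731430144, 144043702538194819,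
  13, 31, 17509003013718272, 47, 26516202268459264, 79, 44530600777941248, 144043702538194819,
  14, 31, 17513401060229248, 47, 26520600314970240, 79, 44534998824452224, 144043702538194819,
  60, 92, 108, 124, 70283960584243200, 144110717006743180, 144110712678221452,
  144110716939634316, 144110716872525452, 13, 14, 31, 17513469779673216, 47, 26520669034414208,
  79, 44535067543896192, 144043702538194819, 58, 90, 106, 122, 69149195328030720,
  144110648283071882, 144110643954550154, 144110648215963018, 144110648148854154, 57, 89, 105,
  121, 68581812699924480, 144106250234447241, 144106245905925513, 144106250167338377,
  144106250100229513, 11, 13, 31, 17509002745282816, 47, 26516202000023808, 79,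
  44530600509505792, 144043702538194819, 53, 85, 101, 117, 66312282187499520,
  144106112787104645, 144106108458582917, 144106112719995781, 144106112652886917, 51, 83, 99,
  115, 65177516931287040, 144097316689855363, 144097312361333635, 144097316622746499,
  144097316555637635, 7, 9, 10, 31, 17495740154675328, 47, 26502939409416320, 79,
  44517337918898304, 144043702538194819, 14, 31, 17513332340752512, 47, 26520531595493504, 79,
  44534930104975488, 144043702538194819, 26, 31, 17566108898852992, 35, 59, 33368874653074432,
  67, 91, 51343122210259072, 144096479121688330, 144096479071358851, 67, 91, 51343122210259072,
  144096479121297283, 144096479070965635, 43, 75, 106, 107, 60704426604101760,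
  144110648081757578, 144097037498353418, 144110648081753482, 144110648081749386, 10, 13, 31,
  17508968653979904, 47, 26516167908720896, 79, 44530566418202880, 144043702538194819, 25, 31,
  17561745212064000, 35, 59, 33368840559690752, 67, 91, 51273303221895296, 144096479121688201,
  144096479071358851, 67, 91, 51273303221895296, 144096479121297283, 144096479070965635, 43, 75,
  105, 107, 60700028557590784, 144106250033132937, 144097037496239753, 144106250033128841,
  144106250033124745, 11, 12, 31, 17504604967207168, 47, 26511804221948160, 79,
  44526202731430144, 144043702538194819, 13, 31, 17509003013718272, 47, 26516202268459264, 79,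
  44530600777941248, 144043702538194819, 14, 31, 17513401060229248, 47, 26520600314970240, 79,
  44534998824452224, 144043702538194819, 60, 92, 108, 124, 70283960584243200,
  144110717006743180, 144110712678221452, 144110716939634316, 144110716872525452, 13, 14, 31,
  17513469779673216, 47, 26520669034414208, 79, 44535067543896192, 144043702538194819, 58, 90,
  106, 122, 69149195328030720, 144110648283071882, 144110643954550154, 144110648215963018,
  144110648148854154, 57, 89, 105, 121, 68581812699924480, 144106250234447241,
  144106245905925513, 144106250167338377, 144106250100229513, 11, 13, 14, 31, 17513470845026432,
  47, 26520670099767424, 79, 44535068609249408, 144043702538194819, 54, 86, 102, 118,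
  66879664815605760, 144110510835729286, 144110506507207558, 144110510768620422,
  144110510701511558, 53, 85, 101, 117, 66312282187499520, 144106112787104645,
  144106108458582917, 144106112719995781, 144106112652886917, 51, 83, 99, 115,
  65177516931287040, 144097316689855363, 144097312361333635, 144097316622746499,
  144097316555637635]

theorem okB2_7 : run certB2_7 [(mask [0, 1, 2, 4, 8, 16, 32, 64], mask [127, 126, 125, 123, 119, 111, 95, 63])] = true := by
  decide +kernel

def certA2 : List ℕ := [
  3, 125, 6, 71525328144597120, 14, 71560512516685952, 22, 71595696888774784, 30,
  71630881260863616, 38, 71666065632952448, 46, 71701250005041280, 54, 71736434377130112, 126,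
  72053093725929600, 143228371361695494, 61, 6, 71523129121341568, 14, 71558313493430400, 22,
  71593497865519232, 30, 71628682237608064, 38, 71663866609696896, 46, 71699050981785728, 54,
  71734235353874560, 126, 72050894702674048, 143228371361695494, 93, 6, 71524228632969344, 14,
  71559413005058176, 22, 71594597377147008, 30, 71629781749235840, 38, 71664966121324672, 46,
  71700150493413504, 54, 71735334865502336, 126, 72051994214301824, 143228371361695494, 109, 6,
  71524778388783232, 14, 71559962760872064, 22, 71595147132960896, 30, 71630331505049728, 38,
  71665515877138560, 46, 71700700249227392, 54, 71735884621316224, 126, 72052543970115712,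
  143228371361695494, 29, 6, 71522029609713792, 14, 71557213981802624, 22, 71592398353891456,
  30, 71627582725980288, 38, 71662767098069120, 46, 71697951470157952, 54, 71733135842246784,
  126, 72049795191046272, 143228371361695494, 45, 6, 71522579365527680, 14, 71557763737616512,
  22, 71592948109705344, 30, 71628132481794176, 38, 71663316853883008, 46, 71698501225971840,
  54, 71733685598060672, 126, 72050344946860160, 143228371361695494, 77, 6, 71523678877155456,
  14, 71558863249244288, 22, 71594047621333120, 30, 71629231993421952, 38, 71664416365510784,
  46, 71699600737599616, 54, 71734785109688448, 126, 72051444458487936, 143228371361695494, 5,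
  9, 12, 71547731239305344, 142908937277755020, 142908937277755017, 142908937277755013, 5, 123,
  6, 71521237188247680, 14, 71556421560336512, 22, 71591605932425344, 30, 71626790304514176, 38,
  71661974676603008, 46, 71697159048691840, 54, 71732343420780672, 126, 72049002769580160,
  143228371361695494, 59, 6, 71521220008378496, 14, 71556404380467328, 22, 71591588752556160,
  30, 71626773124644992, 38, 71661957496733824, 46, 71697141868822656, 54, 71732326240911488,
  126, 72048985589710976, 143228371361695494, 91, 6, 71521228598313088, 14, 71556412970401920,
  22, 71591597342490752, 30, 71626781714579584, 38, 71661966086668416, 46, 71697150458757248,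
  54, 71732334830846080, 126, 72048994179645568, 143228371361695494, 107, 6, 71521232893280384,
  14, 71556417265369216, 22, 71591601637458048, 30, 71626786009546880, 38, 71661970381635712,
  46, 71697154753724544, 54, 71732339125813376, 126, 72048998474612864, 143228371361695494, 115,
  6, 71521235040764032, 14, 71556419412852864, 22, 71591603784941696, 30, 71626788157030528, 38,
  71661972529119360, 46, 71697156901208192, 54, 71732341273297024, 126, 72049000622096512,
  143228371361695494, 27, 6, 71521211418443904, 14, 71556395790532736, 22, 71591580162621568,
  30, 71626764534710400, 38, 71661948906799232, 46, 71697133278888064, 54, 71732317650976896,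
  126, 72048976999776384, 143228371361695494, 35, 6, 71521213565927552, 14, 71556397938016384,
  22, 71591582310105216, 30, 71626766682194048, 38, 71661951054282880, 46, 71697135426371712,
  54, 71732319798460544, 126, 72048979147260032, 143228371361695494, 67, 75, 83, 6,
  71521222155862144, 14, 71556406527950976, 22, 71591590900039808, 30, 71626775272128640, 38,
  71661959644217472, 46, 71697144016306304, 54, 71732328388395136, 63, 71862275971220480,
  107762524296152838, 141809356406050179, 141774172017184131, 141809356372495747, 6, 122, 13,
  71556012204687616, 21, 71591196593553664, 29, 71626380948865280, 37, 71661565371285760, 45,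
  71696749693042944, 53, 71731934081908992, 125, 72048593413931264, 142660988731475589, 123, 13,
  71521512066154624, 21, 71521786944061568, 29, 71522061821968512, 37, 71522336699875456, 45,
  71522611577782400, 53, 71522886455689344, 125, 71525360356851840, 142660988731475589, 59, 13,
  71521494886285440, 21, 71521769764192384, 29, 71522044642099328, 37, 71522319520006272, 45,
  71522594397913216, 53, 71522869275820160, 125, 71525343176982656, 142660988731475589, 91, 13,
  71521503476220032, 21, 71521778354126976, 29, 71522053232033920, 37, 71522328109940864, 45,
  71522602987847808, 53, 71522877865754752, 125, 71525351766917248, 142660988731475589, 58, 13,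
  71553813181432064, 21, 71588997570298112, 29, 71624181925609728, 37, 71659366348030208, 45,
  71694550669787392, 53, 71729735058653440, 125, 72046394390675712, 142660988731475589, 90, 13,
  71554912693059840, 21, 71590097081925888, 29, 71625281437237504, 69, 71801203415122176, 77,
  71836387669770496, 85, 71871572058636544, 125, 72047493902303488, 142802825798567557, 27, 13,
  71521486296350848, 21, 71521761174257792, 29, 71522036052164736, 37, 71522310930071680, 45,
  71522585807978624, 53, 71522860685885568, 125, 71525334587048064, 142660988731475589, 10, 18,
  24, 71600818394104064, 141840142746684824, 141840142746684818, 141840142746684810, 7, 121, 14,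
  71560376159862912, 22, 71595560548728960, 30, 71630744904040576, 38, 71665929326461056, 46,
  71701113648218240, 54, 71736298037084288, 126, 72052957369106560, 143228371361695494, 123, 13,
  71556046832861440, 21, 71591231221727488, 29, 71626415577039104, 37, 71661599999459584, 45,
  71696784321216768, 53, 71731968710082816, 125, 72048628042105088, 142660988731475589, 125, 11,
  72044779751407872, 19, 72045054646092032, 27, 72045329507221760, 35, 72045604435460352, 43,
  72045879263035648, 51, 72046154157719808, 141526223471035779, 124, 11, 72040381704896640, 19,
  72040656599580800, 27, 72040931460710528, 35, 72041206388949120, 43, 72041481216524416, 51,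
  72041756111208576, 141526223471035779, 126, 11, 72049177797918848, 19, 72049452692603008, 27,
  72049727553732736, 35, 72050002481971328, 43, 72050277309546624, 51, 72050552204230784,
  141526223471035779, 57, 14, 71558177136607360, 22, 71593361525473408, 30, 71628545880785024,
  38, 71663730303205504, 46, 71698914624962688, 54, 71734099013828736, 143228371361695494, 59,
  13, 71553847809605888, 21, 71589032198471936, 29, 71624216553783552, 37, 71659400976204032,
  45, 71694585297961216, 53, 71729769686827264, 142660988731475589, 89, 14, 71559276648235136,
  22, 71594461037101184, 30, 71629645392412800, 70, 71805567370297472, 78, 71840751624945792,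
  86, 71875936013811840, 143370208428787462, 91, 13, 71554947321233664, 21, 71590131710099712,
  29, 71625316065411328, 69, 71801238043296000, 77, 71836422297944320, 85, 71871606686810368,
  142802825798567557, 27, 12, 71548350251466880, 13, 71552748297978112, 28, 71618718995644544,
  29, 71623117042155776, 44, 71689087739822208, 45, 71693485786333440, 142973250048558732, 9,
  17, 24, 71600783765930112, 141835744698060184, 141835744698060177, 141835744698060169, 9, 119,
  10, 71538965747892352, 14, 71556557933936768, 26, 71609334492070016, 30, 71626926678114432,
  42, 71679703236247680, 46, 71697295422292096, 58, 71750071980425344, 126, 72049139143180416,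
  143245963556194058, 55, 10, 71538948568023168, 14, 71556540754067584, 26, 71609317312200832,
  30, 71626909498245248, 42, 71679686056378496, 46, 71697278242422912, 58, 71750054800556160,
  126, 72049121963311232, 143245963556194058, 87, 10, 71538957157957760, 14, 71556549344002176,
  26, 71609325902135424, 30, 71626918088179840, 42, 71679694646313088, 46, 71697286832357504,
  58, 71750063390490752, 126, 72049130553245824, 143245963556194058, 103, 10, 71538961452925056,
  14, 71556553638969472, 26, 71609330197102720, 30, 71626922383147136, 42, 71679698941280384,
  46, 71697291127324800, 58, 71750067685458048, 126, 72049134848213120, 143245963556194058, 115,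
  10, 71538964674150528, 14, 71556556860194944, 26, 71609333418328192, 30, 71626925604372608,
  42, 71679702162505856, 46, 71697294348550272, 58, 71750070906683520, 126, 72049138069438592,
  143245963556194058, 51, 10, 71538947494281344, 14, 71556539680325760, 26, 71609316238459008,
  30, 71626908424503424, 42, 71679684982636672, 46, 71697277168681088, 58, 71750053726814336,
  126, 72049120889569408, 143245963556194058, 67, 83, 99, 10, 71538951789248640, 14,
  71556543975293056, 26, 71609320533426304, 30, 71626912719470720, 42, 71679689277603968, 46,
  71697281463648384, 58, 71750058021781632, 63, 71932919593568256, 107780116490651402,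
  139557967869297539, 139557418079929219, 139557967802188675, 10, 118, 13, 71552193978761472,
  25, 71608652414451968, 29, 71622562722939136, 41, 71679021192184064, 45, 71692931467116800,
  57, 71749389902807296, 125, 72044775188005120, 142678580925974153, 119, 13, 71539103186845824,
  25, 71539515503706240, 29, 71539652942659712, 41, 71540065259520128, 45, 71540202698473600,
  57, 71540615015334016, 125, 71542951477543040, 142678580925974153, 55, 13, 71539086006976640,
  25, 71539498323837056, 29, 71539635762790528, 41, 71540048079650944, 45, 71540185518604416,
  57, 71540597835464832, 125, 71542934297673856, 142678580925974153, 87, 13, 71539094596911232,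
  25, 71539506913771648, 29, 71539644352725120, 41, 71540056669585536, 45, 71540194108539008,
  57, 71540606425399424, 125, 71542942887608448, 142678580925974153, 54, 13, 71552176798892288,
  25, 71606453391196416, 29, 71622545543069952, 41, 71676822168928512, 45, 71692914287247616,
  57, 71747190879551744, 125, 72044758008135936, 142678580925974153, 70, 86, 13,
  71552181093859584, 25, 71607552902824192, 29, 71622549838037248, 73, 71818109480206592, 77,
  71833656070570240, 89, 71889027879534848, 125, 72044762303103232, 142820417993066121,
  139570612225803142, 139570612192248710, 11, 119, 13, 71552228606935296, 25, 71608687042625792,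
  29, 71622597351112960, 41, 71679055820357888, 45, 71692966095290624, 57, 71749424530981120,
  125, 72044809816178944, 142678580925974153, 117, 14, 71560239786262656, 22, 71595424158351488,
  30, 71630608530440320, 38, 71665792902529152, 46, 71700977274617984, 54, 71736161646706816,
  126, 72052820995506304, 143228371361695494, 118, 13, 72014063210627200, 21, 72014338088534144,
  29, 72014612966441088, 37, 72014887844348032, 45, 72015162722254976, 125, 72017911501324416,
  142942463708186245, 55, 13, 71552211427066112, 25, 71606488019370240, 29, 71622580171243776,
  41, 71676856797102336, 45, 71692948915421440, 57, 71747225507725568, 125, 72044792636309760,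
  142678580925974153, 87, 13, 71552220017000704, 25, 71607587530998016, 29, 71622588761178368,
  73, 71818693864194304, 77, 71833694993711360, 89, 71889062507708672, 125, 72044801226244352,
  142820417993066121, 53, 38, 71663593879273600, 70, 71804331367628928, 139570612191986566, 69,
  38, 71664143635087488, 70, 71804881123442816, 139570612191986566, 139566214143624069, 12, 117,
  25, 71548311059890304, 27, 71548379779367040, 41, 71548860815704192, 43, 71548929535180928,
  57, 71549410571518080, 123, 71551678314250368, 141552611762783625, 119, 25, 71548311596761216,
  27, 71548380316237952, 41, 71548861352575104, 43, 71548930072051840, 57, 71549411108388992,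
  123, 71551678851121280, 141552611762783625, 55, 25, 71548294416892032, 27, 71548363136368768,
  41, 71548844172705920, 43, 71548912892182656, 57, 71549393928519808, 123, 71551661671252096,
  141552611762783625, 87, 25, 71548303006826624, 27, 71548371726303360, 41, 71548852762640512,
  43, 71548921482117248, 57, 71549402518454400, 123, 71551670261186688, 141552611762783625, 53,
  25, 71548293880021120, 27, 71548362599497856, 41, 71548843635835008, 43, 71548912355311744,
  57, 71549393391648896, 123, 71551661134381184, 141552611762783625, 69, 25, 71548298174988416,
  27, 71548366894465152, 41, 71548847930802304, 43, 71548916650279040, 57, 71549397686616192,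
  123, 71551665429348480, 141552611762783625, 139566214143624069, 13, 115, 14,
  71556694290759808, 22, 71591878662848640, 30, 71627063034937472, 38, 71662247407026304, 46,
  71697431779115136, 54, 71732616151203968, 126, 72049275500003456, 143228371361695494, 119, 25,
  71608687579496960, 27, 71552778362749184, 41, 71679056357229056, 43, 71553328118563072, 57,
  71749425067852288, 123, 71556076897632512, 141552611762783625, 117, 25, 71608618860020224, 27,
  71617414953042432, 41, 71678987637752320, 43, 71687783730774528, 57, 71749356348375552, 123,
  72039627418108416, 141552611762783625, 123, 21, 72036328883225088, 23, 71556051127828736, 37,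
  72036878672593408, 39, 71556055422796032, 139564556218614661, 51, 14, 71556677110890624, 22,
  71591861482979456, 30, 71627045855068288, 38, 71662230227157120, 46, 71697414599245952, 54,
  71732598971334784, 126, 72049258320134272, 143228371361695494, 83, 14, 71556685700825216, 22,
  71591870072914048, 30, 71627054445002880, 38, 71662238817091712, 46, 71697423189180544, 54,
  71732607561269376, 126, 72049266910068864, 143228371361695494, 55, 25, 71606488556241408, 27,
  71552761182880000, 41, 71676857333973504, 43, 71553310938693888, 57, 71747226044596736,
  141552611762783625, 87, 25, 71607588067869184, 27, 71552769772814592, 73, 71818694401065472,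
  75, 71554419040256256, 89, 71889063044579840, 141694448829875593, 139557418079929219, 14, 115,
  21, 71556969168666752, 29, 71557244046573696, 37, 71557518924480640, 45, 71557793802387584,
  53, 71558068680294528, 125, 71560542581457024, 142660988731475589, 119, 25, 71557107689750656,
  27, 71557176409260160, 41, 71557657445564544, 43, 71557726165074048, 57, 71558207201378432,
  123, 71560474944143488, 141552611762783625, 117, 19, 71560241933746304, 27, 71560244081229952,
  35, 71560246228713600, 43, 71560248376197248, 123, 71560269851033728, 141807698447746435, 55,
  25, 71557090509881472, 27, 71557159229390976, 41, 71557640265695360, 43, 71557708985204864,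
  57, 71558190021509248, 123, 71560457764274304, 141552611762783625, 87, 25, 71557099099816064,
  27, 71557167819325568, 41, 71557648855629952, 43, 71557717575139456, 57, 71558198611443840,
  123, 71560466354208896, 141552611762783625, 51, 37, 71557501744611456, 69, 71558601256239232,
  139566214143361925, 67, 37, 71557506039578752, 69, 71558605551206528, 139566214143361925,
  139557418046374787, 15, 115, 21, 71590958491304192, 29, 71626142863393024, 37,
  71661327269036288, 45, 71696511641125120, 53, 71731695979659520, 125, 72048355328459008,
  142660988731475589, 117, 19, 72009872421486848, 27, 72010147299393792, 35, 72010422210855168,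
  43, 72010697088762112, 123, 72013445834277120, 141807698447746435, 118, 19, 72014270467997824,
  27, 72014545345904768, 35, 72014820257366144, 43, 72015095135273088, 123, 72017843880788096,
  141807698447746435, 121, 19, 72027464607596800, 23, 72027602046550272, 35, 72028014396965120,
  39, 72028151835918592, 119, 72030900581433600, 139555760121365379, 51, 21, 71588759468048640,
  29, 71623943840137472, 37, 71659128245780736, 45, 71694312617869568, 125, 72046156305203456,
  142942463708186245, 53, 19, 71728397444776192, 27, 71728672322683136, 35, 71728947234144512,
  43, 71729222112051456, 123, 71731970857566464, 141807698447746435, 113, 22, 71595287818305664,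
  30, 71630472190394496, 38, 71665656596037760, 46, 71700840968126592, 126, 72052684655460480,
  143509846338406150, 119, 25, 71608688116367616, 27, 71617484209390080, 41, 71679056894099712,
  43, 71687852987122176, 123, 72039696674456064, 141834086739494281, 55, 25, 71606489093112064,
  27, 71615285186134528, 41, 71676857870844160, 43, 71685653963866624, 123, 72037497651200512,
  141834086739494281, 17, 33, 48, 71706888819179648, 139567176308578736, 139567176308578721,
  139567176308578705, 19, 111, 53, 71728423214579968, 61, 71763607586668800, 85,
  71869160702935296, 93, 71904345075024128, 117, 72009898191290624, 125, 72045082563379456,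
  142944121666750085, 47, 53, 71728406034710784, 61, 71763590406799616, 85, 71869143523066112,
  93, 71904327895154944, 117, 72009881011421440, 125, 72045065383510272, 142944121666750085, 79,
  53, 71728414624645376, 61, 71763598996734208, 85, 71869152113000704, 93, 71904336485089536,
  117, 72009889601356032, 125, 72045073973444864, 142944121666750085, 103, 53,
  71728421067096320, 61, 71763605439185152, 85, 71869158555451648, 93, 71904342927540480, 117,
  72009896043806976, 125, 72045080415895808, 142944121666750085, 39, 53, 71728403887227136, 61,
  71763588259315968, 85, 71869141375582464, 93, 71904325747671296, 117, 72009878863937792, 125,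
  72045063236026624, 142944121666750085, 69, 70, 71804883270926464, 135000764841576198,
  135000764839478917, 21, 111, 51, 71588785237852416, 59, 71589060115759360, 83,
  71589884749480192, 91, 71590159627387136, 115, 71590984261107968, 123, 71591259139014912,
  141809356406310275, 109, 51, 71722695372571136, 59, 71754879676318208, 83, 71863432928035328,
  91, 71895617164673536, 115, 72004170349281792, 123, 72036354653028864, 141809356406310275,
  107, 44, 71691840276988032, 46, 71697704509538432, 134751098337724044, 41, 73, 99,
  71932570090603520, 103, 71950162276647936, 135019173131764611, 135028106609247625,
  135028106542138761, 22, 110, 51, 71722730000744960, 59, 71754914304492032, 83,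
  71863467556209152, 91, 71895651792847360, 115, 72004204977455616, 123, 72036389281202688,
  141809356406310275, 111, 51, 71593183284363392, 59, 71593458162270336, 83, 71594282795991168,
  91, 71594557673898112, 115, 71595382307618944, 123, 71595657185525888, 141809356406310275,
  107, 44, 71691840545423616, 45, 71592976026992768, 135030374291179148, 42, 74, 99,
  71932604718777344, 103, 71950196904821760, 135019173131764611, 135032504657872266,
  135032504590763402, 23, 107, 29, 71625870116192512, 37, 71661054538612992, 45,
  71696238860370176, 53, 71731423282790656, 125, 72048082581258496, 142660988731475589, 109, 27,
  71974965058011392, 35, 71975239986249984, 51, 71975789742063872, 123, 71978263592894720,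
  141528422494291331, 111, 51, 71722764628918784, 59, 71754948932665856, 83, 71863502184382976,
  91, 71895686421021184, 115, 72004239605629440, 123, 72036423909376512, 141809356406310275, 41,
  73, 99, 71932570090603520, 103, 71950162276647936, 135019173131764611, 135028106609247625,
  135028106542138761, 63, 95, 99, 71933331910427136, 103, 71950924096472064, 107,
  71968516282515968, 111, 71986108468561920, 135019173131764611, 27, 29, 30, 71627589168431232,
  125670575355167622, 125666177306542981, 125657381209293699, 27, 29, 30, 71627589168431232,
  107656176845685638, 107651778797060997, 107642982699811715]

theorem okA2 : run certA2 [(mask [0, 127, 1, 2, 4, 8, 16, 32, 64], mask [])] = true := by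
  decide +kernel

def certA3 : List ℕ := [
  72048658106876160]

theorem okA3 : run certA3 [(mask [0, 127, 2, 4, 8, 125, 123, 119], mask [])] = true := by
  decide +kernel

def certB3 : List ℕ := [
  3, 5, 6, 122, 12, 70988664204755200, 28, 71059032948932864, 44, 71129401693110528, 76,
  71270139181465856, 144043702531853836, 58, 12, 70986465181499648, 28, 71056833925677312, 44,
  71127202669854976, 76, 71267940158210304, 144043702531853836, 90, 12, 70987564693127424, 28,
  71057933437305088, 44, 71128302181482752, 76, 71269039669838080, 144043702531853836, 10, 12,
  70984815914057984, 28, 71055184658235648, 44, 71125553402413312, 76, 71266290890768640,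
  144043702531853836, 15, 27, 30, 31, 17584321724481920, 144096479119576970, 144096479119576842,
  144092081073065354, 144096479119574922, 7, 10, 118, 12, 70984845978829056, 28,
  71055214723006720, 44, 71125583467184384, 76, 71266320955539712, 144043702531853836, 54, 12,
  70984828798959872, 28, 71055197543137536, 44, 71125566287315200, 76, 71266303775670528,
  144043702531853836, 70, 12, 70984833093927168, 28, 71055201838104832, 44, 71125570582282496,
  76, 71266308070637824, 144043702531853836, 15, 23, 30, 31, 17584184285593984,
  144078886891523974, 144078886891523846, 144074488845011846, 144079436647335814, 11, 31, 12,
  17504604967207168, 13, 17509003013718272, 14, 17513401060229504, 28, 17574973711384832, 30,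
  17583769804407168, 143688504340350604, 47, 12, 26511804221948160, 13, 26516202268459264, 14,
  26520600314970496, 44, 26652541710303488, 46, 26661337803325824, 143758868823115404, 77, 79,
  44812075754651904, 144043702538194826, 144043702534000513, 21, 55, 18, 31055226802864384, 19,
  31055261162602752, 22, 31055364241834240, 50, 31056326314492160, 54, 31056463753462016,
  143793984488442258, 83, 87, 49071858695340288, 144078886927189377, 144097303737850753, 35, 37,
  103, 58147777460371712, 144079445305935233, 144105833446589825, 144097312227117697, 25, 41,
  49, 59, 33430967058433024, 61, 34556866965275648, 121, 68333864170554368, 144106237350337921,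
  11, 83, 91, 51341251768877312, 144097312257786753, 144096479104746369, 144097316551443329, 19,
  75, 91, 51339069925490944, 144097037363102593, 144096479087838081, 144097316489020289, 35, 41,
  75, 107, 60417187713777920, 144097037500433281, 144097028843389825, 144105833455043457,
  144097312227345281, 11, 27, 19, 25, 15310255726657792, 35, 41, 107, 60417170533908736,
  144106250033001857, 144097037362020993, 144106252180476289, 35, 41, 107, 60417170533908736,
  144097316490101377, 144106252214028673, 144097037349339777, 35, 41, 107, 60417170533908736,
  144097037500465793, 144106245771578753, 144097312227377793, 19, 35, 49, 115,
  64955956680982784, 144097316689855105, 144106250083321217, 144097312227115649,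
  144097316488528513, 13, 29, 21, 25, 16436224889848320, 37, 41, 109, 61543139697099264,
  144106250034692481, 144105833455042945, 144106252180996481, 37, 41, 109, 61543139697099264,
  144106112587350401, 144106252214288769, 144105833446588801, 37, 41, 109, 61543139697099264,
  144105833597714817, 144106245771968897, 144106108324626817, 21, 37, 49, 117,
  66081925844173312, 144106112787104129, 144106250083451265, 144106108324364673,
  144106112585777537]

theorem okB3 : run certB3 [(mask [0, 126, 2, 4, 8, 16, 32, 64], mask [127, 1, 125, 123, 119, 111, 95, 63])] = true := by
  decide +kernel


/-! ## Sorting the ground set -/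

theorem exists_sort (key : Fin 7 → ℕ) :
    ∃ σ : Equiv.Perm (Fin 7), ∀ i j, i ≤ j → key (σ i) ≤ key (σ j) :=
  ⟨Tuple.sort key, fun _ _ h => Tuple.monotone_sort key h⟩

theorem map_dec_single (σ : Equiv.Perm (Fin 7)) (i : Fin 7) :
    (dec (2 ^ (i : ℕ))).map σ.toEmbedding = {σ i} := by
  have : dec (2 ^ (i : ℕ)) = {i} := by revert i; decide +kernel
  rw [this, Finset.map_singleton]; rfl

theorem map_dec_pair (σ : Equiv.Perm (Fin 7)) (i j : Fin 7) :
    (dec (2 ^ (i : ℕ) ||| 2 ^ (j : ℕ))).map σ.toEmbedding = {σ i, σ j} := by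
  have : dec (2 ^ (i : ℕ) ||| 2 ^ (j : ℕ)) = {i, j} := by revert i j; decide +kernel
  rw [this, Finset.map_insert, Finset.map_singleton]; rfl

theorem map_dec_coatom (σ : Equiv.Perm (Fin 7)) (i : Fin 7) :
    (dec (127 - 2 ^ (i : ℕ))).map σ.toEmbedding = {σ i}ᶜ := by
  have : dec (127 - 2 ^ (i : ℕ)) = {i}ᶜ := by revert i; decide +kernel
  rw [this]
  ext x
  simp only [Finset.mem_map, Finset.mem_compl, Finset.mem_singleton, Equiv.coe_toEmbedding]
  constructor
  · rintro ⟨y, hy, rfl⟩ h; exact hy (σ.injective h)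
  · intro h
    exact ⟨σ.symm x, fun h' => h (by rw [← h']; simp), by simp⟩

theorem map_dec_bot (σ : Equiv.Perm (Fin 7)) : (dec 0).map σ.toEmbedding = ∅ := by
  have : dec 0 = ∅ := by decide +kernel
  rw [this]; rfl

theorem map_dec_top (σ : Equiv.Perm (Fin 7)) : (dec 127).map σ.toEmbedding = Finset.univ := by
  have : dec 127 = Finset.univ := by decide +kernel
  rw [this]; simp

/-- Facts about the colouring transported along `σ`, in terms of codes. -/
theorem transport {c : Finset (Fin 7) → Bool} (h : NoCopy c) (σ : Equiv.Perm (Fin 7)) :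
    ∃ d : Finset (Fin 7) → Bool, NoCopy d ∧ d (dec 0) = c ∅ ∧ d (dec 127) = c Finset.univ ∧
      (∀ i : Fin 7, d (dec (2 ^ (i : ℕ))) = c {σ i}) ∧
      (∀ i : Fin 7, d (dec (127 - 2 ^ (i : ℕ))) = c {σ i}ᶜ) ∧
      (∀ i j : Fin 7, d (dec (2 ^ (i : ℕ) ||| 2 ^ (j : ℕ))) = c {σ i, σ j}) :=
  ⟨_, h.perm σ, by simp only [map_dec_bot], by simp only [map_dec_top],
    fun i => by simp only [map_dec_single], fun i => by simp only [map_dec_coatom],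
    fun i j => by simp only [map_dec_pair]⟩

/-- An atom and a coatom over different points, with a sorted interval between them. -/
theorem sorted_interval {c : Finset (Fin 7) → Bool} (h : NoCopy c) {i j : Fin 7} (hij : i ≠ j) :
    ∃ d : Finset (Fin 7) → Bool, NoCopy d ∧ d (dec 0) = c ∅ ∧ d (dec 127) = c Finset.univ ∧
      d (dec 1) = c {i} ∧ d (dec 63) = c {j}ᶜ ∧
      (d (dec 5) = true → d (dec 3) = true) ∧ (d (dec 9) = true → d (dec 5) = true) ∧
      (d (dec 17) = true → d (dec 9) = true) ∧ (d (dec 33) = true → d (dec 17) = true) := by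
  let key : Fin 7 → ℕ := fun m => if m = i then 0 else if m = j then 3 else
    if c {i, m} = true then 1 else 2
  have hkey : ∀ m, key m = if m = i then 0 else if m = j then 3 else
    if c {i, m} = true then 1 else 2 := fun _ => rfl
  obtain ⟨σ, hσ⟩ := exists_sort key
  have h0 : σ 0 = i := by
    have h1 := hσ 0 (σ.symm i) (Fin.zero_le _)
    rw [Equiv.apply_symm_apply, hkey i, if_pos rfl, hkey] at h1
    by_contra hne
    rw [if_neg hne] at h1
    split_ifs at h1 <;> omega
  have h6 : σ 6 = j := by
    have h1 := hσ (σ.symm j) 6 (Fin.le_last _)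
    rw [Equiv.apply_symm_apply, hkey j, if_neg hij.symm, if_pos rfl, hkey] at h1
    by_contra hne
    rw [if_neg hne] at h1
    split_ifs at h1 <;> omega
  obtain ⟨d, hd, d0, d7, ds, dc, dp⟩ := transport h σ
  have step : ∀ a b : Fin 7, a ≤ b → a ≠ 0 → a ≠ 6 → b ≠ 0 → b ≠ 6 →
      c {i, σ b} = true → c {i, σ a} = true := by
    intro a b hab a0 a6 b0 b6 hb
    have h1 := hσ a b hab
    have e1 : σ a ≠ i := fun e => a0 (σ.injective (e.trans h0.symm))
    have e2 : σ a ≠ j := fun e => a6 (σ.injective (e.trans h6.symm))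
    have e3 : σ b ≠ i := fun e => b0 (σ.injective (e.trans h0.symm))
    have e4 : σ b ≠ j := fun e => b6 (σ.injective (e.trans h6.symm))
    rw [hkey, hkey, if_neg e1, if_neg e2, if_neg e3, if_neg e4, if_pos hb] at h1
    by_contra hne
    rw [if_neg hne] at h1
    omega
  have p1 : d (dec 3) = c {i, σ 1} := by rw [← h0]; exact dp 0 1
  have p2 : d (dec 5) = c {i, σ 2} := by rw [← h0]; exact dp 0 2
  have p3 : d (dec 9) = c {i, σ 3} := by rw [← h0]; exact dp 0 3
  have p4 : d (dec 17) = c {i, σ 4} := by rw [← h0]; exact dp 0 4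
  have p5 : d (dec 33) = c {i, σ 5} := by rw [← h0]; exact dp 0 5
  refine ⟨d, hd, d0, d7, ?_, ?_, ?_, ?_, ?_, ?_⟩
  · rw [← h0]; exact ds 0
  · rw [← h6]; exact dc 6
  · rw [p1, p2]; exact step 1 2 (by decide) (by decide) (by decide) (by decide) (by decide)
  · rw [p2, p3]; exact step 2 3 (by decide) (by decide) (by decide) (by decide) (by decide)
  · rw [p3, p4]; exact step 3 4 (by decide) (by decide) (by decide) (by decide) (by decide)
  · rw [p4, p5]; exact step 4 5 (by decide) (by decide) (by decide) (by decide) (by decide)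

/-! ## The case analysis -/

theorem caseA1 {c : Finset (Fin 7) → Bool} (h : NoCopy c) (hb : c ∅ = false)
    (ht : c Finset.univ = false) {i j : Fin 7} (hij : i ≠ j) (hi : c {i} = true)
    (hj : c {j}ᶜ = true) : False := by
  obtain ⟨d, hd, d0, d127, d1, d63, s1, s2, s3, s4⟩ := sorted_interval h hij
  rw [hb] at d0; rw [ht] at d127; rw [hi] at d1; rw [hj] at d63
  cases e3 : d (dec 3)
  · have e5 : d (dec 5) = false := by simpa [e3] using s1
    have e9 : d (dec 9) = false := by simpa [e5] using s2
    have e17 : d (dec 17) = false := by simpa [e9] using s3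
    have e33 : d (dec 33) = false := by simpa [e17] using s4
    exact run_refutes hd _ _ _ okA1_0 (by simp [*]) (by simp [*])
  cases e5 : d (dec 5)
  · have e9 : d (dec 9) = false := by simpa [e5] using s2
    have e17 : d (dec 17) = false := by simpa [e9] using s3
    have e33 : d (dec 33) = false := by simpa [e17] using s4
    exact run_refutes hd _ _ _ okA1_1 (by simp [*]) (by simp [*])
  cases e9 : d (dec 9)
  · have e17 : d (dec 17) = false := by simpa [e9] using s3
    have e33 : d (dec 33) = false := by simpa [e17] using s4
    exact run_refutes hd _ _ _ okA1_2 (by simp [*]) (by simp [*])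
  cases e17 : d (dec 17)
  · have e33 : d (dec 33) = false := by simpa [e17] using s4
    exact run_refutes hd _ _ _ okA1_3 (by simp [*]) (by simp [*])
  cases e33 : d (dec 33)
  · exact run_refutes hd _ _ _ okA1_4 (by simp [*]) (by simp [*])
  · exact run_refutes hd _ _ _ okA1_5 (by simp [*]) (by simp [*])

theorem caseB1 {c : Finset (Fin 7) → Bool} (h : NoCopy c) (hb : c ∅ = false)
    (ht : c Finset.univ = true) {i j : Fin 7} (hij : i ≠ j) (hi : c {i} = true)
    (hj : c {j}ᶜ = false) : False := by
  obtain ⟨d, hd, d0, d127, d1, d63, s1, s2, s3, s4⟩ := sorted_interval h hij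
  rw [hb] at d0; rw [ht] at d127; rw [hi] at d1; rw [hj] at d63
  cases e3 : d (dec 3)
  · have e5 : d (dec 5) = false := by simpa [e3] using s1
    have e9 : d (dec 9) = false := by simpa [e5] using s2
    have e17 : d (dec 17) = false := by simpa [e9] using s3
    have e33 : d (dec 33) = false := by simpa [e17] using s4
    exact run_refutes hd _ _ _ okB1_0 (by simp [*]) (by simp [*])
  cases e5 : d (dec 5)
  · have e9 : d (dec 9) = false := by simpa [e5] using s2
    have e17 : d (dec 17) = false := by simpa [e9] using s3
    have e33 : d (dec 33) = false := by simpa [e17] using s4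
    exact run_refutes hd _ _ _ okB1_1 (by simp [*]) (by simp [*])
  cases e9 : d (dec 9)
  · have e17 : d (dec 17) = false := by simpa [e9] using s3
    have e33 : d (dec 33) = false := by simpa [e17] using s4
    exact run_refutes hd _ _ _ okB1_2 (by simp [*]) (by simp [*])
  cases e17 : d (dec 17)
  · have e33 : d (dec 33) = false := by simpa [e17] using s4
    exact run_refutes hd _ _ _ okB1_3 (by simp [*]) (by simp [*])
  cases e33 : d (dec 33)
  · exact run_refutes hd _ _ _ okB1_4 (by simp [*]) (by simp [*])
  · exact run_refutes hd _ _ _ okB1_5 (by simp [*]) (by simp [*])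

theorem caseA2 {c : Finset (Fin 7) → Bool} (h : NoCopy c) (hb : c ∅ = false)
    (ht : c Finset.univ = false) (ha : ∀ i, c {i} = false) : False := by
  obtain ⟨d, hd, d0, d127, ds, -, -⟩ := transport h 1
  rw [hb] at d0; rw [ht] at d127
  have e : ∀ i : Fin 7, d (dec (2 ^ (i : ℕ))) = false := fun i => (ds i).trans (ha _)
  have e1 : d (dec 1) = false := e 0
  have e2 : d (dec 2) = false := e 1
  have e4 : d (dec 4) = false := e 2
  have e8 : d (dec 8) = false := e 3
  have e16 : d (dec 16) = false := e 4
  have e32 : d (dec 32) = false := e 5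
  have e64 : d (dec 64) = false := e 6
  exact run_refutes hd _ _ _ okA2 (by simp [*]) (by simp)

theorem caseB2 {c : Finset (Fin 7) → Bool} (h : NoCopy c) (hb : c ∅ = false)
    (ht : c Finset.univ = true) (ha : ∀ i, c {i} = false) : False := by
  obtain ⟨σ, hσ⟩ := exists_sort (fun m => if c {m}ᶜ = true then 0 else 1)
  obtain ⟨d, hd, d0, d127, ds, dc, -⟩ := transport h σ
  rw [hb] at d0; rw [ht] at d127
  have e : ∀ i : Fin 7, d (dec (2 ^ (i : ℕ))) = false := fun i => (ds i).trans (ha _)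
  have e1 : d (dec 1) = false := e 0
  have e2 : d (dec 2) = false := e 1
  have e4 : d (dec 4) = false := e 2
  have e8 : d (dec 8) = false := e 3
  have e16 : d (dec 16) = false := e 4
  have e32 : d (dec 32) = false := e 5
  have e64 : d (dec 64) = false := e 6
  have step : ∀ a b : Fin 7, a ≤ b → d (dec (127 - 2 ^ (b : ℕ))) = true →
      d (dec (127 - 2 ^ (a : ℕ))) = true := by
    intro a b hab hb
    rw [dc] at hb ⊢
    have h1 := hσ a b hab
    simp only [hb, if_true] at h1
    by_contra hne
    rw [if_neg hne] at h1
    omega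
  have s1 : d (dec 125) = true → d (dec 126) = true := step 0 1 (by decide)
  have s2 : d (dec 123) = true → d (dec 125) = true := step 1 2 (by decide)
  have s3 : d (dec 119) = true → d (dec 123) = true := step 2 3 (by decide)
  have s4 : d (dec 111) = true → d (dec 119) = true := step 3 4 (by decide)
  have s5 : d (dec 95) = true → d (dec 111) = true := step 4 5 (by decide)
  have s6 : d (dec 63) = true → d (dec 95) = true := step 5 6 (by decide)
  clear step dc ds e hσ
  cases f0 : d (dec 126)
  · have f1 : d (dec 125) = false := by simpa [f0] using s1
    have f2 : d (dec 123) = false := by simpa [f1] using s2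
    have f3 : d (dec 119) = false := by simpa [f2] using s3
    have f4 : d (dec 111) = false := by simpa [f3] using s4
    have f5 : d (dec 95) = false := by simpa [f4] using s5
    have f6 : d (dec 63) = false := by simpa [f5] using s6
    exact run_refutes hd _ _ _ okB2_0 (by simp [*]) (by simp [*])
  cases f1 : d (dec 125)
  · have f2 : d (dec 123) = false := by simpa [f1] using s2
    have f3 : d (dec 119) = false := by simpa [f2] using s3
    have f4 : d (dec 111) = false := by simpa [f3] using s4
    have f5 : d (dec 95) = false := by simpa [f4] using s5
    have f6 : d (dec 63) = false := by simpa [f5] using s6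
    exact run_refutes hd _ _ _ okB2_1 (by simp [*]) (by simp [*])
  cases f2 : d (dec 123)
  · have f3 : d (dec 119) = false := by simpa [f2] using s3
    have f4 : d (dec 111) = false := by simpa [f3] using s4
    have f5 : d (dec 95) = false := by simpa [f4] using s5
    have f6 : d (dec 63) = false := by simpa [f5] using s6
    exact run_refutes hd _ _ _ okB2_2 (by simp [*]) (by simp [*])
  cases f3 : d (dec 119)
  · have f4 : d (dec 111) = false := by simpa [f3] using s4
    have f5 : d (dec 95) = false := by simpa [f4] using s5
    have f6 : d (dec 63) = false := by simpa [f5] using s6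
    exact run_refutes hd _ _ _ okB2_3 (by simp [*]) (by simp [*])
  cases f4 : d (dec 111)
  · have f5 : d (dec 95) = false := by simpa [f4] using s5
    have f6 : d (dec 63) = false := by simpa [f5] using s6
    exact run_refutes hd _ _ _ okB2_4 (by simp [*]) (by simp [*])
  cases f5 : d (dec 95)
  · have f6 : d (dec 63) = false := by simpa [f5] using s6
    exact run_refutes hd _ _ _ okB2_5 (by simp [*]) (by simp [*])
  cases f6 : d (dec 63)
  · exact run_refutes hd _ _ _ okB2_6 (by simp [*]) (by simp [*])
  · exact run_refutes hd _ _ _ okB2_7 (by simp [*]) (by simp [*])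

theorem caseA3 {c : Finset (Fin 7) → Bool} (h : NoCopy c) (hb : c ∅ = false)
    (ht : c Finset.univ = false) (i : Fin 7) (ha : ∀ m, m ≠ i → c {m} = false)
    (hc : ∀ m, m ≠ i → c {m}ᶜ = false) : False := by
  obtain ⟨d, hd, d0, d127, ds, dc, -⟩ := transport h (Equiv.swap 0 i)
  rw [hb] at d0; rw [ht] at d127
  have ne : ∀ m : Fin 7, m ≠ 0 → Equiv.swap 0 i m ≠ i := by
    intro m hm e
    apply hm
    apply (Equiv.swap 0 i).injective
    rw [e, Equiv.swap_apply_left]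
  have e2 : d (dec 2) = false := (ds 1).trans (ha _ (ne 1 (by decide)))
  have e4 : d (dec 4) = false := (ds 2).trans (ha _ (ne 2 (by decide)))
  have e8 : d (dec 8) = false := (ds 3).trans (ha _ (ne 3 (by decide)))
  have f1 : d (dec 125) = false := (dc 1).trans (hc _ (ne 1 (by decide)))
  have f2 : d (dec 123) = false := (dc 2).trans (hc _ (ne 2 (by decide)))
  have f3 : d (dec 119) = false := (dc 3).trans (hc _ (ne 3 (by decide)))
  exact run_refutes hd _ _ _ okA3 (by simp [*]) (by simp)

theorem caseB3 {c : Finset (Fin 7) → Bool} (h : NoCopy c) (hb : c ∅ = false)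
    (ht : c Finset.univ = true) (i : Fin 7) (hi : c {i} = true) (hi' : c {i}ᶜ = false)
    (ha : ∀ m, m ≠ i → c {m} = false)
    (hc : ∀ m, m ≠ i → c {m}ᶜ = true) : False := by
  obtain ⟨d, hd, d0, d127, ds, dc, -⟩ := transport h (Equiv.swap 0 i)
  rw [hb] at d0; rw [ht] at d127
  have ne : ∀ m : Fin 7, m ≠ 0 → Equiv.swap 0 i m ≠ i := by
    intro m hm e
    apply hm
    apply (Equiv.swap 0 i).injective
    rw [e, Equiv.swap_apply_left]
  have e1 : d (dec 1) = true := (ds 0).trans (by rw [Equiv.swap_apply_left, hi])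
  have e2 : d (dec 2) = false := (ds 1).trans (ha _ (ne 1 (by decide)))
  have e4 : d (dec 4) = false := (ds 2).trans (ha _ (ne 2 (by decide)))
  have e8 : d (dec 8) = false := (ds 3).trans (ha _ (ne 3 (by decide)))
  have e16 : d (dec 16) = false := (ds 4).trans (ha _ (ne 4 (by decide)))
  have e32 : d (dec 32) = false := (ds 5).trans (ha _ (ne 5 (by decide)))
  have e64 : d (dec 64) = false := (ds 6).trans (ha _ (ne 6 (by decide)))
  have f0 : d (dec 126) = false := (dc 0).trans (by rw [Equiv.swap_apply_left, hi'])
  have f1 : d (dec 125) = true := (dc 1).trans (hc _ (ne 1 (by decide)))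
  have f2 : d (dec 123) = true := (dc 2).trans (hc _ (ne 2 (by decide)))
  have f3 : d (dec 119) = true := (dc 3).trans (hc _ (ne 3 (by decide)))
  have f4 : d (dec 111) = true := (dc 4).trans (hc _ (ne 4 (by decide)))
  have f5 : d (dec 95) = true := (dc 5).trans (hc _ (ne 5 (by decide)))
  have f6 : d (dec 63) = true := (dc 6).trans (hc _ (ne 6 (by decide)))
  exact run_refutes hd _ _ _ okB3 (by simp [*]) (by simp [*])

theorem not_noCopy_of_bot {c : Finset (Fin 7) → Bool} (h : NoCopy c) (hb : c ∅ = false) :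
    False := by
  cases ht : c Finset.univ with
  | false =>
    by_cases hA : ∀ i, c {i} = false
    · exact caseA2 h hb ht hA
    by_cases hC : ∀ j, c {j}ᶜ = false
    · exact caseA2 h.compl (by simpa using ht) (by simpa using hb) hC
    push Not at hA hC
    obtain ⟨i, hi⟩ := hA
    obtain ⟨j, hj⟩ := hC
    simp only [ne_eq, Bool.not_eq_false] at hi hj
    by_cases hij : i = j
    · subst hij
      refine caseA3 h hb ht i (fun m hm => ?_) (fun m hm => ?_)
      · by_contra hm'
        exact caseA1 h hb ht hm (by simpa using hm') hj
      · by_contra hm'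
        exact caseA1 h hb ht hm.symm hi (by simpa using hm')
    · exact caseA1 h hb ht hij hi hj
  | true =>
    by_cases hA : ∀ i, c {i} = false
    · exact caseB2 h hb ht hA
    by_cases hC : ∀ j, c {j}ᶜ = true
    · exact caseB2 h.compl.swap (by simpa using ht) (by simpa using hb) (by simpa using hC)
    push Not at hA hC
    obtain ⟨i, hi⟩ := hA
    obtain ⟨j, hj⟩ := hC
    simp only [ne_eq, Bool.not_eq_false, Bool.not_eq_true] at hi hj
    by_cases hij : i = j
    · subst hij
      refine caseB3 h hb ht i hi hj (fun m hm => ?_) (fun m hm => ?_)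
      · by_contra hm'
        exact caseB1 h hb ht hm (by simpa using hm') hj
      · by_contra hm'
        exact caseB1 h hb ht hm.symm hi (by simpa using hm')
    · exact caseB1 h hb ht hij hi hj

theorem not_noCopy {c : Finset (Fin 7) → Bool} (h : NoCopy c) : False := by
  cases hb : c ∅ with
  | false => exact not_noCopy_of_bot h hb
  | true => exact not_noCopy_of_bot h.swap (by simp [hb])

/-- The map `𝒫(3) → 𝒫(7)` with the given eight values. -/
def emb (o a1 a2 a3 b12 b13 b23 t : Finset (Fin 7)) (x : Finset (Fin 3)) : Finset (Fin 7) :=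
  if 0 ∈ x then
    if 1 ∈ x then (if 2 ∈ x then t else b12) else (if 2 ∈ x then b13 else a1)
  else
    if 1 ∈ x then (if 2 ∈ x then b23 else a2) else (if 2 ∈ x then a3 else o)

theorem emb_subset {o a1 a2 a3 b12 b13 b23 t : Finset (Fin 7)}
    (o1 : o ⊆ a1) (o2 : o ⊆ a2) (o3 : o ⊆ a3)
    (h1 : a1 ⊆ b12) (h2 : a2 ⊆ b12) (h3 : a1 ⊆ b13) (h4 : a3 ⊆ b13) (h5 : a2 ⊆ b23)
    (h6 : a3 ⊆ b23) (n1 : ¬ a3 ⊆ b12) (n2 : ¬ a2 ⊆ b13) (n3 : ¬ a1 ⊆ b23)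
    (t1 : b12 ⊆ t) (t2 : b13 ⊆ t) (t3 : b23 ⊆ t) (x y : Finset (Fin 3)) :
    emb o a1 a2 a3 b12 b13 b23 t x ⊆ emb o a1 a2 a3 b12 b13 b23 t y ↔ x ⊆ y := by
  have l0 : ∀ x, (0 : Fin 3) ∈ x → a1 ⊆ emb o a1 a2 a3 b12 b13 b23 t x := by
    intro x hx; unfold emb; rw [if_pos hx]; split_ifs
    exacts [h1.trans t1, h1, h3, subset_rfl]
  have l1 : ∀ x, (1 : Fin 3) ∈ x → a2 ⊆ emb o a1 a2 a3 b12 b13 b23 t x := by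
    intro x hx; unfold emb; rw [if_pos hx, if_pos hx]; split_ifs
    exacts [h2.trans t1, h2, h5, subset_rfl]
  have l2 : ∀ x, (2 : Fin 3) ∈ x → a3 ⊆ emb o a1 a2 a3 b12 b13 b23 t x := by
    intro x hx; unfold emb; rw [if_pos hx, if_pos hx, if_pos hx, if_pos hx]; split_ifs
    exacts [h4.trans t2, h4, h6, subset_rfl]
  have u0 : ∀ x, (0 : Fin 3) ∉ x → emb o a1 a2 a3 b12 b13 b23 t x ⊆ b23 := by
    intro x hx; unfold emb; rw [if_neg hx]; split_ifs
    exacts [subset_rfl, h5, h6, o2.trans h5]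
  have u1 : ∀ x, (1 : Fin 3) ∉ x → emb o a1 a2 a3 b12 b13 b23 t x ⊆ b13 := by
    intro x hx; unfold emb; rw [if_neg hx, if_neg hx]; split_ifs
    exacts [subset_rfl, h3, h4, o1.trans h3]
  have u2 : ∀ x, (2 : Fin 3) ∉ x → emb o a1 a2 a3 b12 b13 b23 t x ⊆ b12 := by
    intro x hx; unfold emb; rw [if_neg hx, if_neg hx, if_neg hx, if_neg hx]; split_ifs
    exacts [subset_rfl, h1, h2, o1.trans h1]
  constructor
  · intro h i hi
    by_contra hy
    fin_cases i
    · exact n3 ((l0 x hi).trans (h.trans (u0 y hy)))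
    · exact n2 ((l1 x hi).trans (h.trans (u1 y hy)))
    · exact n1 ((l2 x hi).trans (h.trans (u2 y hy)))
  · intro h
    have m0 := @h 0
    have m1 := @h 1
    have m2 := @h 2
    have ob : o ⊆ b12 := o1.trans h1
    have ob' : o ⊆ b13 := o1.trans h3
    have ob'' : o ⊆ b23 := o2.trans h5
    have p1 := h1.trans t1
    have p2 := h2.trans t1
    have p3 := h4.trans t2
    have p4 := ob.trans t1
    unfold emb
    split_ifs <;> first
      | exact subset_rfl
      | assumption
      | (refine absurd (m0 ?_) ?_ <;> assumption)
      | (refine absurd (m1 ?_) ?_ <;> assumption)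
      | (refine absurd (m2 ?_) ?_ <;> assumption)

theorem upper (c : Finset (Fin 7) → Fin 2) :
    ∃ φ : Finset (Fin 3) → Finset (Fin 7),
      Function.Injective φ ∧ (∀ x y, φ x ⊆ φ y ↔ x ⊆ y) ∧ ∃ k, ∀ x, c (φ x) = k := by
  by_contra hno
  apply not_noCopy (c := fun x => decide (c x = 1))
  intro k o a1 a2 a3 b12 b13 b23 t o1 o2 o3 h1 h2 h3 h4 h5 h6 n1 n2 n3 t1 t2 t3
    c1 c2 c3 c4 c5 c6 c7 c8
  have hs := emb_subset o1 o2 o3 h1 h2 h3 h4 h5 h6 n1 n2 n3 t1 t2 t3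
  refine hno ⟨emb o a1 a2 a3 b12 b13 b23 t, ?_, hs, if k then 1 else 0, ?_⟩
  · intro x y hxy
    exact subset_antisymm ((hs x y).1 hxy.subset) ((hs y x).1 hxy.symm.subset)
  · have key : ∀ z, decide (c z = 1) = k → c z = if k then 1 else 0 := by
      intro z hz
      subst hz
      generalize c z = w
      revert w
      decide
    intro x
    apply key
    unfold emb
    split_ifs <;> assumption



/-! ## The lower bound -/

/-- The bit mask of a subset of `Fin 6`. -/
def code (x : Finset (Fin 6)) : ℕ :=
  (if 0 ∈ x then 1 else 0) + (if 1 ∈ x then 2 else 0) + (if 2 ∈ x then 4 else 0) +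
  (if 3 ∈ x then 8 else 0) + (if 4 ∈ x then 16 else 0) + (if 5 ∈ x then 32 else 0)

theorem code_lt (x : Finset (Fin 6)) : code x < 64 := by
  unfold code; split_ifs <;> norm_num

theorem bits_sub : ∀ a0 a1 a2 a3 a4 a5 b0 b1 b2 b3 b4 b5 : Bool,
    sub (cond a0 1 0 + cond a1 2 0 + cond a2 4 0 + cond a3 8 0 + cond a4 16 0 + cond a5 32 0)
      (cond b0 1 0 + cond b1 2 0 + cond b2 4 0 + cond b3 8 0 + cond b4 16 0 + cond b5 32 0) =
    ((!a0 || b0) && (!a1 || b1) && (!a2 || b2) && (!a3 || b3) && (!a4 || b4) && (!a5 || b5)) := by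
  decide +kernel

theorem code_eq (x : Finset (Fin 6)) : code x =
    cond (decide (0 ∈ x)) 1 0 + cond (decide (1 ∈ x)) 2 0 + cond (decide (2 ∈ x)) 4 0 +
    cond (decide (3 ∈ x)) 8 0 + cond (decide (4 ∈ x)) 16 0 + cond (decide (5 ∈ x)) 32 0 := by
  simp only [code, Bool.cond_decide]

theorem code_sub (x y : Finset (Fin 6)) : sub (code x) (code y) = true ↔ x ⊆ y := by
  rw [code_eq, code_eq, bits_sub]
  simp only [Bool.and_eq_true, Bool.or_eq_true, Bool.not_eq_true', decide_eq_false_iff_not,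
    decide_eq_true_eq, Finset.subset_iff, Fin.forall_fin_succ, Fin.forall_fin_zero, and_true,
    imp_iff_not_or, and_assoc]
  rfl

/-- The codes of the colour classes of the colouring of `𝒫(6)`. -/
def cls (k : Fin 2) : List ℕ :=
  if k = 0 then [0, 5, 6, 7, 9, 11, 13, 14, 21, 22, 24, 25, 26, 27, 28, 30, 34, 35, 37, 38, 41,
    42, 43, 44, 48, 49, 50, 51, 52, 53, 56, 63]
  else [1, 2, 3, 4, 8, 10, 12, 15, 16, 17, 18, 19, 20, 23, 29, 31, 32, 33, 36, 39, 40, 45, 46,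
    47, 54, 55, 57, 58, 59, 60, 61, 62]

/-- No copy of `𝒫(3)` inside the family `L`. -/
def avoid (L : List ℕ) : Bool :=
  L.all fun a1 => L.all fun a2 => Nat.ble a2 a1 || (sub a1 a2 || (sub a2 a1 || (
  !(L.any fun b => sub a1 b && sub a2 b) || (
  L.all fun a3 => Nat.ble a3 a2 || (sub a1 a3 || (sub a3 a1 || (sub a2 a3 || (sub a3 a2 || (
  !(L.any fun o => sub o a1 && (sub o a2 && sub o a3)) || (
  L.all fun b12 => !(sub a1 b12) || (!(sub a2 b12) || (sub a3 b12 || (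
  L.all fun b13 => !(sub a1 b13) || (!(sub a3 b13) || (sub a2 b13 || (
  L.all fun b23 => !(sub a2 b23) || (!(sub a3 b23) || (sub a1 b23 || (
  L.all fun t => !(sub b12 t) || (!(sub b13 t) || !(sub b23 t)))))))))))))))))))))

theorem avoid_cls0 : avoid (cls 0) = true := by decide +kernel

theorem avoid_cls1 : avoid (cls 1) = true := by decide +kernel

/-- The colouring of `𝒫(6)`. -/
def col (x : Finset (Fin 6)) : Fin 2 := if Nat.testBit 9133548068478620958 (code x) then 1 else 0

theorem col_aux : ∀ n : Fin 64, ∀ k : Fin 2,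
    (if Nat.testBit 9133548068478620958 n then (1 : Fin 2) else 0) = k → (n : ℕ) ∈ cls k := by
  decide +kernel

theorem code_mem {x : Finset (Fin 6)} {k : Fin 2} (h : col x = k) : code x ∈ cls k :=
  col_aux ⟨code x, code_lt x⟩ k h

theorem avoid_cls (k : Fin 2) : avoid (cls k) = true := by
  fin_cases k
  · exact avoid_cls0
  · exact avoid_cls1

theorem avoid_sound {L : List ℕ} (h : avoid L = true) {o a1 a2 a3 b12 b13 b23 t : ℕ}
    (l12 : a1 < a2) (l23 : a2 < a3)
    (mo : o ∈ L) (m1 : a1 ∈ L) (m2 : a2 ∈ L) (m3 : a3 ∈ L) (m12 : b12 ∈ L) (m13 : b13 ∈ L)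
    (m23 : b23 ∈ L) (mt : t ∈ L)
    (i12 : sub a1 a2 = false) (i21 : sub a2 a1 = false) (i13 : sub a1 a3 = false)
    (i31 : sub a3 a1 = false) (i23 : sub a2 a3 = false) (i32 : sub a3 a2 = false)
    (o1 : sub o a1 = true) (o2 : sub o a2 = true) (o3 : sub o a3 = true)
    (h1 : sub a1 b12 = true) (h2 : sub a2 b12 = true) (n1 : sub a3 b12 = false)
    (h3 : sub a1 b13 = true) (h4 : sub a3 b13 = true) (n2 : sub a2 b13 = false)
    (h5 : sub a2 b23 = true) (h6 : sub a3 b23 = true) (n3 : sub a1 b23 = false)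
    (t1 : sub b12 t = true) (t2 : sub b13 t = true) (t3 : sub b23 t = true) : False := by
  have g12 : Nat.ble a2 a1 = false := by
    rw [← Bool.not_eq_true, Nat.ble_eq]; omega
  have g23 : Nat.ble a3 a2 = false := by
    rw [← Bool.not_eq_true, Nat.ble_eq]; omega
  unfold avoid at h
  have k1 := List.all_eq_true.1 (List.all_eq_true.1 h _ m1) _ m2
  have q1 : (L.any fun b => sub a1 b && sub a2 b) = true :=
    List.any_eq_true.2 ⟨_, m12, by rw [h1, h2]; rfl⟩
  simp only [g12, i12, i21, q1, Bool.false_or, Bool.not_true] at k1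
  have k2 := List.all_eq_true.1 k1 _ m3
  have q2 : (L.any fun o => sub o a1 && (sub o a2 && sub o a3)) = true :=
    List.any_eq_true.2 ⟨_, mo, by rw [o1, o2, o3]; rfl⟩
  simp only [g23, i13, i31, i23, i32, q2, Bool.false_or, Bool.not_true] at k2
  have k3 := List.all_eq_true.1 k2 _ m12
  simp only [h1, h2, n1, Bool.false_or, Bool.not_true] at k3
  have k4 := List.all_eq_true.1 k3 _ m13
  simp only [h3, h4, n2, Bool.false_or, Bool.not_true] at k4
  have k5 := List.all_eq_true.1 k4 _ m23
  simp only [h5, h6, n3, Bool.false_or, Bool.not_true] at k5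
  have k6 := List.all_eq_true.1 k5 _ mt
  simp [t1, t2, t3] at k6

/-- Boolean form of the inclusions used by `avoid_sound`, for the points of `Fin 3`. -/
theorem incl_facts : ∀ i j l : Fin 3, i ≠ j → i ≠ l → j ≠ l →
    ¬ ({i} : Finset (Fin 3)) ⊆ {j} ∧ ({i} : Finset (Fin 3)) ⊆ {i, j} ∧
    ({j} : Finset (Fin 3)) ⊆ {i, j} ∧ ¬ ({l} : Finset (Fin 3)) ⊆ {i, j} := by
  decide

theorem lower (φ : Finset (Fin 3) → Finset (Fin 6)) (hφ : ∀ x y, φ x ⊆ φ y ↔ x ⊆ y) :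
    ¬ ∃ k, ∀ x, col (φ x) = k := by
  rintro ⟨k, hk⟩
  have hm : ∀ x, code (φ x) ∈ cls k := fun x => code_mem (hk x)
  have hp : ∀ x y, x ⊆ y → sub (code (φ x)) (code (φ y)) = true := by
    intro x y h
    rw [code_sub, hφ]; exact h
  have hn : ∀ x y, ¬ x ⊆ y → sub (code (φ x)) (code (φ y)) = false := by
    intro x y h
    rw [← Bool.not_eq_true, code_sub, hφ]; exact h
  have main : ∀ i j l : Fin 3, i ≠ j → i ≠ l → j ≠ l → code (φ {i}) < code (φ {j}) →
      code (φ {j}) < code (φ {l}) → False := by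
    intro i j l hij hil hjl l1 l2
    obtain ⟨p1, p2, p3, p4⟩ := incl_facts i j l hij hil hjl
    obtain ⟨q1, q2, q3, q4⟩ := incl_facts i l j hil hij hjl.symm
    obtain ⟨r1, r2, r3, r4⟩ := incl_facts j l i hjl hij.symm hil.symm
    obtain ⟨u1, -⟩ := incl_facts j i l hij.symm hjl hil
    obtain ⟨u2, -⟩ := incl_facts l i j hil.symm hjl.symm hij
    obtain ⟨u3, -⟩ := incl_facts l j i hjl.symm hil.symm hij.symm
    exact avoid_sound (avoid_cls k) l1 l2 (hm ∅) (hm {i}) (hm {j}) (hm {l}) (hm {i, j})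
      (hm {i, l}) (hm {j, l}) (hm Finset.univ) (hn _ _ p1) (hn _ _ u1) (hn _ _ q1) (hn _ _ u2)
      (hn _ _ r1) (hn _ _ u3) (hp _ _ (Finset.empty_subset _)) (hp _ _ (Finset.empty_subset _))
      (hp _ _ (Finset.empty_subset _)) (hp _ _ p2) (hp _ _ p3) (hn _ _ p4) (hp _ _ q2)
      (hp _ _ q3) (hn _ _ q4) (hp _ _ r2) (hp _ _ r3) (hn _ _ r4)
      (hp _ _ (Finset.subset_univ _)) (hp _ _ (Finset.subset_univ _))
      (hp _ _ (Finset.subset_univ _))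
  have ne : ∀ i j : Fin 3, i ≠ j → code (φ {i}) ≠ code (φ {j}) := by
    intro i j hij e
    have h1 := hn {i} {j} (by simpa using hij)
    rw [e, ← Bool.not_eq_true, code_sub] at h1
    exact h1 subset_rfl
  have a01 := ne 0 1 (by decide)
  have a02 := ne 0 2 (by decide)
  have a12 := ne 1 2 (by decide)
  have m1 := main 0 1 2 (by decide) (by decide) (by decide)
  have m2 := main 0 2 1 (by decide) (by decide) (by decide)
  have m3 := main 1 0 2 (by decide) (by decide) (by decide)
  have m4 := main 1 2 0 (by decide) (by decide) (by decide)
  have m5 := main 2 0 1 (by decide) (by decide) (by decide)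
  have m6 := main 2 1 0 (by decide) (by decide) (by decide)
  rcases lt_or_gt_of_ne a01 with x | x <;> rcases lt_or_gt_of_ne a02 with y | y <;>
    rcases lt_or_gt_of_ne a12 with z | z
  · exact m1 x z
  · exact m2 y z
  · omega
  · exact m5 y x
  · exact m3 x y
  · omega
  · exact m4 z y
  · exact m6 z x

end PosetRamsey

/-- The poset Ramsey number `R(𝒫(3), 𝒫(3))` equals `7`:
(a) every 2-colouring of `𝒫(7)` contains a monochromatic induced copy of `𝒫(3)`
(the image of an injective map `φ : 𝒫(3) → 𝒫(7)` with `φ x ⊆ φ y ↔ x ⊆ y`), and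
(b) some 2-colouring of `𝒫(6)` admits no monochromatic induced copy of `𝒫(3)`. -/
theorem stmt19 :
    (∀ c : Finset (Fin 7) → Fin 2,
      ∃ φ : Finset (Fin 3) → Finset (Fin 7),
        Function.Injective φ ∧ (∀ x y, φ x ⊆ φ y ↔ x ⊆ y) ∧ ∃ k, ∀ x, c (φ x) = k) ∧
    (∃ c : Finset (Fin 6) → Fin 2,
      ∀ φ : Finset (Fin 3) → Finset (Fin 6),
        Function.Injective φ → (∀ x y, φ x ⊆ φ y ↔ x ⊆ y) →
          ¬ ∃ k, ∀ x, c (φ x) = k) := by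
  exact ⟨PosetRamsey.upper, PosetRamsey.col, fun φ _ h => PosetRamsey.lower φ h⟩
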